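/- arXiv:2512.19489 — 3 statements merged into one kernel-verified Lean document; each statement's English description precedes it below -/
import Mathlib

section
/- Almost-sure essential uniqueness of the LMN block-term decomposition (Theorem 1). Let R, L, M, N, I, J, K be positive integers with I ≥ L·R, J ≥ M·R, K ≥ N, and L·M ≥ N ≥ max(⌈L/M⌉ + ⌈M/L⌉, 3). Then for Lebesgue-almost every tuple of factors (A_r ∈ ℝ^{I×L}, B_r ∈ ℝ^{J×M}, C_r ∈ ℝ^{K×N}, D_r ∈ ℝ^{L×M×N}), r = 1,…,R, the tensor Y ∈ ℝ^{I×J×K} with entries Y[i,j,k] = Σ_{r=1}^R Σ_{l,m,n} D_r[l,m,n]·A_r[i,l]·B_r[j,m]·C_r[k,n] has an essentially unique LMN decomposition: for every other tuple (Ā_r ∈ ℝ^{I×L}, B̄_r ∈ ℝ^{J×M}, C̄_r ∈ ℝ^{K×N}, D̄_r ∈ ℝ^{L×M×N}), r = 1,…,R, satisfying Y[i,j,k] = Σ_r Σ_{l,m,n} D̄_r[l,m,n]·Ā_r[i,l]·B̄_r[j,m]·C̄_r[k,n] for all (i,j,k), there exist a permutation π of {1,…,R} and, for each r, invertible matrices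 Θ_{a,r} ∈ ℝ^{L×L}, Θ_{b,r} ∈ ℝ^{M×M}, Θ_{c,r} ∈ ℝ^{N×N} such that Ā_{π(r)} = A_r·Θ_{a,r}, B̄_{π(r)} = B_r·Θ_{b,r}, C̄_{π(r)} = C_r·Θ_{c,r}, and D̄_{π(r)} ×₁ Θ_{a,r} ×₂ Θ_{b,r} ×₃ Θ_{c,r} = D_r. -/
open MeasureTheory

/-- Lebesgue (volume) measure on a real matrix space: the standard product
Lebesgue measure on the entries (inherited from the Pi type). -/
noncomputable instance matrixMeasureSpace (m n : ℕ) :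
    MeasureSpace (Matrix (Fin m) (Fin n) ℝ) :=
  inferInstanceAs (MeasureSpace (Fin m → Fin n → ℝ))

/-- Tucker (multilinear) product `D ×₁ A ×₂ B ×₃ C` of a third-order tensor
`D ∈ ℝ^{L×M×N}` with matrices `A ∈ ℝ^{I×L}`, `B ∈ ℝ^{J×M}`, `C ∈ ℝ^{K×N}`. -/
def tucker {L M N I J K : ℕ} (D : Fin L → Fin M → Fin N → ℝ)
    (A : Matrix (Fin I) (Fin L) ℝ) (B : Matrix (Fin J) (Fin M) ℝ)
    (C : Matrix (Fin K) (Fin N) ℝ) : Fin I → Fin J → Fin K → ℝ :=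
  fun i j k => ∑ l, ∑ m, ∑ n, D l m n * A i l * B j m * C k n


theorem ae_ne_zero_of_analytic {E : Type*} [NormedAddCommGroup E] [NormedSpace ℝ E]
    [FiniteDimensional ℝ E] [MeasurableSpace E] [BorelSpace E] (μ : Measure E)
    [μ.IsAddHaarMeasure] (f : E → ℝ) (hf : ∀ x, AnalyticAt ℝ f x) (x0 : E) (h0 : f x0 ≠ 0) :
    ∀ᵐ x ∂μ, f x ≠ 0 := by
  have key : ∀ g : E → ℝ, (∀ x, AnalyticAt ℝ g x) → g 0 ≠ 0 → ∀ᵐ x ∂μ, g x ≠ 0 := by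
    intro g hg hg0
    have hcont : Continuous g := continuous_iff_continuousAt.2 fun x => (hg x).continuousAt
    have hline : ∀ x : E, ∀ᵐ t : ℝ, g (t • x) ≠ 0 := by
      intro x
      have han : AnalyticOnNhd ℝ (fun t : ℝ => g (t • x)) Set.univ := by
        intro t _
        exact AnalyticAt.fun_comp (g := g) (hg _) (by fun_prop)
      have := han.preimage_zero_mem_codiscrete (x := 0) (by simpa using hg0)
      have h2 := ae_restrict_le_codiscreteWithin (μ := (volume : Measure ℝ)) MeasurableSet.univ this
      simp only [Measure.restrict_univ] at h2
      filter_upwards [h2] with t ht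
      simpa using ht
    have hclosed : MeasurableSet {p : E × ℝ | g (p.2 • p.1) = 0} :=
      (isClosed_singleton (x := (0:ℝ))).preimage
        (show Continuous fun p : E × ℝ => g (p.2 • p.1) by fun_prop) |>.measurableSet
    have hnull : (μ.prod (volume : Measure ℝ)) {p : E × ℝ | g (p.2 • p.1) = 0} = 0 := by
      rw [Measure.measure_prod_null hclosed]
      filter_upwards with x
      have := hline x
      rw [ae_iff] at this
      simpa using this
    rw [← Measure.prod_swap, Measure.map_apply measurable_swap hclosed] at hnull
    have h3 := Measure.measure_ae_null_of_prod_null hnull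
    have h4 : ∀ᵐ t : ℝ, t ≠ 0 := by
      rw [ae_iff]; simp
    obtain ⟨t, ht, ht0⟩ := (h3.and h4).exists
    have h5 : μ ((t • ·) ⁻¹' {x | g x = 0}) = 0 := ht
    rw [Measure.addHaar_preimage_smul _ ht0] at h5
    rw [ae_iff]
    simp only [not_not]
    rcases mul_eq_zero.1 h5 with h | h
    · simp_all
    · exact h
  have := key (fun y => f (x0 + y)) (fun x => AnalyticAt.fun_comp (hf _) (by fun_prop)) (by simpa using h0)
  have h2 : ∀ᵐ y ∂μ, f (x0 + (-x0 + y)) ≠ 0 :=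
    (measurePreserving_add_left μ (-x0)).quasiMeasurePreserving.ae this
  simpa using h2

theorem ae_injective {E : Type*} [NormedAddCommGroup E] [NormedSpace ℝ E]
    [FiniteDimensional ℝ E] [MeasurableSpace E] [BorelSpace E] (μ : Measure E)
    [μ.IsAddHaarMeasure] {V κ : Type*} [AddCommGroup V] [Module ℝ V] [FiniteDimensional ℝ V]
    [Fintype κ] (T : E → V → κ → ℝ)
    (hadd : ∀ x v w k, T x (v + w) k = T x v k + T x w k)
    (hsmul : ∀ x (c : ℝ) v k, T x (c • v) k = c * T x v k)
    (han : ∀ v k x, AnalyticAt ℝ (fun x => T x v k) x)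
    (x0 : E) (h0 : ∀ v, (∀ k, T x0 v k = 0) → v = 0) :
    ∀ᵐ x ∂μ, ∀ v, (∀ k, T x v k = 0) → v = 0 := by
  let b := Module.finBasis ℝ V
  let T' : E → κ → V →ₗ[ℝ] ℝ := fun x k =>
    { toFun := fun v => T x v k, map_add' := fun v w => hadd x v w k,
      map_smul' := fun c v => hsmul x c v k }
  let G : E → Matrix _ _ ℝ := fun x => Matrix.of fun i j => ∑ k, T x (b i) k * T x (b j) k
  have hG : ∀ x (c : _ → ℝ) i, (G x).mulVec c i = ∑ k, T x (b i) k * T x (∑ j, c j • b j) k := by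
    intro x c i
    have : ∀ k, T x (∑ j, c j • b j) k = ∑ j, c j * T x (b j) k := by
      intro k
      change T' x k _ = _
      rw [map_sum]
      refine Finset.sum_congr rfl fun j _ => ?_
      rw [map_smul]; rfl
    simp only [this, Matrix.mulVec, dotProduct, G, Matrix.of_apply, Finset.mul_sum, Finset.sum_mul]
    rw [Finset.sum_comm]
    refine Finset.sum_congr rfl fun k _ => Finset.sum_congr rfl fun j _ => by ring
  have hdet0 : (G x0).det ≠ 0 := by
    intro h
    obtain ⟨c, hc, hGc⟩ := Matrix.exists_mulVec_eq_zero_iff.2 h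
    have h1 : ∑ i, c i * (G x0).mulVec c i = 0 := by simp [hGc]
    have h2 : ∑ i, c i * (G x0).mulVec c i = ∑ k, (T x0 (∑ j, c j • b j) k)^2 := by
      have : ∀ k, T x0 (∑ j, c j • b j) k = ∑ j, c j * T x0 (b j) k := by
        intro k
        change T' x0 k _ = _
        rw [map_sum]
        refine Finset.sum_congr rfl fun j _ => ?_
        rw [map_smul]; rfl
      simp_rw [hG, sq]
      conv_rhs => enter [2, k, 1]; rw [this]
      simp_rw [Finset.mul_sum, Finset.sum_mul]
      rw [Finset.sum_comm]
      refine Finset.sum_congr rfl fun k _ => Finset.sum_congr rfl fun j _ => by ring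
    rw [h1] at h2
    have h3 := h0 (∑ j, c j • b j) (by
      intro k
      have := (Finset.sum_eq_zero_iff_of_nonneg (fun k _ => sq_nonneg _)).1 h2.symm k (Finset.mem_univ _)
      simpa using this)
    have h4 := Fintype.linearIndependent_iff.1 b.linearIndependent c h3
    exact hc (funext h4)
  have hae := ae_ne_zero_of_analytic μ (fun x => (G x).det) (by
    intro x
    simp only [Matrix.det_apply, G, Matrix.of_apply]
    refine Finset.analyticAt_fun_sum _ fun σ _ => ?_
    simp only [Units.smul_def, zsmul_eq_mul]
    refine analyticAt_const.mul (Finset.analyticAt_fun_prod _ fun i _ => ?_)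
    refine Finset.analyticAt_fun_sum _ fun k _ => ?_
    exact (han _ _ _).mul (han _ _ _)) x0 hdet0
  filter_upwards [hae] with x hx v hv
  have hv' : ∑ j, b.repr v j • b j = v := b.sum_repr v
  have : (G x).mulVec (fun j => b.repr v j) = 0 := by
    funext i
    rw [hG, hv']; simp [hv]
  by_contra hne
  refine hx (Matrix.exists_mulVec_eq_zero_iff.1 ⟨_, ?_, this⟩)
  intro h
  apply hne
  rw [← hv']
  simp [fun j => congrFun h j]


/-- explicit example slices -/
def exSlice (M q : ℕ) (a : ℕ → ℝ) (k i j : ℕ) : ℝ :=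
  if k < q then (if i = k * M + j then 1 else 0)
  else if k = q then (if i < M then (if i = j then a i else 0) else 1)
  else 1

theorem exSlice_struct {L M N q : ℕ} (hM : 0 < M) (hML : M ≤ L) (hLq : L ≤ q * M) (hqN : q < N)
    (a b : ℕ → ℝ) (X : Fin L → Fin L → ℝ) (Z : Fin M → Fin M → ℝ)
    (h : ∀ (k : Fin N) (i : Fin L) (j : Fin M),
      ∑ i', X i i' * exSlice M q a k i' j = ∑ m : Fin M, exSlice M q b k i m * Z m j) :
    (∀ i i' : Fin L, X i i' = if (i : ℕ) / M = i' / M then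
      Z ⟨i % M, Nat.mod_lt _ hM⟩ ⟨i' % M, Nat.mod_lt _ hM⟩ else 0) ∧
    (∀ i j : Fin M, Z i j * a j = b i * Z i j) := by
  have h1 : ∀ i i' : Fin L, X i i' = if (i : ℕ) / M = i' / M then
      Z ⟨i % M, Nat.mod_lt _ hM⟩ ⟨i' % M, Nat.mod_lt _ hM⟩ else 0 := by
    intro i i'
    have hk : (i' : ℕ) / M < q := by
      rw [Nat.div_lt_iff_lt_mul hM]; omega
    have := h ⟨i' / M, by omega⟩ i ⟨i' % M, Nat.mod_lt _ hM⟩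
    simp only [exSlice, hk, if_true] at this
    rw [Finset.sum_eq_single i'] at this
    · rw [if_pos (by rw [mul_comm]; exact (Nat.div_add_mod _ _).symm), mul_one] at this
      rw [this]
      split_ifs with hi
      · rw [Finset.sum_eq_single ⟨i % M, Nat.mod_lt _ hM⟩]
        · rw [if_pos, one_mul]
          rw [← hi, mul_comm]; exact (Nat.div_add_mod _ _).symm
        · intro m _ hm
          rw [if_neg, zero_mul]
          intro hh
          apply hm
          apply Fin.ext
          simp only
          rw [hh, mul_comm, Nat.mul_add_mod, Nat.mod_eq_of_lt m.2]
        · simp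
      · apply Finset.sum_eq_zero
        intro m _
        rw [if_neg, zero_mul]
        intro hh
        apply hi
        rw [hh, mul_comm, Nat.mul_add_div hM, Nat.div_eq_of_lt m.2, add_zero]
    · intro i'' _ hne
      rw [if_neg, mul_zero]
      intro hh
      apply hne
      apply Fin.ext
      rw [hh, mul_comm]; exact (Nat.div_add_mod _ _)
    · simp
  refine ⟨h1, ?_⟩
  intro i j
  have := h ⟨q, hqN⟩ ⟨i, by omega⟩ j
  simp only [exSlice, lt_irrefl, if_false, if_true, i.2] at this
  rw [Finset.sum_eq_single (⟨j, by omega⟩ : Fin L), Finset.sum_eq_single i] at this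
  · rw [h1] at this
    simpa [Nat.div_eq_of_lt i.2, Nat.div_eq_of_lt j.2, Nat.mod_eq_of_lt i.2,
      Nat.mod_eq_of_lt j.2] using this
  · intro m _ hm
    rw [if_neg (fun hh => hm (Fin.ext hh.symm)), zero_mul]
  · simp
  · intro i' _ hi'
    rw [h1]
    by_cases hlt : (i' : ℕ) < M
    · rw [if_pos hlt, if_neg (fun hh => hi' (Fin.ext hh)), mul_zero]
    · rw [if_neg, zero_mul]
      simp only
      rw [Nat.div_eq_of_lt i.2]
      intro hh
      exact hlt ((Nat.div_eq_zero_iff_lt hM).1 hh.symm)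
  · simp

theorem exSlice_hom {L M N q : ℕ} (hM : 0 < M) (hML : M ≤ L) (hLq : L ≤ q * M) (hqN : q < N)
    (a b : ℕ → ℝ) (hab : ∀ i j, a j ≠ b i) (X : Fin L → Fin L → ℝ) (Z : Fin M → Fin M → ℝ)
    (h : ∀ (k : Fin N) (i : Fin L) (j : Fin M),
      ∑ i', X i i' * exSlice M q a k i' j = ∑ m : Fin M, exSlice M q b k i m * Z m j) :
    X = 0 ∧ Z = 0 := by
  obtain ⟨h1, h2⟩ := exSlice_struct hM hML hLq hqN a b X Z h
  have hZ : Z = 0 := by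
    funext i j
    have := h2 i j
    have h3 : Z i j * (a j - b i) = 0 := by linarith
    rcases mul_eq_zero.1 h3 with h4 | h4
    · exact h4
    · exact absurd (sub_eq_zero.1 h4) (hab _ _)
  refine ⟨?_, hZ⟩
  funext i j
  rw [h1, hZ]; simp

theorem exSlice_end {L M N q : ℕ} (hM : 0 < M) (hML : M ≤ L) (hLq : L ≤ q * M) (hqN : q < N)
    (hq : L = M → q + 1 < N)
    (a : ℕ → ℝ) (ha : Function.Injective a) (X : Fin L → Fin L → ℝ) (Z : Fin M → Fin M → ℝ)
    (h : ∀ (k : Fin N) (i : Fin L) (j : Fin M),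
      ∑ i', X i i' * exSlice M q a k i' j = ∑ m : Fin M, exSlice M q a k i m * Z m j) :
    ∃ z : ℝ, X = (fun i j => if i = j then z else 0) ∧ Z = (fun i j => if i = j then z else 0) := by
  obtain ⟨h1, h2⟩ := exSlice_struct hM hML hLq hqN a a X Z h
  have hZ : ∀ i j, i ≠ j → Z i j = 0 := by
    intro i j hij
    have := h2 i j
    have h3 : Z i j * (a j - a i) = 0 := by linarith
    rcases mul_eq_zero.1 h3 with h4 | h4
    · exact h4
    · exact absurd (Fin.ext (ha (sub_eq_zero.1 h4)).symm) hij
  have hXd : ∀ i j, i ≠ j → X i j = 0 := by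
    intro i j hij
    rw [h1]
    split_ifs with hd
    · apply hZ
      intro hh
      apply hij
      apply Fin.ext
      rw [← Nat.div_add_mod i M, ← Nat.div_add_mod j M, hd, Fin.mk.inj hh]
    · rfl
  have hz : ∀ j, Z j j = Z ⟨0, hM⟩ ⟨0, hM⟩ := by
    intro j
    have key : ∃ (k : Fin N) (i : Fin L), (i : ℕ) % M = 0 ∧ ((∀ j, exSlice M q a k i j = 1)) := by
      by_cases hLM : L = M
      · exact ⟨⟨q + 1, hq hLM⟩, ⟨0, by omega⟩, by simp, by simp [exSlice]⟩
      · refine ⟨⟨q, hqN⟩, ⟨M, by omega⟩, by simp, by simp [exSlice]⟩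
    obtain ⟨k, i, hi, hk⟩ := key
    have := h k i j
    rw [Finset.sum_eq_single i, Finset.sum_eq_single j] at this
    · simp only [hk, mul_one, one_mul] at this
      rw [h1] at this
      simpa [hi] using this.symm
    · intro m _ hm
      rw [hZ m j hm, mul_zero]
    · simp
    · intro m _ hm
      rw [hXd i m hm.symm, zero_mul]
    · simp
  refine ⟨Z ⟨0, hM⟩ ⟨0, hM⟩, ?_, ?_⟩
  · funext i j
    split_ifs with hij
    · subst hij
      rw [h1, if_pos rfl, hz]
    · exact hXd i j hij
  · funext i j
    split_ifs with hij
    · subst hij; exact hz i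
    · exact hZ i j hij

theorem exists_family (L M N : ℕ) (hL : 0 < L) (hM : 0 < M)
    (hNlower : N ≥ max (⌈(L : ℚ) / (M : ℚ)⌉₊ + ⌈(M : ℚ) / (L : ℚ)⌉₊) 3) :
    ∃ D : ℕ → Fin L → Fin M → Fin N → ℝ,
      (∀ s t, s ≠ t → ∀ (X : Fin L → Fin L → ℝ) (Z : Fin M → Fin M → ℝ),
        (∀ n i j, ∑ i', X i i' * D t i' j n = ∑ m, D s i m n * Z m j) → X = 0 ∧ Z = 0) ∧
      (∀ s, ∀ (X : Fin L → Fin L → ℝ) (Z : Fin M → Fin M → ℝ),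
        (∀ n i j, ∑ i', X i i' * D s i' j n = ∑ m, D s i m n * Z m j) →
        ∃ z : ℝ, X = (fun i j => if i = j then z else 0) ∧
          Z = (fun i j => if i = j then z else 0)) := by
  let a : ℕ → ℕ → ℝ := fun r i => (Nat.pair r i : ℕ)
  have ha : ∀ r, Function.Injective (a r) := by
    intro r i j hij
    have : Nat.pair r i = Nat.pair r j := Nat.cast_injective (R := ℝ) hij
    exact (Nat.pair_eq_pair.1 this).2
  have hab : ∀ s t, s ≠ t → ∀ i j, a s i ≠ a t j := by
    intro s t hst i j hij
    have : Nat.pair s i = Nat.pair t j := Nat.cast_injective (R := ℝ) hij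
    exact hst (Nat.pair_eq_pair.1 this).1
  have hLQ : (0:ℚ) < L := by exact_mod_cast hL
  have hMQ : (0:ℚ) < M := by exact_mod_cast hM
  have hc1 : 0 < ⌈(L : ℚ) / (M : ℚ)⌉₊ := Nat.ceil_pos.2 (by positivity)
  have hc2 : 0 < ⌈(M : ℚ) / (L : ℚ)⌉₊ := Nat.ceil_pos.2 (by positivity)
  have hd1 : L ≤ ⌈(L : ℚ) / (M : ℚ)⌉₊ * M := by
    have := Nat.le_ceil ((L : ℚ) / (M : ℚ))
    rw [div_le_iff₀ hMQ] at this
    exact_mod_cast this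
  have hd2 : M ≤ ⌈(M : ℚ) / (L : ℚ)⌉₊ * L := by
    have := Nat.le_ceil ((M : ℚ) / (L : ℚ))
    rw [div_le_iff₀ hLQ] at this
    exact_mod_cast this
  have he : L = M → ⌈(L : ℚ) / (M : ℚ)⌉₊ = 1 := by
    rintro rfl
    rw [div_self hLQ.ne']; simp
  obtain ⟨hN1, hN2⟩ := max_le_iff.1 hNlower
  by_cases hLM : M ≤ L
  · refine ⟨fun r i j n => exSlice M ⌈(L : ℚ) / (M : ℚ)⌉₊ (a r) n i j, ?_, ?_⟩
    · intro s t hst X Z h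
      exact exSlice_hom (N := N) hM hLM hd1 (by omega) (a t) (a s) (fun i j => hab t s hst.symm j i) X Z h
    · intro s X Z h
      exact exSlice_end (N := N) hM hLM hd1 (by omega) (fun hh => by have := he hh; omega) (a s) (ha s) X Z h
  · refine ⟨fun r i j n => exSlice L ⌈(M : ℚ) / (L : ℚ)⌉₊ (a r) n j i, ?_, ?_⟩
    · intro s t hst X Z h
      have := exSlice_hom (N := N) hL (by omega) hd2 (by omega) (a s) (a t)
        (fun i j => hab s t hst j i) (fun i j => Z j i) (fun i j => X j i)
        (by intro n i j
            have := h n j i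
            simp only [mul_comm] at this ⊢
            exact this.symm)
      refine ⟨?_, ?_⟩
      · funext i j; exact congrFun (congrFun this.2 j) i
      · funext i j; exact congrFun (congrFun this.1 j) i
    · intro s X Z h
      obtain ⟨z, hz1, hz2⟩ := exSlice_end (N := N) hL (by omega) hd2 (by omega) (by omega) (a s) (ha s)
        (fun i j => Z j i) (fun i j => X j i)
        (by intro n i j
            have := h n j i
            simp only [mul_comm] at this ⊢
            exact this.symm)
      refine ⟨z, ?_, ?_⟩
      · funext i j
        rw [congrFun (congrFun hz2 j) i]; simp [eq_comm]
      · funext i j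
        rw [congrFun (congrFun hz1 j) i]; simp [eq_comm]

section
open Matrix

theorem block_core {R L M K : ℕ} (hL : 0 < L)
    (E E' : Fin R → Fin K → Matrix (Fin L) (Fin M) ℝ)
    (P Pi : Matrix (Fin L × Fin R) (Fin L × Fin R) ℝ)
    (Q Qi : Matrix (Fin M × Fin R) (Fin M × Fin R) ℝ)
    (hP : P * Pi = 1) (hPi : Pi * P = 1) (hQi : Qi * Q = 1)
    (hE : ∀ k, blockDiagonal (fun r => E r k) = P * blockDiagonal (fun r => E' r k) * Qᵀ)
    (hom : ∀ s t, s ≠ t → ∀ (X : Fin L → Fin L → ℝ) (Z : Fin M → Fin M → ℝ),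
        (∀ k i j, ∑ i', X i i' * E t k i' j = ∑ m, E s k i m * Z m j) → X = 0 ∧ Z = 0)
    (hend : ∀ s, ∀ (X : Fin L → Fin L → ℝ) (Z : Fin M → Fin M → ℝ),
        (∀ k i j, ∑ i', X i i' * E s k i' j = ∑ m, E s k i m * Z m j) →
        ∃ z : ℝ, X = (fun i j => if i = j then z else 0) ∧
          Z = (fun i j => if i = j then z else 0)) :
    ∃ π : Equiv.Perm (Fin R), ∀ s t, t ≠ s →
      (∀ i j, P (i, t) (j, π s) = 0) ∧ (∀ i j, Q (i, t) (j, π s) = 0) := by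
  let prL : Fin R → Matrix (Fin L × Fin R) (Fin L × Fin R) ℝ := fun r =>
    diagonal (fun p => if p.2 = r then 1 else 0)
  let prM : Fin R → Matrix (Fin M × Fin R) (Fin M × Fin R) ℝ := fun r =>
    diagonal (fun p => if p.2 = r then 1 else 0)
  have hcomm : ∀ r k, prL r * blockDiagonal (fun r => E' r k) =
      blockDiagonal (fun r => E' r k) * prM r := by
    intro r k
    ext ⟨i, s⟩ ⟨j, t⟩
    simp only [prL, prM, diagonal_mul, mul_diagonal, blockDiagonal_apply]
    by_cases hst : s = t
    · subst hst; simp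
    · simp [hst]
  have hQT : Qᵀ * Qiᵀ = 1 := by rw [← transpose_mul, hQi, transpose_one]
  let X : Fin R → Matrix (Fin L × Fin R) (Fin L × Fin R) ℝ := fun r => P * prL r * Pi
  let Z : Fin R → Matrix (Fin M × Fin R) (Fin M × Fin R) ℝ := fun r => Qiᵀ * prM r * Qᵀ
  have hXZ : ∀ r k, X r * blockDiagonal (fun r => E r k) = blockDiagonal (fun r => E r k) * Z r := by
    intro r k
    rw [hE k]
    calc X r * (P * blockDiagonal (fun r => E' r k) * Qᵀ)
        = P * prL r * (Pi * P) * blockDiagonal (fun r => E' r k) * Qᵀ := by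
          simp only [X, Matrix.mul_assoc]
      _ = P * (prL r * blockDiagonal (fun r => E' r k)) * Qᵀ := by
          rw [hPi, Matrix.mul_one]; simp only [Matrix.mul_assoc]
      _ = P * (blockDiagonal (fun r => E' r k)) * (Qᵀ * Qiᵀ) * prM r * Qᵀ := by
          rw [hcomm, hQT, Matrix.mul_one]; simp only [Matrix.mul_assoc]
      _ = _ := by simp only [Z, Matrix.mul_assoc]
  have hent : ∀ r s t k i j, ∑ i', X r (i, s) (i', t) * E t k i' j =
      ∑ m, E s k i m * Z r (m, s) (j, t) := by
    intro r s t k i j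
    have := congrFun (congrFun (hXZ r k) (i, s)) (j, t)
    simp only [Matrix.mul_apply, blockDiagonal_apply, Fintype.sum_prod_type] at this
    simpa using this
  have hoff : ∀ r s t, s ≠ t → (∀ i j, X r (i, s) (j, t) = 0) ∧ (∀ i j, Z r (i, s) (j, t) = 0) := by
    intro r s t hst
    obtain ⟨h1, h2⟩ := hom s t hst (fun i j => X r (i, s) (j, t)) (fun i j => Z r (i, s) (j, t))
      (fun k i j => hent r s t k i j)
    exact ⟨fun i j => congrFun (congrFun h1 i) j, fun i j => congrFun (congrFun h2 i) j⟩
  have hon : ∀ r s, ∃ z : ℝ, (∀ i j, X r (i, s) (j, s) = if i = j then z else 0) ∧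
      (∀ i j, Z r (i, s) (j, s) = if i = j then z else 0) := by
    intro r s
    obtain ⟨z, h1, h2⟩ := hend s (fun i j => X r (i, s) (j, s)) (fun i j => Z r (i, s) (j, s))
      (fun k i j => hent r s s k i j)
    exact ⟨z, fun i j => congrFun (congrFun h1 i) j, fun i j => congrFun (congrFun h2 i) j⟩
  choose c hcX hcZ using hon
  have hX : ∀ r, X r = diagonal (fun p => c r p.2) := by
    intro r
    ext ⟨i, s⟩ ⟨j, t⟩
    by_cases hst : s = t
    · subst hst
      rw [hcX]; simp [diagonal_apply]
    · rw [(hoff r s t hst).1]; simp [hst]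
  have hZ : ∀ r, Z r = diagonal (fun p => c r p.2) := by
    intro r
    ext ⟨i, s⟩ ⟨j, t⟩
    by_cases hst : s = t
    · subst hst
      rw [hcZ]; simp [diagonal_apply]
    · rw [(hoff r s t hst).2]; simp [hst]
  have hprmul : ∀ r r', prL r * prL r' = if r = r' then prL r else 0 := by
    intro r r'
    simp only [prL, diagonal_mul_diagonal]
    split_ifs with h
    · subst h; congr 1; funext p; split_ifs <;> simp
    · rw [← diagonal_zero]; congr 1; funext p
      by_cases h1 : p.2 = r
      · have : p.2 ≠ r' := fun h2 => h (h1 ▸ h2)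
        simp [this]
      · simp [h1]
  have hXmul : ∀ r r', X r * X r' = if r = r' then X r else 0 := by
    intro r r'
    calc X r * X r' = P * (prL r * (Pi * P) * prL r') * Pi := by simp only [X, Matrix.mul_assoc]
      _ = _ := by
        rw [hPi, Matrix.mul_one, hprmul]
        split_ifs
        · rfl
        · simp
  have hXsum : ∑ r, X r = 1 := by
    have : ∑ r, prL r = 1 := by
      ext p p'
      simp only [prL, Matrix.sum_apply, diagonal_apply, Matrix.one_apply]
      by_cases h : p = p' <;> simp [h]
    simp only [X]
    rw [← Finset.sum_mul, ← Finset.mul_sum, this, Matrix.mul_one, hP]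
  let l0 : Fin L := ⟨0, hL⟩
  have hcmul : ∀ r r' s, c r s * c r' s = if r = r' then c r s else 0 := by
    intro r r' s
    have := congrFun (congrFun (hXmul r r') (l0, s)) (l0, s)
    rw [hX, hX] at this
    simp only [diagonal_mul_diagonal, diagonal_apply_eq] at this
    rw [this]
    split_ifs <;> simp
  have hcsum : ∀ s, ∑ r, c r s = 1 := by
    intro s
    have := congrFun (congrFun hXsum (l0, s)) (l0, s)
    simpa [Matrix.sum_apply, hX] using this
  have hex : ∀ s, ∃ r, c r s ≠ 0 := by
    intro s
    by_contra hcon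
    push Not at hcon
    have := hcsum s
    simp [hcon] at this
  choose ρ hρ using hex
  have hone : ∀ s, c (ρ s) s = 1 := by
    intro s
    have := hcmul (ρ s) (ρ s) s
    rw [if_pos rfl] at this
    exact mul_right_cancel₀ (hρ s) (by linarith)
  have huniq : ∀ r s, c r s ≠ 0 → r = ρ s := by
    intro r s hr
    by_contra hne
    have := hcmul r (ρ s) s
    rw [if_neg hne, hone, mul_one] at this
    exact hr this
  have hsurj : Function.Surjective ρ := by
    intro r
    by_contra hcon
    push Not at hcon
    have hc0 : ∀ s, c r s = 0 := by
      intro s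
      by_contra h
      exact hcon s (huniq r s h).symm
    have hX0 : X r = 0 := by
      rw [hX]; simp only [hc0]; exact diagonal_zero
    have : prL r = Pi * X r * P := by
      calc prL r = (Pi * P) * prL r * (Pi * P) := by rw [hPi]; simp
        _ = _ := by simp only [X, Matrix.mul_assoc]
    rw [hX0] at this
    have := congrFun (congrFun this (l0, r)) (l0, r)
    simp [prL] at this
  have hinj : Function.Injective ρ := Finite.injective_iff_surjective.2 hsurj
  refine ⟨Equiv.ofBijective ρ ⟨hinj, hsurj⟩, ?_⟩
  intro s t hts
  have hct : c (ρ s) t = 0 := by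
    by_contra h
    exact hts (hinj (huniq _ _ h).symm)

  constructor
  · intro i j
    show P (i, t) (j, ρ s) = 0
    have h1 : P * prL (ρ s) = X (ρ s) * P := by
      simp only [X]; rw [Matrix.mul_assoc, hPi, Matrix.mul_one]
    rw [hX] at h1
    have := congrFun (congrFun h1 (i, t)) (j, ρ s)
    simpa [prL, hct] using this
  · intro i j
    show Q (i, t) (j, ρ s) = 0
    have h1 : prM (ρ s) * Qᵀ = Qᵀ * Z (ρ s) := by
      simp only [Z]; rw [← Matrix.mul_assoc, ← Matrix.mul_assoc, hQT, Matrix.one_mul]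
    rw [hZ] at h1
    have := congrFun (congrFun h1 (j, ρ s)) (i, t)
    simpa [prM, hct] using this
theorem exists_left_inv_of_inj {m n : Type*} [Fintype m] [Fintype n] [DecidableEq m] [DecidableEq n]
    (A : Matrix m n ℝ) (h : ∀ v, A.mulVec v = 0 → v = 0) : ∃ B : Matrix n m ℝ, B * A = 1 := by
  obtain ⟨g, hg⟩ := LinearMap.exists_leftInverse_of_injective (Matrix.toLin' A)
    (LinearMap.ker_eq_bot'.2 (fun v hv => h v (by simpa using hv)))
  refine ⟨LinearMap.toMatrix' g, ?_⟩
  have := congrArg LinearMap.toMatrix' hg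
  simpa [LinearMap.toMatrix'_comp] using this

theorem half_factor {a b p q κ : Type*} [Fintype a] [Fintype b] [Fintype p] [Fintype q]
    [DecidableEq p] [DecidableEq q]
    (A A' : Matrix a p ℝ) (B B' : Matrix b q ℝ) (Ai : Matrix p a ℝ) (Bi : Matrix q b ℝ)
    (S S' : κ → Matrix p q ℝ) (heq : ∀ k, A * S k * Bᵀ = A' * S' k * B'ᵀ)
    (hA : Ai * A = 1) (hB : Bi * B = 1)
    (hjL : ∀ φ : p → ℝ, (∀ k, φ ᵥ* S k = 0) → φ = 0)
    (hjM : ∀ w : q → ℝ, (∀ k, S k *ᵥ w = 0) → w = 0) :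
    IsUnit (Ai * A').det ∧ A' = A * (Ai * A') ∧ ∀ k, S k = (Ai * A') * S' k * (Bi * B')ᵀ := by
  have hBT : Bᵀ * Biᵀ = 1 := by rw [← transpose_mul, hB, transpose_one]
  have hS1 : ∀ k, A * S k = A' * S' k * (Bi * B')ᵀ := by
    intro k
    calc A * S k = A * S k * (Bᵀ * Biᵀ) := by rw [hBT, Matrix.mul_one]
      _ = A * S k * Bᵀ * Biᵀ := by simp only [Matrix.mul_assoc]
      _ = _ := by rw [heq, transpose_mul]; simp only [Matrix.mul_assoc]
  have hS : ∀ k, S k = (Ai * A') * S' k * (Bi * B')ᵀ := by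
    intro k
    calc S k = (Ai * A) * S k := by rw [hA, Matrix.one_mul]
      _ = Ai * (A * S k) := by simp only [Matrix.mul_assoc]
      _ = _ := by rw [hS1]; simp only [Matrix.mul_assoc]
  have hPdet : (Ai * A').det ≠ 0 := by
    intro h
    obtain ⟨φ, hφ, h0⟩ := Matrix.exists_vecMul_eq_zero_iff.2 h
    apply hφ
    apply hjL
    intro k
    rw [hS k, ← vecMul_vecMul, ← vecMul_vecMul, h0]; simp
  have hQdet : (Bi * B').det ≠ 0 := by
    intro h
    obtain ⟨φ, hφ, h0⟩ := Matrix.exists_vecMul_eq_zero_iff.2 h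
    apply hφ
    apply hjM
    intro k
    rw [hS k, ← mulVec_mulVec, mulVec_transpose, h0]; simp
  have hPu : IsUnit (Ai * A').det := isUnit_iff_ne_zero.2 hPdet
  have hQu : IsUnit (Bi * B')ᵀ.det := by rw [det_transpose]; exact isUnit_iff_ne_zero.2 hQdet
  refine ⟨hPu, ?_, hS⟩
  set P := Ai * A' with hPdef
  set Q := Bi * B' with hQdef
  have h0 : ∀ k, (A' - A * P) * P⁻¹ * S k = 0 := by
    intro k
    calc (A' - A * P) * P⁻¹ * S k = (A' - A * P) * (P⁻¹ * P) * S' k * Qᵀ := by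
          rw [hS k]; simp only [Matrix.mul_assoc]
      _ = A' * S' k * Qᵀ - A * (P * S' k * Qᵀ) := by
          rw [Matrix.nonsing_inv_mul _ hPu, Matrix.mul_one, Matrix.sub_mul, Matrix.sub_mul]
          simp only [Matrix.mul_assoc]
      _ = 0 := by rw [← hS1, ← hS, sub_self]
  have h1 : (A' - A * P) * P⁻¹ = 0 := by
    ext i j
    have := hjL (((A' - A * P) * P⁻¹) i) (by
      intro k
      have := congrFun (h0 k) i
      rwa [Matrix.mul_apply_eq_vecMul] at this)
    exact congrFun this j
  have h2 : A' - A * P = 0 := by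
    calc A' - A * P = (A' - A * P) * P⁻¹ * P := by
          rw [Matrix.mul_assoc, Matrix.nonsing_inv_mul _ hPu, Matrix.mul_one]
      _ = 0 := by rw [h1, Matrix.zero_mul]
  exact sub_eq_zero.1 h2

theorem tucker_block {R L M N I J K : ℕ}
    (A : Fin R → Matrix (Fin I) (Fin L) ℝ) (B : Fin R → Matrix (Fin J) (Fin M) ℝ)
    (C : Fin R → Matrix (Fin K) (Fin N) ℝ) (D : Fin R → (Fin L → Fin M → Fin N → ℝ)) (i j k) :
    ∑ r, tucker (D r) (A r) (B r) (C r) i j k =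
    ((Matrix.of fun i (p : Fin L × Fin R) => A p.2 i p.1) *
      blockDiagonal (fun r => (Matrix.of fun l m => ∑ n, C r k n * D r l m n)) *
      (Matrix.of fun j (p : Fin M × Fin R) => B p.2 j p.1)ᵀ) i j := by
  simp only [tucker, Matrix.mul_apply, blockDiagonal_apply, Fintype.sum_prod_type_right, of_apply,
    transpose_apply, mul_ite, mul_zero]
  refine Finset.sum_congr rfl fun r _ => ?_
  rw [Finset.sum_comm]
  refine Finset.sum_congr rfl fun m _ => ?_
  rw [Finset.sum_comm (s := (Finset.univ : Finset (Fin R)))]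
  simp only [Finset.sum_ite_eq', Finset.mem_univ, if_true, Finset.sum_mul, Finset.mul_sum]
  refine Finset.sum_congr rfl fun l _ => Finset.sum_congr rfl fun n _ => by ring

theorem det_core {R L M N I J K : ℕ} (hL : 0 < L) (hM : 0 < M)
    (A : Fin R → Matrix (Fin I) (Fin L) ℝ) (B : Fin R → Matrix (Fin J) (Fin M) ℝ)
    (C : Fin R → Matrix (Fin K) (Fin N) ℝ) (D : Fin R → (Fin L → Fin M → Fin N → ℝ))
    (hA : ∀ v : Fin L × Fin R → ℝ, (∀ i, ∑ p, A p.2 i p.1 * v p = 0) → v = 0)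
    (hB : ∀ v : Fin M × Fin R → ℝ, (∀ i, ∑ p, B p.2 i p.1 * v p = 0) → v = 0)
    (hC : ∀ r, ∀ v : Fin N → ℝ, (∀ k, ∑ n, C r k n * v n = 0) → v = 0)
    (hD : ∀ r, ∀ v : Fin N → ℝ, (∀ p : Fin L × Fin M, ∑ n, v n * D r p.1 p.2 n = 0) → v = 0)
    (hom : ∀ s t, s ≠ t → ∀ (X : Fin L → Fin L → ℝ) (Z : Fin M → Fin M → ℝ),
        (∀ k i j, ∑ i', X i i' * (∑ n, C t k n * D t i' j n) =
          ∑ m, (∑ n, C s k n * D s i m n) * Z m j) → X = 0 ∧ Z = 0)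
    (hend : ∀ s, ∀ (X : Fin L → Fin L → ℝ) (Z : Fin M → Fin M → ℝ),
        (∀ k i j, ∑ i', X i i' * (∑ n, C s k n * D s i' j n) =
          ∑ m, (∑ n, C s k n * D s i m n) * Z m j) →
        ∃ z : ℝ, X = (fun i j => if i = j then z else 0) ∧
          Z = (fun i j => if i = j then z else 0))
    (A' : Fin R → Matrix (Fin I) (Fin L) ℝ) (B' : Fin R → Matrix (Fin J) (Fin M) ℝ)
    (C' : Fin R → Matrix (Fin K) (Fin N) ℝ) (D' : Fin R → (Fin L → Fin M → Fin N → ℝ))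
    (heq : ∀ i j k, (∑ r, tucker (D r) (A r) (B r) (C r) i j k)
            = ∑ r, tucker (D' r) (A' r) (B' r) (C' r) i j k) :
        ∃ π : Equiv.Perm (Fin R), ∀ r : Fin R,
          ∃ (Θa : Matrix (Fin L) (Fin L) ℝ) (Θb : Matrix (Fin M) (Fin M) ℝ)
            (Θc : Matrix (Fin N) (Fin N) ℝ),
            IsUnit Θa ∧ IsUnit Θb ∧ IsUnit Θc ∧
            A' (π r) = A r * Θa ∧
            B' (π r) = B r * Θb ∧
            C' (π r) = C r * Θc ∧
            tucker (D' (π r)) Θa Θb Θc = D r := by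
  let E : Fin R → Fin K → Matrix (Fin L) (Fin M) ℝ := fun r k =>
    Matrix.of fun l m => ∑ n, C r k n * D r l m n
  let E' : Fin R → Fin K → Matrix (Fin L) (Fin M) ℝ := fun r k =>
    Matrix.of fun l m => ∑ n, C' r k n * D' r l m n
  let bA : Matrix (Fin I) (Fin L × Fin R) ℝ := Matrix.of fun i p => A p.2 i p.1
  let bA' : Matrix (Fin I) (Fin L × Fin R) ℝ := Matrix.of fun i p => A' p.2 i p.1
  let bB : Matrix (Fin J) (Fin M × Fin R) ℝ := Matrix.of fun i p => B p.2 i p.1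
  let bB' : Matrix (Fin J) (Fin M × Fin R) ℝ := Matrix.of fun i p => B' p.2 i p.1
  let S : Fin K → Matrix (Fin L × Fin R) (Fin M × Fin R) ℝ := fun k => blockDiagonal fun r => E r k
  let S' : Fin K → Matrix (Fin L × Fin R) (Fin M × Fin R) ℝ := fun k => blockDiagonal fun r => E' r k
  have hY : ∀ k, bA * S k * bBᵀ = bA' * S' k * bB'ᵀ := by
    intro k
    ext i j
    have := heq i j k
    rwa [tucker_block, tucker_block] at this
  obtain ⟨Ai, hAi⟩ := exists_left_inv_of_inj bA (fun v hv => hA v (fun i => congrFun hv i))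
  obtain ⟨Bi, hBi⟩ := exists_left_inv_of_inj bB (fun v hv => hB v (fun i => congrFun hv i))
  have hsL : ∀ s (φ : Fin L → ℝ), (∀ k j, ∑ l, φ l * E s k l j = 0) → φ = 0 := by
    intro s φ hφ
    obtain ⟨z, h1, h2⟩ := hend s (fun _ j => φ j) 0 (by
      intro k i j
      simpa [E] using hφ k j)
    have hz : z = 0 := by
      have := congrFun (congrFun h2 ⟨0, hM⟩) ⟨0, hM⟩
      simpa using this.symm
    funext j
    have := congrFun (congrFun h1 ⟨0, hL⟩) j
    simpa [hz] using this
  have hsM : ∀ s (w : Fin M → ℝ), (∀ k i, ∑ m, E s k i m * w m = 0) → w = 0 := by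
    intro s w hw
    obtain ⟨z, h1, h2⟩ := hend s 0 (fun i _ => w i) (by
      intro k i j
      simpa [E] using (hw k i).symm)
    have hz : z = 0 := by
      have := congrFun (congrFun h1 ⟨0, hL⟩) ⟨0, hL⟩
      simpa using this.symm
    funext j
    have := congrFun (congrFun h2 j) ⟨0, hM⟩
    simpa [hz] using this
  have hjL : ∀ φ : Fin L × Fin R → ℝ, (∀ k, φ ᵥ* S k = 0) → φ = 0 := by
    intro φ hφ
    funext ⟨l, r⟩
    have := hsL r (fun l => φ (l, r)) (by
      intro k j
      have := congrFun (hφ k) (j, r)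
      simpa [S, vecMul, dotProduct, blockDiagonal_apply, Fintype.sum_prod_type] using this)
    exact congrFun this l
  have hjM : ∀ w : Fin M × Fin R → ℝ, (∀ k, S k *ᵥ w = 0) → w = 0 := by
    intro w hw
    funext ⟨m, r⟩
    have := hsM r (fun m => w (m, r)) (by
      intro k i
      have := congrFun (hw k) (i, r)
      simpa [S, mulVec, dotProduct, blockDiagonal_apply, Fintype.sum_prod_type] using this)
    exact congrFun this m
  obtain ⟨hPu, hAP, hSP⟩ := half_factor bA bA' bB bB' Ai Bi S S' hY hAi hBi hjL hjM
  obtain ⟨hQu, hBQ, -⟩ := half_factor bB bB' bA bA' Bi Ai (fun k => (S k)ᵀ) (fun k => (S' k)ᵀ)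
    (by
      intro k
      have := congrArg Matrix.transpose (hY k)
      simpa [transpose_mul, Matrix.mul_assoc] using this) hBi hAi
    (by simpa [vecMul_transpose] using hjM) (by simpa [mulVec_transpose] using hjL)
  set P := Ai * bA' with hPdef
  set Q := Bi * bB' with hQdef
  have hP1 := Matrix.mul_nonsing_inv _ hPu
  have hP2 := Matrix.nonsing_inv_mul _ hPu
  have hQ2 := Matrix.nonsing_inv_mul _ hQu
  obtain ⟨π, hπ⟩ := block_core hL E E' P P⁻¹ Q Q⁻¹ hP1 hP2 hQ2 hSP hom hend
  refine ⟨π, fun s => ?_⟩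
  let Ta : Matrix (Fin L) (Fin L) ℝ := Matrix.of fun i j => P (i, s) (j, π s)
  let Tb : Matrix (Fin M) (Fin M) ℝ := Matrix.of fun i j => Q (i, s) (j, π s)
  have hTa : IsUnit Ta := by
    rw [Matrix.isUnit_iff_isUnit_det, isUnit_iff_ne_zero]
    intro h
    obtain ⟨v, hv, h0⟩ := Matrix.exists_mulVec_eq_zero_iff.2 h
    apply hPu.ne_zero
    refine Matrix.exists_mulVec_eq_zero_iff.1 ⟨fun p => if p.2 = π s then v p.1 else 0, ?_, ?_⟩
    · intro hh
      apply hv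
      funext j
      simpa using congrFun hh (j, π s)
    · funext ⟨i, t⟩
      simp only [mulVec, dotProduct, Fintype.sum_prod_type, mul_ite, mul_zero, Finset.sum_ite_eq',
        Finset.mem_univ, if_true, Pi.zero_apply]
      by_cases hts : t = s
      · subst hts
        exact congrFun h0 i
      · simp [(hπ s t hts).1]
  have hTb : IsUnit Tb := by
    rw [Matrix.isUnit_iff_isUnit_det, isUnit_iff_ne_zero]
    intro h
    obtain ⟨v, hv, h0⟩ := Matrix.exists_mulVec_eq_zero_iff.2 h
    apply hQu.ne_zero
    refine Matrix.exists_mulVec_eq_zero_iff.1 ⟨fun p => if p.2 = π s then v p.1 else 0, ?_, ?_⟩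
    · intro hh
      apply hv
      funext j
      simpa using congrFun hh (j, π s)
    · funext ⟨i, t⟩
      simp only [mulVec, dotProduct, Fintype.sum_prod_type, mul_ite, mul_zero, Finset.sum_ite_eq',
        Finset.mem_univ, if_true, Pi.zero_apply]
      by_cases hts : t = s
      · subst hts
        exact congrFun h0 i
      · simp [(hπ s t hts).2]
  have hAT : A' (π s) = A s * Ta := by
    ext i j
    have := congrFun (congrFun hAP i) (j, π s)
    simp only [Matrix.mul_apply, Fintype.sum_prod_type_right] at this
    rw [Finset.sum_eq_single s] at this
    · rw [Matrix.mul_apply]; exact this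
    · intro t _ hts
      simp [(hπ s t hts).1]
    · simp
  have hBT : B' (π s) = B s * Tb := by
    ext i j
    have := congrFun (congrFun hBQ i) (j, π s)
    simp only [Matrix.mul_apply, Fintype.sum_prod_type_right] at this
    rw [Finset.sum_eq_single s] at this
    · rw [Matrix.mul_apply]; exact this
    · intro t _ hts
      simp [(hπ s t hts).2]
    · simp
  have hET : ∀ k, E s k = Ta * E' (π s) k * Tbᵀ := by
    intro k
    ext i j
    have h1 := congrFun (congrFun (hSP k) (i, s)) (j, s)
    simp only [S, S', Matrix.mul_apply, blockDiagonal_apply, Fintype.sum_prod_type_right,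
      transpose_apply, if_true, mul_ite, mul_zero] at h1
    rw [h1, Finset.sum_eq_single (π s)]
    · simp only [Matrix.mul_apply, transpose_apply]
      refine Finset.sum_congr rfl fun m _ => ?_
      congr 1
      rw [Finset.sum_eq_single (π s)]
      · simp [Ta]
      · intro t _ ht
        simp [ht]
      · simp
    · intro t _ ht
      refine Finset.sum_eq_zero fun m _ => ?_
      obtain ⟨u, rfl⟩ := π.surjective t
      have hsu : s ≠ u := fun h => ht (by rw [h])
      rw [(hπ u s hsu).2, mul_zero]
    · simp
  -- third mode
  let D3 : Matrix (Fin N) (Fin L × Fin M) ℝ := Matrix.of fun n p => D s p.1 p.2 n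
  let D3' : Matrix (Fin N) (Fin L × Fin M) ℝ := Matrix.of fun n p =>
    ∑ l, ∑ m, D' (π s) l m n * Ta p.1 l * Tb p.2 m
  have hCD : C s * D3 = C' (π s) * D3' := by
    ext k ⟨l, m⟩
    have h1 := congrFun (congrFun (hET k) l) m
    simp only [E, E', Matrix.mul_apply, of_apply, transpose_apply, Finset.mul_sum,
      Finset.sum_mul] at h1
    simp only [Matrix.mul_apply, D3, D3', of_apply, Finset.mul_sum]
    rw [h1]
    simp_rw [Finset.sum_comm (s := (Finset.univ : Finset (Fin N)))]
    rw [Finset.sum_comm]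
    refine Finset.sum_congr rfl fun a _ => Finset.sum_congr rfl fun b _ =>
      Finset.sum_congr rfl fun n _ => by ring
  obtain ⟨Di, hDi⟩ := exists_left_inv_of_inj D3ᵀ (by
    intro v hv
    refine hD s v (fun p => ?_)
    have := congrFun hv p
    simpa [mulVec, dotProduct, D3, mul_comm] using this)
  have hDi' : D3 * Diᵀ = 1 := by
    have := congrArg Matrix.transpose hDi
    simpa [transpose_mul] using this
  have hCs : C s = C' (π s) * (D3' * Diᵀ) := by
    rw [← Matrix.mul_assoc, ← hCD, Matrix.mul_assoc, hDi', Matrix.mul_one]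
  set Ψ := D3' * Diᵀ with hΨ
  have hΨu : IsUnit Ψ.det := by
    rw [isUnit_iff_ne_zero]
    intro h
    obtain ⟨v, hv, h0⟩ := Matrix.exists_mulVec_eq_zero_iff.2 h
    apply hv
    apply hC s
    intro k
    have : C s *ᵥ v = 0 := by rw [hCs, ← mulVec_mulVec, h0]; simp
    exact congrFun this k
  have hCT : C' (π s) = C s * Ψ⁻¹ := by
    rw [hCs, Matrix.mul_assoc, Matrix.mul_nonsing_inv _ hΨu, Matrix.mul_one]
  obtain ⟨Ci, hCi⟩ := exists_left_inv_of_inj (C s) (fun v hv => hC s v (fun i => congrFun hv i))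
  have hD3 : D3 = Ψ⁻¹ * D3' := by
    calc D3 = Ci * (C s * D3) := by rw [← Matrix.mul_assoc, hCi, Matrix.one_mul]
      _ = Ci * C s * (Ψ⁻¹ * D3') := by rw [hCD, hCT]; simp only [Matrix.mul_assoc]
      _ = _ := by rw [hCi, Matrix.one_mul]
  refine ⟨Ta, Tb, Ψ⁻¹, hTa, hTb, ?_, hAT, hBT, hCT, ?_⟩
  · rw [Matrix.isUnit_iff_isUnit_det]
    exact Matrix.isUnit_nonsing_inv_det _ hΨu
  · funext l m n
    have h1 := congrFun (congrFun hD3 n) (l, m)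
    simp only [Matrix.mul_apply, D3, D3', of_apply, Finset.mul_sum] at h1
    simp only [tucker]
    rw [h1]
    simp_rw [Finset.sum_comm (s := (Finset.univ : Finset (Fin N)))]
    refine Finset.sum_congr rfl fun a _ => Finset.sum_congr rfl fun b _ =>
      Finset.sum_congr rfl fun n _ => by ring
end

theorem inj_block_example {R L I : ℕ} (hL : 0 < L) (hI : I ≥ L * R) (v : Fin L × Fin R → ℝ)
    (h : ∀ i : Fin I, ∑ p : Fin L × Fin R,
      (if (i : ℕ) = p.1 + L * p.2 then (1 : ℝ) else 0) * v p = 0) : v = 0 := by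
  funext ⟨l, r⟩
  have hlt : (l : ℕ) + L * r < I := by
    have h1 : L * (r + 1) ≤ L * R := Nat.mul_le_mul_left _ r.2
    have h2 := l.2
    rw [Nat.mul_add] at h1
    omega
  have := h ⟨l + L * r, hlt⟩
  rw [Finset.sum_eq_single (l, r)] at this
  · simpa using this
  · rintro ⟨l', r'⟩ _ hne
    rw [if_neg, zero_mul]
    intro hh
    apply hne
    simp only at hh
    have h1 : (l : ℕ) = l' := by
      have := congrArg (· % L) hh
      simpa [Nat.add_mul_mod_self_left, Nat.mod_eq_of_lt] using this
    have h2 : (r : ℕ) = r' := by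
      rw [h1] at hh
      exact Nat.eq_of_mul_eq_mul_left hL (by omega)
    exact Prod.ext (Fin.ext h1.symm) (Fin.ext h2.symm)
  · simp

abbrev PSpace (R L M N I J K : ℕ) : Type :=
  (Fin R → Fin I → Fin L → ℝ) × (Fin R → Fin J → Fin M → ℝ) ×
    (Fin R → Fin K → Fin N → ℝ) × (Fin R → Fin L → Fin M → Fin N → ℝ)

instance borel_P3 (a b c : ℕ) : BorelSpace (Fin a → Fin b → Fin c → ℝ) :=
  @Pi.borelSpace _ _ _ _ _ (fun _ => inferInstance) (fun _ => inferInstance)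

instance borel_P4 (a b c d : ℕ) : BorelSpace (Fin a → Fin b → Fin c → Fin d → ℝ) :=
  @Pi.borelSpace _ _ _ _ _ (fun _ => inferInstance) (fun _ => borel_P3 b c d)

instance sc3 (a b c : ℕ) : SecondCountableTopology (Fin a → Fin b → Fin c → ℝ) := inferInstance

instance sc4 (a b c d : ℕ) : SecondCountableTopology (Fin a → Fin b → Fin c → Fin d → ℝ) := inferInstance

instance borel_Pr2 (R L M N K : ℕ) : BorelSpace ((Fin R → Fin K → Fin N → ℝ) × (Fin R → Fin L → Fin M → Fin N → ℝ)) := Prod.borelSpace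

instance borel_Pr1 (R L M N J K : ℕ) : BorelSpace ((Fin R → Fin J → Fin M → ℝ) ×
    (Fin R → Fin K → Fin N → ℝ) × (Fin R → Fin L → Fin M → Fin N → ℝ)) := Prod.borelSpace

instance borel_PSpace (R L M N I J K : ℕ) : BorelSpace (PSpace R L M N I J K) := Prod.borelSpace


instance haar_P1 (c : ℕ) : (volume : Measure (Fin c → ℝ)).IsAddHaarMeasure := inferInstance

instance haar_P2 (b c : ℕ) : (volume : Measure (Fin b → Fin c → ℝ)).IsAddHaarMeasure :=
  MeasureTheory.Measure.pi.isAddHaarMeasure (fun _ => volume)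

instance haar_P3 (a b c : ℕ) : (volume : Measure (Fin a → Fin b → Fin c → ℝ)).IsAddHaarMeasure :=
  MeasureTheory.Measure.pi.isAddHaarMeasure (fun _ => volume)

instance sf3 (a b c : ℕ) : SigmaFinite (volume : Measure (Fin a → Fin b → Fin c → ℝ)) := inferInstance

instance haar_P4 (a b c d : ℕ) : (volume : Measure (Fin a → Fin b → Fin c → Fin d → ℝ)).IsAddHaarMeasure := inferInstance

instance sf4 (a b c d : ℕ) : SigmaFinite (volume : Measure (Fin a → Fin b → Fin c → Fin d → ℝ)) := inferInstance

instance haar_Pr2 (R L M N K : ℕ) : (volume : Measure ((Fin R → Fin K → Fin N → ℝ) × (Fin R → Fin L → Fin M → Fin N → ℝ))).IsAddHaarMeasure := Measure.prod.instIsAddHaarMeasure _ _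

instance haar_Pr1 (R L M N J K : ℕ) : (volume : Measure ((Fin R → Fin J → Fin M → ℝ) ×
    (Fin R → Fin K → Fin N → ℝ) × (Fin R → Fin L → Fin M → Fin N → ℝ))).IsAddHaarMeasure := Measure.prod.instIsAddHaarMeasure _ _

instance haar_PSpace (R L M N I J K : ℕ) :
    (volume : Measure (PSpace R L M N I J K)).IsAddHaarMeasure := Measure.prod.instIsAddHaarMeasure _ _

theorem an_A {R L M N I J K : ℕ} (r i l) (x : PSpace R L M N I J K) :
    AnalyticAt ℝ (fun x : PSpace R L M N I J K => x.1 r i l) x :=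
  ((ContinuousLinearMap.proj (R := ℝ) (φ := fun _ : Fin L => ℝ) l).comp
    ((ContinuousLinearMap.proj (R := ℝ) (φ := fun _ : Fin I => Fin L → ℝ) i).comp
    ((ContinuousLinearMap.proj (R := ℝ) (φ := fun _ : Fin R => Fin I → Fin L → ℝ) r).comp
    (ContinuousLinearMap.fst ℝ _ _)))).analyticAt x

theorem an_B {R L M N I J K : ℕ} (r i l) (x : PSpace R L M N I J K) :
    AnalyticAt ℝ (fun x : PSpace R L M N I J K => x.2.1 r i l) x :=
  ((ContinuousLinearMap.proj (R := ℝ) (φ := fun _ : Fin M => ℝ) l).comp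
    ((ContinuousLinearMap.proj (R := ℝ) (φ := fun _ : Fin J => Fin M → ℝ) i).comp
    ((ContinuousLinearMap.proj (R := ℝ) (φ := fun _ : Fin R => Fin J → Fin M → ℝ) r).comp
    ((ContinuousLinearMap.fst ℝ _ _).comp (ContinuousLinearMap.snd ℝ _ _))))).analyticAt x

theorem an_C {R L M N I J K : ℕ} (r i l) (x : PSpace R L M N I J K) :
    AnalyticAt ℝ (fun x : PSpace R L M N I J K => x.2.2.1 r i l) x :=
  ((ContinuousLinearMap.proj (R := ℝ) (φ := fun _ : Fin N => ℝ) l).comp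
    ((ContinuousLinearMap.proj (R := ℝ) (φ := fun _ : Fin K => Fin N → ℝ) i).comp
    ((ContinuousLinearMap.proj (R := ℝ) (φ := fun _ : Fin R => Fin K → Fin N → ℝ) r).comp
    ((ContinuousLinearMap.fst ℝ _ _).comp ((ContinuousLinearMap.snd ℝ _ _).comp
      (ContinuousLinearMap.snd ℝ _ _)))))).analyticAt x

theorem an_D {R L M N I J K : ℕ} (r l m n) (x : PSpace R L M N I J K) :
    AnalyticAt ℝ (fun x : PSpace R L M N I J K => x.2.2.2 r l m n) x :=
  ((ContinuousLinearMap.proj (R := ℝ) (φ := fun _ : Fin N => ℝ) n).comp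
    ((ContinuousLinearMap.proj (R := ℝ) (φ := fun _ : Fin M => Fin N → ℝ) m).comp
    ((ContinuousLinearMap.proj (R := ℝ) (φ := fun _ : Fin L => Fin M → Fin N → ℝ) l).comp
    ((ContinuousLinearMap.proj (R := ℝ) (φ := fun _ : Fin R => Fin L → Fin M → Fin N → ℝ) r).comp
    ((ContinuousLinearMap.snd ℝ _ _).comp ((ContinuousLinearMap.snd ℝ _ _).comp
      (ContinuousLinearMap.snd ℝ _ _))))))).analyticAt x

/-- difference of the two sides of the morphism equation -/
def homEq {R L M N I J K : ℕ} (s t : Fin R) (x : PSpace R L M N I J K)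
    (v : (Fin L → Fin L → ℝ) × (Fin M → Fin M → ℝ)) (k : Fin K) (i : Fin L) (j : Fin M) : ℝ :=
  ∑ i', v.1 i i' * (∑ n, x.2.2.1 t k n * x.2.2.2 t i' j n) -
    ∑ m, (∑ n, x.2.2.1 s k n * x.2.2.2 s i m n) * v.2 m j

theorem homEq_add {R L M N I J K : ℕ} (s t : Fin R) (x : PSpace R L M N I J K) (v w) (k i j) :
    homEq s t x (v + w) k i j = homEq s t x v k i j + homEq s t x w k i j := by
  simp only [homEq, Prod.fst_add, Prod.snd_add, Pi.add_apply, add_mul, mul_add,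
    Finset.sum_add_distrib]
  ring

theorem homEq_smul {R L M N I J K : ℕ} (s t : Fin R) (x : PSpace R L M N I J K) (c : ℝ) (v)
    (k i j) : homEq s t x (c • v) k i j = c * homEq s t x v k i j := by
  simp only [homEq, Prod.smul_fst, Prod.smul_snd, Pi.smul_apply, smul_eq_mul, mul_sub]
  congr 1
  · rw [Finset.mul_sum]
    exact Finset.sum_congr rfl fun _ _ => by ring
  · rw [Finset.mul_sum]
    exact Finset.sum_congr rfl fun _ _ => by ring

theorem homEq_an {R L M N I J K : ℕ} (s t : Fin R) (v) (k i j) (x : PSpace R L M N I J K) :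
    AnalyticAt ℝ (fun x : PSpace R L M N I J K => homEq s t x v k i j) x := by
  unfold homEq
  refine AnalyticAt.fun_sub (Finset.analyticAt_fun_sum _ fun a _ => ?_)
    (Finset.analyticAt_fun_sum _ fun a _ => ?_)
  · exact analyticAt_const.mul (Finset.analyticAt_fun_sum _ fun n _ => (an_C _ _ _ _).mul (an_D _ _ _ _ _))
  · exact (Finset.analyticAt_fun_sum _ fun n _ => (an_C _ _ _ _).mul (an_D _ _ _ _ _)).mul analyticAt_const

theorem ae_good (R L M N I J K : ℕ)
    (hL : 0 < L) (hM : 0 < M)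
    (hI : I ≥ L * R) (hJ : J ≥ M * R) (hK : K ≥ N)
    (hNupper : L * M ≥ N)
    (hNlower : N ≥ max (⌈(L : ℚ) / (M : ℚ)⌉₊ + ⌈(M : ℚ) / (L : ℚ)⌉₊) 3) :
    ∀ᵐ x : PSpace R L M N I J K,
    (∀ v : Fin L × Fin R → ℝ, (∀ i, ∑ p, x.1 p.2 i p.1 * v p = 0) → v = 0) ∧
    (∀ v : Fin M × Fin R → ℝ, (∀ i, ∑ p, x.2.1 p.2 i p.1 * v p = 0) → v = 0) ∧
    (∀ r, ∀ v : Fin N → ℝ, (∀ k, ∑ n, x.2.2.1 r k n * v n = 0) → v = 0) ∧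
    (∀ r, ∀ v : Fin N → ℝ, (∀ p : Fin L × Fin M, ∑ n, v n * x.2.2.2 r p.1 p.2 n = 0) → v = 0) ∧
    (∀ s t, s ≠ t → ∀ (X : Fin L → Fin L → ℝ) (Z : Fin M → Fin M → ℝ),
        (∀ k i j, ∑ i', X i i' * (∑ n, x.2.2.1 t k n * x.2.2.2 t i' j n) =
          ∑ m, (∑ n, x.2.2.1 s k n * x.2.2.2 s i m n) * Z m j) → X = 0 ∧ Z = 0) ∧
    (∀ s, ∀ (X : Fin L → Fin L → ℝ) (Z : Fin M → Fin M → ℝ),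
        (∀ k i j, ∑ i', X i i' * (∑ n, x.2.2.1 s k n * x.2.2.2 s i' j n) =
          ∑ m, (∑ n, x.2.2.1 s k n * x.2.2.2 s i m n) * Z m j) →
        ∃ z : ℝ, X = (fun i j => if i = j then z else 0) ∧
          Z = (fun i j => if i = j then z else 0)) := by
  obtain ⟨D0, hom0, end0⟩ := exists_family L M N hL hM hNlower
  let C0 : Fin R → Fin K → Fin N → ℝ := fun _ k n => if (k : ℕ) = n then 1 else 0
  let x0 : PSpace R L M N I J K :=
    (fun r i l => if (i : ℕ) = l + L * r then 1 else 0,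
     fun r i l => if (i : ℕ) = l + M * r then 1 else 0,
     C0, fun r => D0 r)
  have hC0 : ∀ r (n : Fin N) (f : Fin N → ℝ), ∑ n', C0 r (Fin.castLE hK n) n' * f n' = f n := by
    intro r n f
    rw [Finset.sum_eq_single n]
    · simp [C0]
    · intro b _ hb
      have : (n : ℕ) ≠ b := fun h => hb (Fin.ext h.symm)
      simp [C0, this]
    · simp
  let y0 : PSpace R L M N I J K :=
    (fun r i l => 0, fun r i l => 0, C0,
     fun r l m n => if (n : ℕ) = l * M + m then 1 else 0)
  have a1 := ae_injective (volume : Measure (PSpace R L M N I J K))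
    (fun x (v : Fin L × Fin R → ℝ) (i : Fin I) => ∑ p, x.1 p.2 i p.1 * v p)
    (fun x v w k => by simp [mul_add, Finset.sum_add_distrib])
    (fun x c v k => by simp only [Pi.smul_apply, smul_eq_mul, Finset.mul_sum, mul_left_comm])
    (fun v k x => Finset.analyticAt_fun_sum _ fun p _ => (an_A _ _ _ _).mul analyticAt_const)
    x0 (fun v h => inj_block_example hL hI v h)
  have a2 := ae_injective (volume : Measure (PSpace R L M N I J K))
    (fun x (v : Fin M × Fin R → ℝ) (i : Fin J) => ∑ p, x.2.1 p.2 i p.1 * v p)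
    (fun x v w k => by simp [mul_add, Finset.sum_add_distrib])
    (fun x c v k => by simp only [Pi.smul_apply, smul_eq_mul, Finset.mul_sum, mul_left_comm])
    (fun v k x => Finset.analyticAt_fun_sum _ fun p _ => (an_B _ _ _ _).mul analyticAt_const)
    x0 (fun v h => inj_block_example hM hJ v h)
  have a3 := fun r => ae_injective (volume : Measure (PSpace R L M N I J K))
    (fun x (v : Fin N → ℝ) (k : Fin K) => ∑ n, x.2.2.1 r k n * v n)
    (fun x v w k => by simp [mul_add, Finset.sum_add_distrib])
    (fun x c v k => by simp only [Pi.smul_apply, smul_eq_mul, Finset.mul_sum, mul_left_comm])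
    (fun v k x => Finset.analyticAt_fun_sum _ fun p _ => (an_C _ _ _ _).mul analyticAt_const)
    x0 (fun v h => by
      funext n
      rw [← hC0 r n v]
      exact h (Fin.castLE hK n))
  have a4 := fun r => ae_injective (volume : Measure (PSpace R L M N I J K))
    (fun x (v : Fin N → ℝ) (p : Fin L × Fin M) => ∑ n, v n * x.2.2.2 r p.1 p.2 n)
    (fun x v w k => by simp [add_mul, Finset.sum_add_distrib])
    (fun x c v k => by simp only [Pi.smul_apply, smul_eq_mul, Finset.mul_sum, mul_assoc])
    (fun v k x => Finset.analyticAt_fun_sum _ fun p _ => analyticAt_const.mul (an_D _ _ _ _ _))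
    y0 (fun v h => by
      funext n
      have hlt : (n : ℕ) / M < L := by
        rw [Nat.div_lt_iff_lt_mul hM]; exact lt_of_lt_of_le n.2 hNupper
      have h1 := h (⟨n / M, hlt⟩, ⟨n % M, Nat.mod_lt _ hM⟩)
      simp only [y0, Nat.div_add_mod'] at h1
      rw [Finset.sum_eq_single n] at h1
      · simpa using h1
      · intro b _ hb
        rw [if_neg (fun hh => hb (Fin.ext hh)), mul_zero]
      · simp)
  have hred : ∀ s t v, (∀ k i j, homEq s t x0 v k i j = 0) →
      ∀ n i j, ∑ i', v.1 i i' * D0 t i' j n = ∑ m, D0 s i m n * v.2 m j := by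
    intro s t v h n i j
    have h1 := h (Fin.castLE hK n) i j
    simp only [homEq, x0, hC0] at h1
    exact sub_eq_zero.1 h1
  have a5 := fun (q : {q : Fin R × Fin R // q.1 ≠ q.2}) =>
    ae_injective (volume : Measure (PSpace R L M N I J K))
    (fun x v (p : Fin K × Fin L × Fin M) => homEq q.1.1 q.1.2 x v p.1 p.2.1 p.2.2)
    (fun x v w k => homEq_add _ _ _ _ _ _ _ _)
    (fun x c v k => homEq_smul _ _ _ _ _ _ _ _)
    (fun v k x => homEq_an _ _ _ _ _ _ _)
    x0 (fun v h => by
      have h1 := hom0 q.1.1 q.1.2 (fun hh => q.2 (Fin.ext hh)) v.1 v.2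
        (hred _ _ v fun k i j => h (k, i, j))
      exact Prod.ext h1.1 h1.2)
  let m0 : Fin M := ⟨0, hM⟩
  have a6 := fun s =>
    ae_injective (volume : Measure (PSpace R L M N I J K))
    (fun x v (p : Option (Fin K × Fin L × Fin M)) =>
      match p with
      | none => v.2 m0 m0
      | some p => homEq s s x v p.1 p.2.1 p.2.2)
    (fun x v w k => by
      cases k with
      | none => rfl
      | some k => exact homEq_add _ _ _ _ _ _ _ _)
    (fun x c v k => by
      cases k with
      | none => rfl
      | some k => exact homEq_smul _ _ _ _ _ _ _ _)
    (fun v k x => by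
      cases k with
      | none => exact analyticAt_const
      | some k => exact homEq_an _ _ _ _ _ _ _)
    x0 (fun v h => by
      obtain ⟨z, h1, h2⟩ := end0 s v.1 v.2 (hred _ _ v fun k i j => h (some (k, i, j)))
      have h3 : v.2 m0 m0 = 0 := h none
      have hz : z = 0 := by rw [h2] at h3; simpa using h3
      refine Prod.ext ?_ ?_
      · rw [h1, hz]; funext i j; simp
      · rw [h2, hz]; funext i j; simp)
  filter_upwards [a1, a2, ae_all_iff.2 a3, ae_all_iff.2 a4, ae_all_iff.2 a5, ae_all_iff.2 a6]
    with x b1 b2 b3 b4 b5 b6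
  refine ⟨b1, b2, b3, b4, ?_, ?_⟩
  · intro s t hst X Z h
    have := b5 ⟨(s, t), hst⟩ (X, Z) (fun p => sub_eq_zero.2 (h p.1 p.2.1 p.2.2))
    exact ⟨congrArg Prod.fst this, congrArg Prod.snd this⟩
  · intro s X Z h
    let one : (Fin L → Fin L → ℝ) × (Fin M → Fin M → ℝ) :=
      (fun i j => if i = j then 1 else 0, fun i j => if i = j then 1 else 0)
    have hone : ∀ k i j, homEq s s x one k i j = 0 := by
      intro k i j
      simp [homEq, one]
    have := b6 s ((X, Z) + (-(Z m0 m0)) • one) (by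
      intro p
      cases p with
      | none => simp [one]
      | some p =>
        show homEq s s x _ _ _ _ = 0
        rw [homEq_add, homEq_smul, hone, mul_zero, add_zero]
        exact sub_eq_zero.2 (h p.1 p.2.1 p.2.2))
    refine ⟨Z m0 m0, ?_, ?_⟩
    · funext i j
      have h1 := congrFun (congrFun (congrArg Prod.fst this) i) j
      simp only [one, Prod.fst_add, Prod.smul_fst, Pi.add_apply, Pi.smul_apply, smul_eq_mul, Prod.fst_zero,
        Pi.zero_apply] at h1
      split_ifs at h1 ⊢ <;> linarith
    · funext i j
      have h1 := congrFun (congrFun (congrArg Prod.snd this) i) j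
      simp only [one, Prod.snd_add, Prod.smul_snd, Pi.add_apply, Pi.smul_apply, smul_eq_mul, Prod.snd_zero,
        Pi.zero_apply] at h1
      split_ifs at h1 ⊢ <;> linarith

/-- **Theorem 1 (Identifiability of LMN).** Almost-sure essential uniqueness of the
block-term decomposition with multilinear rank-`(L,M,N)` terms. -/
theorem lmn_essential_uniqueness
    (R L M N I J K : ℕ)
    (hR : 0 < R) (hL : 0 < L) (hM : 0 < M) (hN0 : 0 < N)
    (hI0 : 0 < I) (hJ0 : 0 < J) (hK0 : 0 < K)
    (hI : I ≥ L * R) (hJ : J ≥ M * R) (hK : K ≥ N)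
    (hNupper : L * M ≥ N)
    (hNlower : N ≥ max (⌈(L : ℚ) / (M : ℚ)⌉₊ + ⌈(M : ℚ) / (L : ℚ)⌉₊) 3) :
    ∀ᵐ x : (Fin R → Matrix (Fin I) (Fin L) ℝ) × (Fin R → Matrix (Fin J) (Fin M) ℝ) ×
        (Fin R → Matrix (Fin K) (Fin N) ℝ) × (Fin R → (Fin L → Fin M → Fin N → ℝ))
        ∂volume,
      ∀ (A' : Fin R → Matrix (Fin I) (Fin L) ℝ) (B' : Fin R → Matrix (Fin J) (Fin M) ℝ)
        (C' : Fin R → Matrix (Fin K) (Fin N) ℝ) (D' : Fin R → (Fin L → Fin M → Fin N → ℝ)),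
        (∀ i j k, (∑ r, tucker (x.2.2.2 r) (x.1 r) (x.2.1 r) (x.2.2.1 r) i j k)
            = ∑ r, tucker (D' r) (A' r) (B' r) (C' r) i j k) →
        ∃ π : Equiv.Perm (Fin R), ∀ r : Fin R,
          ∃ (Θa : Matrix (Fin L) (Fin L) ℝ) (Θb : Matrix (Fin M) (Fin M) ℝ)
            (Θc : Matrix (Fin N) (Fin N) ℝ),
            IsUnit Θa ∧ IsUnit Θb ∧ IsUnit Θc ∧
            A' (π r) = x.1 r * Θa ∧
            B' (π r) = x.2.1 r * Θb ∧
            C' (π r) = x.2.2.1 r * Θc ∧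
            tucker (D' (π r)) Θa Θb Θc = x.2.2.2 r := by
  have h := ae_good R L M N I J K hL hM hI hJ hK hNupper hNlower
  have h' : ∀ᵐ x : PSpace R L M N I J K,
      ∀ (A' : Fin R → Matrix (Fin I) (Fin L) ℝ) (B' : Fin R → Matrix (Fin J) (Fin M) ℝ)
        (C' : Fin R → Matrix (Fin K) (Fin N) ℝ) (D' : Fin R → (Fin L → Fin M → Fin N → ℝ)),
        (∀ i j k, (∑ r, tucker (x.2.2.2 r) (x.1 r) (x.2.1 r) (x.2.2.1 r) i j k)
            = ∑ r, tucker (D' r) (A' r) (B' r) (C' r) i j k) →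
        ∃ π : Equiv.Perm (Fin R), ∀ r : Fin R,
          ∃ (Θa : Matrix (Fin L) (Fin L) ℝ) (Θb : Matrix (Fin M) (Fin M) ℝ)
            (Θc : Matrix (Fin N) (Fin N) ℝ),
            IsUnit Θa ∧ IsUnit Θb ∧ IsUnit Θc ∧
            A' (π r) = (show Matrix (Fin I) (Fin L) ℝ from x.1 r) * Θa ∧
            B' (π r) = (show Matrix (Fin J) (Fin M) ℝ from x.2.1 r) * Θb ∧
            C' (π r) = (show Matrix (Fin K) (Fin N) ℝ from x.2.2.1 r) * Θc ∧
            tucker (D' (π r)) Θa Θb Θc = x.2.2.2 r := by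
    filter_upwards [h] with x hx A' B' C' D' heq
    obtain ⟨h1, h2, h3, h4, h5, h6⟩ := hx
    exact det_core hL hM x.1 x.2.1 x.2.2.1 x.2.2.2 h1 h2 h3 h4 h5 h6 A' B' C' D' heq
  exact h'
end

section
/- Recoverability with unknown spatial degradation operators (Theorem 3). Let R, L, M, N and dimensions I_M, J_M, K_H, I_H, J_H, K_M be positive integers with K_M ≥ 2·N, I_H ≥ L·R, J_H ≥ M·R, I_M ≥ L·R, J_M ≥ M·R, and L·M ≥ N ≥ max(⌈L/M⌉ + ⌈M/L⌉, 3). Let P₁ ∈ ℝ^{I_H×I_M}, P₂ ∈ ℝ^{J_H×J_M}, and P_M ∈ ℝ^{K_M×K_H} be fixed matrices of full row rank. Then for Lebesgue-almost every tuple of ground-truth factors (A_r ∈ ℝ^{I_M×L}, B_r ∈ ℝ^{J_M×M}, C_r ∈ ℝ^{K_H×N}, D_r ∈ ℝ^{L×M×N}), r = 1,…,R, the following holds. Define Y_S = Σ_r D_r ×₁ A_r ×₂ B_r ×₃ C_r, Y_H = Σ_r D_r ×₁ (P₁·A_r) ×₂ (P₂·B_r) ×₃ C_r, and Y_M = Σ_r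 D_r ×₁ A_r ×₂ B_r ×₃ (P_M·C_r). For every tuple (Ã_r ∈ ℝ^{I_H×L}, B̃_r ∈ ℝ^{J_H×M}, A*_r ∈ ℝ^{I_M×L}, B*_r ∈ ℝ^{J_M×M}, C*_r ∈ ℝ^{K_H×N}, D*_r ∈ ℝ^{L×M×N}), r = 1,…,R, satisfying both Y_H = Σ_r D*_r ×₁ Ã_r ×₂ B̃_r ×₃ C*_r and Y_M = Σ_r D*_r ×₁ A*_r ×₂ B*_r ×₃ (P_M·C*_r), one has Σ_r D*_r ×₁ A*_r ×₂ B*_r ×₃ C*_r = Y_S. -/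
open MeasureTheory

theorem ae_injective_aux {E V W : Type*} [NormedAddCommGroup E] [NormedSpace ℝ E]
    [FiniteDimensional ℝ E] [MeasurableSpace E] [BorelSpace E] (ν : Measure E) [ν.IsAddHaarMeasure]
    [AddCommGroup V] [Module ℝ V] [FiniteDimensional ℝ V] [AddCommGroup W] [Module ℝ W]
    (T : E →ₗ[ℝ] V →ₗ[ℝ] W) (x0 : E) (h0 : ∀ v, T x0 v = 0 → v = 0) :
    ∀ᵐ x ∂ν, ∀ v, T x v = 0 → v = 0 := by
  classical
  obtain ⟨G, hG⟩ := (T x0).exists_leftInverse_of_injective (LinearMap.ker_eq_bot'.2 h0)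
  let b := Module.finBasis ℝ V
  let Φ : E →ₗ[ℝ] Matrix (Fin (Module.finrank ℝ V)) (Fin (Module.finrank ℝ V)) ℝ :=
    (LinearMap.toMatrix b b).toLinearMap ∘ₗ (LinearMap.llcomp ℝ V W V G) ∘ₗ T
  have hΦ : ∀ x, Φ x = LinearMap.toMatrix b b (G ∘ₗ T x) := fun x => rfl
  have hΦ0 : Φ x0 = 1 := by rw [hΦ, hG]; exact LinearMap.toMatrix_id b
  have hc : Continuous fun x => (Φ x).det :=
    Continuous.matrix_det (LinearMap.continuous_of_finiteDimensional Φ)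
  have hs : MeasurableSet {x : E | (Φ x).det ≠ 0} :=
    (isOpen_ne_fun hc continuous_const).measurableSet
  have := ae_mem_of_ae_add_linearMap_mem (E := ℝ) (F := E) (LinearMap.toSpanSingleton ℝ E x0) volume ν hs ?_
  · filter_upwards [this] with x hx v hv
    have h1 : (Φ x).mulVec (b.repr v) = 0 := by
      rw [hΦ, LinearMap.toMatrix_mulVec_repr]
      simp [hv]
    have h2 := Matrix.eq_zero_of_mulVec_eq_zero hx h1
    exact b.repr.map_eq_zero_iff.1 (by ext i; simpa using congrFun h2 i)
  · intro y
    have hfin : {t : ℝ | ¬ (y + (LinearMap.toSpanSingleton ℝ E x0) t ∈ {x : E | (Φ x).det ≠ 0})}.Finite := by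
      refine Set.Finite.subset (Polynomial.finite_setOfPred_isRoot (p := (-(Φ y)).charpoly) (Matrix.charpoly_monic _).ne_zero) ?_
      intro t ht
      simp only [Set.mem_ofPred_eq, not_not, LinearMap.toSpanSingleton_apply, map_add, map_smul, hΦ0] at ht ⊢
      rw [Polynomial.IsRoot, Matrix.eval_charpoly, ← ht, sub_neg_eq_add, add_comm, Matrix.smul_one_eq_diagonal]
      rfl
    exact hfin.countable.ae_notMem volume |>.mono (fun t ht => by simpa using ht)

def tslice {L M N : ℕ} (D : Fin L → Fin M → Fin N → ℝ) (n : Fin N) : Matrix (Fin L) (Fin M) ℝ :=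
  Matrix.of fun l m => D l m n

def Brick {L M N : ℕ} (D : Fin L → Fin M → Fin N → ℝ) : Prop :=
  ∀ (X : Matrix (Fin L) (Fin L) ℝ) (Y : Matrix (Fin M) (Fin M) ℝ),
    (∀ n, X * tslice D n = tslice D n * Y) → ∃ c : ℝ, X = c • 1 ∧ Y = c • 1

theorem brick_eq (L N : ℕ) (hL : 0 < L) (hN : 3 ≤ N) :
    ∃ D : Fin L → Fin L → Fin N → ℝ, Brick D := by
  refine ⟨fun l m n => if n.1 = 0 then (if l = m then 1 else 0) else if n.1 = 1 then
    (if l = m then (l.1 : ℝ) else 0) else (if m.1 = 0 then 1 else 0), ?_⟩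
  intro X Y h
  have e0 : X = Y := by
    ext l m
    have := congrFun (congrFun (h ⟨0, by omega⟩) l) m
    simpa [Matrix.mul_apply, tslice] using this
  subst e0
  have e1 : ∀ l m, l ≠ m → X l m = 0 := by
    intro l m hlm
    have := congrFun (congrFun (h ⟨1, by omega⟩) l) m
    simp [Matrix.mul_apply, tslice] at this
    have h3 : ((m.1 : ℝ) - l.1) ≠ 0 := by
      rw [sub_ne_zero, Ne, Nat.cast_inj]; exact fun hh => hlm (Fin.ext hh.symm)
    have h4 : X l m * ((m.1 : ℝ) - l.1) = 0 := by linarith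
    exact (mul_eq_zero.1 h4).resolve_right h3
  have e2 : ∀ l, X l l = X ⟨0, hL⟩ ⟨0, hL⟩ := by
    intro l
    have := congrFun (congrFun (h ⟨2, by omega⟩) l) ⟨0, hL⟩
    simp [Matrix.mul_apply, tslice] at this
    rw [Finset.sum_eq_single l (fun b _ hb => e1 _ _ (Ne.symm hb)) (by simp)] at this
    rw [this, Finset.sum_eq_single (⟨0, hL⟩ : Fin L)]
    · simp
    · intro b _ hb
      rw [if_neg]; intro hh; exact hb (Fin.ext hh)
    · simp
  have : X = X ⟨0, hL⟩ ⟨0, hL⟩ • 1 := by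
    ext l m
    by_cases hlm : l = m
    · subst hlm; simp [e2 l]
    · simp [e1 l m hlm, hlm]
  exact ⟨_, this, this⟩

theorem brick_lt (L M N : ℕ) (hL : 0 < L) (hN : 3 ≤ N) (hLM : L < M) (hM : M ≤ L * (N - 1)) :
    ∃ D : Fin L → Fin M → Fin N → ℝ, Brick D := by
  refine ⟨fun l m n => if n.1 = N - 1 then (if m.1 = l.1 then (l.1 : ℝ) else if m.1 = L then 1 else 0)
    else (if m.1 = L * n.1 + l.1 then 1 else 0), ?_⟩
  intro X Y h
  have star : ∀ m m' : Fin M, Y m m' = ∑ l', X ⟨m.1 % L, Nat.mod_lt _ hL⟩ l' *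
      (if m'.1 = L * (m.1 / L) + l'.1 then 1 else 0) := by
    intro m m'
    have hb : m.1 / L < N - 1 := by
      rw [Nat.div_lt_iff_lt_mul hL, mul_comm]; exact lt_of_lt_of_le m.2 hM
    have := congrFun (congrFun (h ⟨m.1 / L, by omega⟩) ⟨m.1 % L, Nat.mod_lt _ hL⟩) m'
    simp only [Matrix.mul_apply, tslice, Matrix.of_apply, if_neg hb.ne, Nat.div_add_mod] at this
    rw [this, Finset.sum_eq_single m]
    · simp
    · intro b _ hb
      rw [if_neg, zero_mul]; exact fun hh => hb (Fin.ext hh)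
    · simp
  have s1 : ∀ l m : Fin L, Y ⟨l.1, by omega⟩ ⟨m.1, by omega⟩ = X l m := by
    intro l m
    rw [star, Finset.sum_eq_single m]
    · simp [Nat.mod_eq_of_lt l.2, Nat.div_eq_of_lt l.2]
    · intro b _ hb
      rw [if_neg, mul_zero]; simp only [Nat.div_eq_of_lt l.2]; intro hh; apply hb; apply Fin.ext; omega
    · simp
  have s2 : ∀ l : Fin L, Y ⟨l.1, by omega⟩ ⟨L, hLM⟩ = 0 := by
    intro l
    rw [star]
    refine Finset.sum_eq_zero fun b _ => ?_
    rw [if_neg, mul_zero]; simp only [Nat.div_eq_of_lt l.2]; have := b.2; omega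
  have s3 : ∀ m : Fin L, Y ⟨L, hLM⟩ ⟨m.1, by omega⟩ = 0 := by
    intro m
    rw [star]
    refine Finset.sum_eq_zero fun b _ => ?_
    rw [if_neg, mul_zero]; simp only [Nat.div_self hL]; have := m.2; omega
  have s4 : Y ⟨L, hLM⟩ ⟨L, hLM⟩ = X ⟨0, hL⟩ ⟨0, hL⟩ := by
    rw [star, Finset.sum_eq_single ⟨0, hL⟩]
    · simp [Nat.div_self hL]
    · intro b _ hb
      rw [if_neg, mul_zero]; simp only [Nat.div_self hL]; intro hh; apply hb; apply Fin.ext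
      simp only; omega
    · simp
  have rhs : ∀ (l : Fin L) (m : Fin M), (∑ m' : Fin M, (if m'.1 = l.1 then (l.1 : ℝ) else
      if m'.1 = L then 1 else 0) * Y m' m) = l.1 * Y ⟨l.1, by omega⟩ m + Y ⟨L, hLM⟩ m := by
    intro l m
    have hne : (⟨l.1, by omega⟩ : Fin M) ≠ ⟨L, hLM⟩ := by simp; omega
    rw [← Finset.sum_subset (Finset.subset_univ {⟨l.1, by omega⟩, ⟨L, hLM⟩}), Finset.sum_pair hne]
    · have := l.2
      simp [this.ne']
    · intro b _ hb
      simp only [Finset.mem_insert, Finset.mem_singleton, not_or, Fin.ext_iff] at hb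
      simp [hb.1, hb.2]
  have hT : ∀ (l : Fin L) (m : Fin M), (∑ l', X l l' * (if m.1 = l'.1 then (l'.1 : ℝ) else
      if m.1 = L then 1 else 0)) = l.1 * Y ⟨l.1, by omega⟩ m + Y ⟨L, hLM⟩ m := by
    intro l m
    have := congrFun (congrFun (h ⟨N - 1, by omega⟩) l) m
    simp only [Matrix.mul_apply, tslice, Matrix.of_apply, if_true] at this
    rw [this, rhs]
  have e1 : ∀ l m, l ≠ m → X l m = 0 := by
    intro l m hlm
    have := hT l ⟨m.1, by omega⟩
    rw [s1, s3, Finset.sum_eq_single m] at this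
    · simp at this
      have h3 : ((m.1 : ℝ) - l.1) ≠ 0 := by
        rw [sub_ne_zero, Ne, Nat.cast_inj]; exact fun hh => hlm (Fin.ext hh.symm)
      have h4 : X l m * ((m.1 : ℝ) - l.1) = 0 := by linarith
      exact (mul_eq_zero.1 h4).resolve_right h3
    · intro b _ hb
      rw [if_neg, if_neg, mul_zero]
      · have := m.2; simp only; omega
      · intro hh; exact hb (Fin.ext hh.symm)
    · simp
  have e2 : ∀ l, X l l = X ⟨0, hL⟩ ⟨0, hL⟩ := by
    intro l
    have := hT l ⟨L, hLM⟩
    rw [s2, s4, Finset.sum_eq_single l] at this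
    · rw [if_neg (by simp only; have := l.2; omega)] at this
      simpa using this
    · intro b _ hb
      rw [e1 _ _ (Ne.symm hb), zero_mul]
    · simp
  have hX : X = X ⟨0, hL⟩ ⟨0, hL⟩ • 1 := by
    ext l m
    by_cases hlm : l = m
    · subst hlm; simp [e2 l]
    · simp [e1 l m hlm, hlm]
  refine ⟨_, hX, ?_⟩
  ext m m'
  rw [star, Finset.sum_eq_single ⟨m.1 % L, Nat.mod_lt _ hL⟩]
  · simp [e2 ⟨m.1 % L, Nat.mod_lt _ hL⟩, Nat.div_add_mod, Matrix.one_apply, Fin.ext_iff, eq_comm]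
  · intro b _ hb
    rw [e1 _ _ (Ne.symm hb), zero_mul]
  · simp

theorem Brick.transpose {L M N : ℕ} {D : Fin L → Fin M → Fin N → ℝ} (h : Brick D) :
    Brick (fun m l n => D l m n) := by
  intro X Y hXY
  obtain ⟨c, h1, h2⟩ := h Y.transpose X.transpose (fun n => by
    have := congrArg Matrix.transpose (hXY n)
    rw [Matrix.transpose_mul, Matrix.transpose_mul] at this
    exact this.symm)
  refine ⟨c, ?_, ?_⟩
  · rw [← X.transpose_transpose, h2]; simp
  · rw [← Y.transpose_transpose, h1]; simp

theorem brick_exists (L M N : ℕ) (hL : 0 < L) (hM : 0 < M)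
    (hN : N ≥ max (⌈(L : ℚ) / (M : ℚ)⌉₊ + ⌈(M : ℚ) / (L : ℚ)⌉₊) 3) :
    ∃ D : Fin L → Fin M → Fin N → ℝ, Brick D := by
  have hN3 : 3 ≤ N := le_trans (le_max_right _ _) hN
  have hNc := le_trans (le_max_left _ _) hN
  have key : ∀ a b : ℕ, 0 < a → 0 < b → ⌈(b : ℚ) / (a : ℚ)⌉₊ + 1 ≤ N → b ≤ a * (N - 1) := by
    intro a b ha hb h
    have h1 : (b : ℚ) / a ≤ ((N - 1 : ℕ) : ℚ) := by
      refine (Nat.le_ceil _).trans ?_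
      exact_mod_cast (by omega)
    rw [div_le_iff₀ (by exact_mod_cast ha)] at h1
    rw [mul_comm]; exact_mod_cast h1
  have p1 : 0 < ⌈(L : ℚ) / (M : ℚ)⌉₊ := Nat.ceil_pos.2 (by positivity)
  have p2 : 0 < ⌈(M : ℚ) / (L : ℚ)⌉₊ := Nat.ceil_pos.2 (by positivity)
  rcases lt_trichotomy L M with h | h | h
  · exact brick_lt L M N hL hN3 h (key L M hL hM (by omega))
  · subst h; exact brick_eq L N hL hN3
  · obtain ⟨D, hD⟩ := brick_lt M L N hM hN3 h (key M L hM hL (by omega))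
    exact ⟨_, hD.transpose⟩

def bigA {κ : Type} {I L : ℕ} (A : κ → Matrix (Fin I) (Fin L) ℝ) :
    Matrix (Fin I) (κ × Fin L) ℝ := Matrix.of fun i p => A p.1 i p.2

def Ind {κ : Type} [Fintype κ] {K N : ℕ} (C : κ → Matrix (Fin K) (Fin N) ℝ) : Prop :=
  ∀ v : κ → Fin N → ℝ, (∀ i, ∑ a, ∑ n, C a i n * v a n = 0) → v = 0

def bigT {R L M N K : ℕ} (D : Fin R → Fin L → Fin M → Fin N → ℝ)
    (C : Fin R → Matrix (Fin K) (Fin N) ℝ) (k : Fin K) :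
    Matrix (Fin R × Fin L) (Fin R × Fin M) ℝ :=
  Matrix.of fun p q => if p.1 = q.1 then ∑ n, D p.1 p.2 q.2 n * C p.1 k n else 0

theorem Ind.leftInv {κ : Type} [Fintype κ] [DecidableEq κ] {K N : ℕ}
    {C : κ → Matrix (Fin K) (Fin N) ℝ} (h : Ind C) :
    ∃ G : Matrix (κ × Fin N) (Fin K) ℝ, G * bigA C = 1 := by
  classical
  obtain ⟨g, hg⟩ := (Matrix.toLin' (bigA C)).exists_leftInverse_of_injective
    (LinearMap.ker_eq_bot'.2 (by
      intro v hv
      have := h (fun a n => v (a, n)) (by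
        intro i
        have := congrFun hv i
        simp only [Matrix.toLin'_apply, Matrix.mulVec, dotProduct, Fintype.sum_prod_type, bigA,
          Matrix.of_apply] at this
        exact this)
      ext p
      exact congrFun (congrFun this p.1) p.2))
  refine ⟨LinearMap.toMatrix' g, ?_⟩
  rw [← LinearMap.toMatrix'_toLin' (bigA C), ← LinearMap.toMatrix'_comp, hg, LinearMap.toMatrix'_id]

theorem sum_tucker {R L M N I J K : ℕ} (D : Fin R → Fin L → Fin M → Fin N → ℝ)
    (A : Fin R → Matrix (Fin I) (Fin L) ℝ) (B : Fin R → Matrix (Fin J) (Fin M) ℝ)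
    (C : Fin R → Matrix (Fin K) (Fin N) ℝ) (i : Fin I) (j : Fin J) (k : Fin K) :
    ∑ r, tucker (D r) (A r) (B r) (C r) i j k
      = (bigA A * bigT D C k * (bigA B).transpose) i j := by
  simp only [Matrix.mul_apply, bigA, bigT, Matrix.of_apply, Matrix.transpose_apply,
    Fintype.sum_prod_type, tucker, mul_ite, mul_zero]
  refine Finset.sum_congr rfl fun r _ => ?_
  rw [Finset.sum_comm]
  refine Finset.sum_congr rfl fun m _ => ?_
  rw [Finset.sum_eq_single r]
  · simp only [if_true, Finset.mul_sum, Finset.sum_mul]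
    refine Finset.sum_congr rfl fun m _ => Finset.sum_congr rfl fun n _ => by ring
  · intro b _ hb
    simp [hb]
  · simp

theorem Brick.left {L M N : ℕ} (hL : 0 < L) (hM : 0 < M) {D : Fin L → Fin M → Fin N → ℝ}
    (h : Brick D) (v : Fin L → ℝ) (hv : ∀ n m, ∑ l, v l * D l m n = 0) : v = 0 := by
  obtain ⟨c, h1, h2⟩ := h (Matrix.of fun _ l => v l) 0 (by
    intro n
    ext l m
    simp [Matrix.mul_apply, tslice, hv])
  have hc : c = 0 := by
    have := congrFun (congrFun h2 ⟨0, hM⟩) ⟨0, hM⟩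
    simpa using this.symm
  ext l
  have := congrFun (congrFun h1 l) l
  simpa [hc] using this

theorem bigT_mul_left {R L M N K : ℕ} {m : Type} (D : Fin R → Fin L → Fin M → Fin N → ℝ)
    (C : Fin R → Matrix (Fin K) (Fin N) ℝ) (k : Fin K) (Z : Matrix m (Fin R × Fin L) ℝ)
    (i : m) (q : Fin R × Fin M) :
    (Z * bigT D C k) i q = ∑ n, C q.1 k n * ∑ l, Z i (q.1, l) * D q.1 l q.2 n := by
  simp only [Matrix.mul_apply, bigT, Matrix.of_apply, Fintype.sum_prod_type, mul_ite, mul_zero]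
  rw [Finset.sum_eq_single q.1]
  · simp only [if_true, Finset.mul_sum]
    rw [Finset.sum_comm]
    refine Finset.sum_congr rfl fun m _ => Finset.sum_congr rfl fun n _ => by ring
  · intro b _ hb
    simp [hb]
  · simp

theorem bigT_mul_right {R L M N K : ℕ} {m : Type} (D : Fin R → Fin L → Fin M → Fin N → ℝ)
    (C : Fin R → Matrix (Fin K) (Fin N) ℝ) (k : Fin K) (Z : Matrix (Fin R × Fin M) m ℝ)
    (p : Fin R × Fin L) (i : m) :
    (bigT D C k * Z) p i = ∑ n, C p.1 k n * ∑ l, D p.1 p.2 l n * Z (p.1, l) i := by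
  simp only [Matrix.mul_apply, bigT, Matrix.of_apply, Fintype.sum_prod_type, ite_mul, zero_mul]
  rw [Finset.sum_eq_single p.1]
  · simp only [if_true, Finset.mul_sum, Finset.sum_mul]
    rw [Finset.sum_comm]
    refine Finset.sum_congr rfl fun m _ => Finset.sum_congr rfl fun n _ => by ring
  · intro b _ hb
    simp [hb.symm]
  · simp

theorem bigT_transpose {R L M N K : ℕ} (D : Fin R → Fin L → Fin M → Fin N → ℝ)
    (C : Fin R → Matrix (Fin K) (Fin N) ℝ) (k : Fin K) :
    (bigT D C k).transpose = bigT (fun r m l n => D r l m n) C k := by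
  ext p q
  by_cases h : q.1 = p.1
  · simp [bigT, h]
  · simp [bigT, h, Ne.symm h]

theorem bigT_left {R L M N K : ℕ} {m : Type} (hL : 0 < L) (hM : 0 < M)
    {D : Fin R → Fin L → Fin M → Fin N → ℝ} {C : Fin R → Matrix (Fin K) (Fin N) ℝ}
    (hD : ∀ r, Brick (D r)) (hC : ∀ r (u : Fin N → ℝ), (∀ k, ∑ n, C r k n * u n = 0) → u = 0)
    (Z : Matrix m (Fin R × Fin L) ℝ) (hZ : ∀ k, Z * bigT D C k = 0) : Z = 0 := by
  ext i ⟨r, l⟩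
  have := (hD r).left hL hM (fun l => Z i (r, l)) (by
    intro n b
    refine congrFun (hC r (fun n => ∑ l, Z i (r, l) * D r l b n) (fun k => ?_)) n
    rw [← bigT_mul_left D C k Z i (r, b), hZ]; rfl)
  exact congrFun this l

theorem bigT_endo {R L M N K : ℕ} (hL : 0 < L) (hM : 0 < M)
    {D : Fin R → Fin L → Fin M → Fin N → ℝ} {C : Fin R → Matrix (Fin K) (Fin N) ℝ}
    (hD : ∀ r, Brick (D r)) (hC : ∀ r (u : Fin N → ℝ), (∀ k, ∑ n, C r k n * u n = 0) → u = 0)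
    (hC2 : ∀ r s, r ≠ s → ∀ u w : Fin N → ℝ,
      (∀ k, ∑ n, C r k n * u n + ∑ n, C s k n * w n = 0) → u = 0 ∧ w = 0)
    (P : Matrix (Fin R × Fin L) (Fin R × Fin L) ℝ) (Q : Matrix (Fin R × Fin M) (Fin R × Fin M) ℝ)
    (h : ∀ k, P * bigT D C k = bigT D C k * Q) :
    ∃ c : Fin R → ℝ, P = Matrix.diagonal (fun p => c p.1) ∧ Q = Matrix.diagonal (fun p => c p.1) := by
  have key : ∀ k (p : Fin R × Fin L) (q : Fin R × Fin M),
      ∑ n, C q.1 k n * ∑ l, P p (q.1, l) * D q.1 l q.2 n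
        = ∑ n, C p.1 k n * ∑ l, D p.1 p.2 l n * Q (p.1, l) q := by
    intro k p q
    rw [← bigT_mul_left, ← bigT_mul_right, h]
  have hdiag : ∀ r, ∃ c : ℝ, (Matrix.of fun l l' => P (r, l) (r, l')) = c • (1 : Matrix (Fin L) (Fin L) ℝ) ∧
      (Matrix.of fun l l' => Q (r, l) (r, l')) = c • (1 : Matrix (Fin M) (Fin M) ℝ) := by
    intro r
    apply hD r
    intro n
    ext l m
    have := hC r (fun n => ∑ l', P (r, l) (r, l') * D r l' m n - ∑ l', D r l l' n * Q (r, l') (r, m)) (by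
      intro k
      have := key k (r, l) (r, m)
      simp only [mul_sub, Finset.sum_sub_distrib]
      rw [this, sub_self])
    have := congrFun this n
    simp only [Pi.zero_apply, sub_eq_zero] at this
    simpa [Matrix.mul_apply, tslice] using this
  have hoff : ∀ r s, r ≠ s → (∀ l m n, ∑ l', P (r, l) (s, l') * D s l' m n = 0) ∧
      (∀ l m n, ∑ l', D r l l' n * Q (r, l') (s, m) = 0) := by
    intro r s hrs
    have : ∀ l m, _ := fun l m => hC2 s r hrs.symm (fun n => ∑ l', P (r, l) (s, l') * D s l' m n)
      (fun n => - ∑ l', D r l l' n * Q (r, l') (s, m)) (by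
      intro k
      have := key k (r, l) (s, m)
      simp only [mul_neg, Finset.sum_neg_distrib]
      rw [this]; simp)
    refine ⟨fun l m n => congrFun (this l m).1 n, fun l m n => ?_⟩
    have := congrFun (this l m).2 n
    simpa using this
  choose c hc using hdiag
  refine ⟨c, ?_, ?_⟩
  · ext ⟨r, l⟩ ⟨s, l'⟩
    by_cases hrs : r = s
    · subst hrs
      have := congrFun (congrFun (hc r).1 l) l'
      simp only [Matrix.of_apply] at this
      rw [this]
      by_cases hl : l = l'
      · subst hl; simp
      · simp [hl]
    · rw [Matrix.diagonal_apply_ne _ (by simp [hrs])]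
      exact congrFun ((hD s).left hL hM (fun l' => P (r, l) (s, l')) (fun n m => (hoff r s hrs).1 l m n)) l'
  · ext ⟨r, l⟩ ⟨s, l'⟩
    by_cases hrs : r = s
    · subst hrs
      have := congrFun (congrFun (hc r).2 l) l'
      simp only [Matrix.of_apply] at this
      rw [this]
      by_cases hl : l = l'
      · subst hl; simp
      · simp [hl]
    · rw [Matrix.diagonal_apply_ne _ (by simp [hrs])]
      refine congrFun ((hD r).transpose.left hM hL (fun l => Q (r, l) (s, l')) (fun n m => ?_)) l
      rw [← (hoff r s hrs).2 m l' n]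
      exact Finset.sum_congr rfl fun _ _ => mul_comm _ _

theorem half_unit {ι κ κ' : Type} {K : ℕ} [Fintype ι] [DecidableEq ι] [Fintype κ] [Fintype κ']
    (T : Fin K → Matrix ι κ ℝ) (S : Fin K → Matrix ι κ' ℝ) (X : Matrix ι ι ℝ) (W : Matrix κ' κ ℝ)
    (hT : ∀ Z : Matrix Unit ι ℝ, (∀ k, Z * T k = 0) → Z = 0)
    (h : ∀ k, T k = X * S k * W) : IsUnit X.det := by
  rw [isUnit_iff_ne_zero]
  intro hdet
  obtain ⟨v, hv, hv0⟩ := Matrix.exists_vecMul_eq_zero_iff.2 hdet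
  apply hv
  have hZ : (Matrix.of fun (_ : Unit) i => v i) * X = 0 := by
    ext u i
    exact congrFun hv0 i
  have := hT (Matrix.of fun (_ : Unit) i => v i) (fun k => by
    rw [h, ← Matrix.mul_assoc, ← Matrix.mul_assoc, hZ]; simp)
  ext i
  exact congrFun (congrFun this ()) i

theorem half_eq {ι κ κ' μ : Type} {K : ℕ} [Fintype ι] [DecidableEq ι] [Fintype κ] [Fintype κ']
    (T : Fin K → Matrix ι κ ℝ) (S : Fin K → Matrix ι κ' ℝ) (X : Matrix ι ι ℝ) (W : Matrix κ' κ ℝ)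
    (A A' : Matrix μ ι ℝ)
    (hT : ∀ Z : Matrix μ ι ℝ, (∀ k, Z * T k = 0) → Z = 0)
    (h : ∀ k, T k = X * S k * W) (hX : IsUnit X.det)
    (hA : ∀ k, A * T k = A' * S k * W) : A' = A * X := by
  have := hT ((A * X - A') * X⁻¹) (fun k => by
    have e : (A * X - A') * X⁻¹ * T k = A * T k - A' * S k * W := by
      rw [h]
      calc (A * X - A') * X⁻¹ * (X * S k * W) = (A * X - A') * (X⁻¹ * X) * S k * W := by
            simp only [Matrix.mul_assoc]
        _ = _ := by
            rw [Matrix.nonsing_inv_mul _ hX, Matrix.mul_one, Matrix.sub_mul, Matrix.sub_mul]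
            simp only [Matrix.mul_assoc]
    rw [e, hA, sub_self])
  have h2 := congrArg (· * X) this
  simp only [Matrix.mul_assoc, Matrix.nonsing_inv_mul _ hX, Matrix.mul_one, Matrix.zero_mul] at h2
  exact (sub_eq_zero.1 h2).symm

theorem idem_sum_one {R : ℕ} (c : Fin R → ℝ) (h : ∀ s, c s * c s = c s) (h1 : ∑ s, c s = 1) :
    ∃ t, ∀ s, c s = if s = t then 1 else 0 := by
  have h01 : ∀ s, c s = 0 ∨ c s = 1 := fun s => by
    have : c s * (c s - 1) = 0 := by rw [mul_sub, h, mul_one, sub_self]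
    rcases mul_eq_zero.1 this with h | h
    · exact Or.inl h
    · exact Or.inr (sub_eq_zero.1 h)
  have : ∃ t, c t ≠ 0 := by
    by_contra! hh
    simp [hh] at h1
  obtain ⟨t, ht⟩ := this
  have ht1 := (h01 t).resolve_left ht
  refine ⟨t, fun s => ?_⟩
  split_ifs with hs
  · rw [hs, ht1]
  · rw [← Finset.add_sum_erase _ _ (Finset.mem_univ t), ht1] at h1
    have h0 : ∑ x ∈ Finset.univ.erase t, c x = 0 := by linarith
    rw [Finset.sum_eq_zero_iff_of_nonneg (fun i _ => by rcases h01 i with h | h <;> simp [h])] at h0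
    exact h0 s (by simp [hs])

theorem core {R L M N I J K : ℕ} (hL : 0 < L) (hM : 0 < M)
    {D : Fin R → Fin L → Fin M → Fin N → ℝ} {A : Fin R → Matrix (Fin I) (Fin L) ℝ}
    {B : Fin R → Matrix (Fin J) (Fin M) ℝ} {C : Fin R → Matrix (Fin K) (Fin N) ℝ}
    (hA : Ind A) (hB : Ind B)
    (hD : ∀ r, Brick (D r)) (hC : ∀ r (u : Fin N → ℝ), (∀ k, ∑ n, C r k n * u n = 0) → u = 0)
    (hC2 : ∀ r s, r ≠ s → ∀ u w : Fin N → ℝ,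
      (∀ k, ∑ n, C r k n * u n + ∑ n, C s k n * w n = 0) → u = 0 ∧ w = 0)
    (D' : Fin R → Fin L → Fin M → Fin N → ℝ) (A' : Fin R → Matrix (Fin I) (Fin L) ℝ)
    (B' : Fin R → Matrix (Fin J) (Fin M) ℝ) (C' : Fin R → Matrix (Fin K) (Fin N) ℝ)
    (h : ∀ i j k, ∑ r, tucker (D r) (A r) (B r) (C r) i j k
      = ∑ r, tucker (D' r) (A' r) (B' r) (C' r) i j k) :
    ∃ π : Fin R → Fin R, Function.Injective π ∧ ∃ (X : Fin R → Matrix (Fin L) (Fin L) ℝ)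
      (Y : Fin R → Matrix (Fin M) (Fin M) ℝ),
      (∀ r, A' r = A (π r) * X r) ∧ (∀ r, B' r = B (π r) * Y r) ∧
      ∀ r l m k, ∑ n, C' r k n * (∑ m', ∑ l', X r l l' * D' r l' m' n * Y r m m')
        = ∑ n, C (π r) k n * D (π r) l m n := by
  classical
  obtain ⟨GA, hGA⟩ := hA.leftInv
  obtain ⟨GB, hGB⟩ := hB.leftInv
  have hE : ∀ k, bigA A * bigT D C k * (bigA B).transpose
      = bigA A' * bigT D' C' k * (bigA B').transpose := by
    intro k; ext i j; rw [← sum_tucker, ← sum_tucker, h]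
  obtain ⟨X, hX⟩ : ∃ X, X = GA * bigA A' := ⟨_, rfl⟩
  obtain ⟨Y, hY⟩ : ∃ Y, Y = GB * bigA B' := ⟨_, rfl⟩
  have hGBt : (bigA B).transpose * GB.transpose = 1 := by
    rw [← Matrix.transpose_mul, hGB, Matrix.transpose_one]
  have hYt : Y.transpose = (bigA B').transpose * GB.transpose := by
    rw [hY, Matrix.transpose_mul]
  have hAT : ∀ k, bigA A * bigT D C k = bigA A' * bigT D' C' k * Y.transpose := by
    intro k
    have := congrArg (· * GB.transpose) (hE k)
    simp only [Matrix.mul_assoc, hGBt, Matrix.mul_one] at this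
    rw [this, hYt]; simp only [Matrix.mul_assoc]
  have hTB : ∀ k, bigT D C k * (bigA B).transpose = X * bigT D' C' k * (bigA B').transpose := by
    intro k
    have := congrArg (GA * ·) (hE k)
    simp only [← Matrix.mul_assoc, hGA, Matrix.one_mul] at this
    rw [this, hX]
  have hT : ∀ k, bigT D C k = X * bigT D' C' k * Y.transpose := by
    intro k
    have := congrArg (GA * ·) (hAT k)
    simp only [← Matrix.mul_assoc, hGA, Matrix.one_mul] at this
    rw [this, hX]
  have hTt : ∀ k, (bigT D C k).transpose = Y * (bigT D' C' k).transpose * X.transpose := by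
    intro k
    rw [hT]; simp [Matrix.transpose_mul, Matrix.mul_assoc]
  have kerL : ∀ {m : Type} (Z : Matrix m (Fin R × Fin L) ℝ), (∀ k, Z * bigT D C k = 0) → Z = 0 :=
    fun Z hZ => bigT_left hL hM hD hC Z hZ
  have kerR : ∀ {m : Type} (Z : Matrix m (Fin R × Fin M) ℝ),
      (∀ k, Z * (bigT D C k).transpose = 0) → Z = 0 := by
    intro m Z hZ
    refine bigT_left hM hL (fun r => (hD r).transpose) hC Z (fun k => ?_)
    rw [← bigT_transpose]; exact hZ k
  have uX : IsUnit X.det := half_unit _ _ X _ kerL hT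
  have uY : IsUnit Y.det := half_unit _ _ Y _ kerR hTt
  have uYt : IsUnit Y.transpose.det := by rwa [Matrix.det_transpose]
  have eA : bigA A' = bigA A * X := half_eq _ _ X _ _ _ kerL hT uX hAT
  have eB : bigA B' = bigA B * Y := half_eq _ _ Y _ _ _ kerR hTt uY (fun k => by
    have := congrArg Matrix.transpose (hTB k)
    simpa [Matrix.transpose_mul, Matrix.mul_assoc] using this)
  let E : Fin R → Matrix (Fin R × Fin L) (Fin R × Fin L) ℝ :=
    fun r => Matrix.diagonal fun p => if p.1 = r then 1 else 0
  let F : Fin R → Matrix (Fin R × Fin M) (Fin R × Fin M) ℝ :=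
    fun r => Matrix.diagonal fun p => if p.1 = r then 1 else 0
  have hEF : ∀ r k, E r * bigT D' C' k = bigT D' C' k * F r := by
    intro r k
    ext p q
    simp only [E, F, Matrix.diagonal_mul, Matrix.mul_diagonal, bigT, Matrix.of_apply]
    by_cases hpq : p.1 = q.1
    · simp [hpq]
    · simp [hpq]
  have hEE : ∀ r, E r * E r = E r := by
    intro r
    simp [E, Matrix.diagonal_mul_diagonal]
  have hend : ∀ r, ∃ c : Fin R → ℝ, X * E r * X⁻¹ = Matrix.diagonal (fun p => c p.1) ∧
      (Y.transpose)⁻¹ * F r * Y.transpose = Matrix.diagonal (fun p => c p.1) := by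
    intro r
    refine bigT_endo hL hM hD hC hC2 _ _ (fun k => ?_)
    rw [hT]
    calc X * E r * X⁻¹ * (X * bigT D' C' k * Y.transpose)
        = X * E r * (X⁻¹ * X) * bigT D' C' k * Y.transpose := by simp only [Matrix.mul_assoc]
      _ = X * (E r * bigT D' C' k) * Y.transpose := by
          rw [Matrix.nonsing_inv_mul _ uX, Matrix.mul_one]; simp only [Matrix.mul_assoc]
      _ = X * bigT D' C' k * (Y.transpose * (Y.transpose)⁻¹) * F r * Y.transpose := by
          rw [hEF, Matrix.mul_nonsing_inv _ uYt, Matrix.mul_one]; simp only [Matrix.mul_assoc]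
      _ = _ := by simp only [Matrix.mul_assoc]
  choose c hcX hcY using hend
  have hcπ : ∀ r, ∃ t, ∀ s, c r s = if s = t then 1 else 0 := by
    intro r
    apply idem_sum_one
    · intro s
      have : (X * E r * X⁻¹) * (X * E r * X⁻¹) = X * E r * X⁻¹ := by
        calc (X * E r * X⁻¹) * (X * E r * X⁻¹) = X * E r * (X⁻¹ * X) * E r * X⁻¹ := by
              simp only [Matrix.mul_assoc]
          _ = X * (E r * E r) * X⁻¹ := by
              rw [Matrix.nonsing_inv_mul _ uX, Matrix.mul_one]; simp only [Matrix.mul_assoc]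
          _ = _ := by rw [hEE]
      rw [hcX, Matrix.diagonal_mul_diagonal] at this
      have := congrFun (congrFun this (s, ⟨0, hL⟩)) (s, ⟨0, hL⟩)
      simpa using this
    · have : Matrix.trace (X * E r * X⁻¹) = Matrix.trace (E r) := by
        rw [Matrix.trace_mul_comm, ← Matrix.mul_assoc, Matrix.nonsing_inv_mul _ uX, Matrix.one_mul]
      rw [hcX] at this
      simp only [E, Matrix.trace_diagonal, Fintype.sum_prod_type, Finset.sum_const, Finset.card_univ,
        Fintype.card_fin, nsmul_eq_mul, ← Finset.mul_sum] at this
      have hL' : (L : ℝ) ≠ 0 := by exact_mod_cast hL.ne'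
      have h3 : (L : ℝ) * ∑ i, c r i = (L : ℝ) * 1 := by
        rw [this, Finset.sum_comm]; simp
      exact mul_left_cancel₀ hL' h3
  choose π hπ using hcπ
  have XE : ∀ r, X * E r = Matrix.diagonal (fun p => c r p.1) * X := by
    intro r
    rw [← hcX, Matrix.mul_assoc, Matrix.nonsing_inv_mul _ uX, Matrix.mul_one]
  have FY : ∀ r, F r * Y.transpose = Y.transpose * Matrix.diagonal (fun p => c r p.1) := by
    intro r
    rw [← hcY, ← Matrix.mul_assoc, ← Matrix.mul_assoc, Matrix.mul_nonsing_inv _ uYt, Matrix.one_mul]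
  have X0 : ∀ r s l l', s ≠ π r → X (s, l) (r, l') = 0 := by
    intro r s l l' hs
    have := congrFun (congrFun (XE r) (s, l)) (r, l')
    simpa [E, Matrix.mul_diagonal, Matrix.diagonal_mul, hπ, hs] using this
  have Y0 : ∀ r s l l', s ≠ π r → Y (s, l) (r, l') = 0 := by
    intro r s l l' hs
    have := congrFun (congrFun (FY r) (r, l')) (s, l)
    simpa [F, Matrix.mul_diagonal, Matrix.diagonal_mul, hπ, hs] using this
  have hinj : Function.Injective π := by
    intro r s hrs
    have hc : c r = c s := by ext t; rw [hπ, hπ, hrs]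
    have : X * E r = X * E s := by rw [XE, XE, hc]
    have := congrArg (X⁻¹ * ·) this
    simp only [← Matrix.mul_assoc, Matrix.nonsing_inv_mul _ uX, Matrix.one_mul] at this
    have := congrFun (congrFun this (r, ⟨0, hL⟩)) (r, ⟨0, hL⟩)
    by_contra hne
    simp [E, hne] at this
  refine ⟨π, hinj, fun r => Matrix.of fun l l' => X (π r, l) (r, l'),
    fun r => Matrix.of fun l l' => Y (π r, l) (r, l'), ?_, ?_, ?_⟩
  · intro r
    ext i l
    have := congrFun (congrFun eA i) (r, l)
    simp only [bigA, Matrix.of_apply, Matrix.mul_apply, Fintype.sum_prod_type] at this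
    rw [this, Finset.sum_eq_single (π r)]
    · simp [Matrix.mul_apply]
    · intro b _ hb
      simp [X0 r b _ _ hb]
    · simp
  · intro r
    ext i l
    have := congrFun (congrFun eB i) (r, l)
    simp only [bigA, Matrix.of_apply, Matrix.mul_apply, Fintype.sum_prod_type] at this
    rw [this, Finset.sum_eq_single (π r)]
    · simp [Matrix.mul_apply]
    · intro b _ hb
      simp [Y0 r b _ _ hb]
    · simp
  · intro r l m k
    have := congrFun (congrFun (hT k) (π r, l)) (π r, m)
    rw [Matrix.mul_apply, Fintype.sum_prod_type, Finset.sum_eq_single r] at this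
    · simp only [bigT_mul_left, Matrix.transpose_apply] at this
      simp only [bigT, Matrix.of_apply, if_true] at this
      simp only [Matrix.of_apply]
      rw [Finset.sum_congr rfl (fun n _ => mul_comm (C (π r) k n) _), this]
      simp only [Finset.mul_sum, Finset.sum_mul]
      rw [Finset.sum_comm]
      refine Finset.sum_congr rfl fun m' _ => Finset.sum_congr rfl fun n _ =>
        Finset.sum_congr rfl fun l' _ => by ring
    · intro b _ hb
      simp [Y0 b (π r) _ _ (fun hh => hb (hinj hh).symm)]
    · simp

theorem mat_leftInv {m n : Type} [Fintype m] [Fintype n] [DecidableEq m] [DecidableEq n]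
    (A : Matrix m n ℝ) (h : ∀ v, A.mulVec v = 0 → v = 0) : ∃ G : Matrix n m ℝ, G * A = 1 := by
  obtain ⟨g, hg⟩ := (Matrix.toLin' A).exists_leftInverse_of_injective
    (LinearMap.ker_eq_bot'.2 (by
      intro v hv
      exact h v hv))
  refine ⟨LinearMap.toMatrix' g, ?_⟩
  rw [← LinearMap.toMatrix'_toLin' A, ← LinearMap.toMatrix'_comp, hg, LinearMap.toMatrix'_id]

theorem colspan {L M N K : ℕ} (C C' : Matrix (Fin K) (Fin N) ℝ)
    (D W : Fin L → Fin M → Fin N → ℝ)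
    (hC : ∀ u : Fin N → ℝ, (∀ k, ∑ n, C k n * u n = 0) → u = 0)
    (hD : ∀ z : Fin N → ℝ, (∀ l m, ∑ n, D l m n * z n = 0) → z = 0)
    (h : ∀ l m k, ∑ n, C' k n * W l m n = ∑ n, C k n * D l m n) :
    ∃ Z : Matrix (Fin N) (Fin N) ℝ, C' = C * Z := by
  classical
  let DD : Matrix (Fin L × Fin M) (Fin N) ℝ := Matrix.of fun p n => D p.1 p.2 n
  let WW : Matrix (Fin L × Fin M) (Fin N) ℝ := Matrix.of fun p n => W p.1 p.2 n
  obtain ⟨G, hG⟩ := mat_leftInv DD (fun v hv => hD v (fun l m => congrFun hv (l, m)))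
  have e : C' * WW.transpose = C * DD.transpose := by
    ext k p
    simpa [Matrix.mul_apply, DD, WW] using h p.1 p.2 k
  have hG' : DD.transpose * G.transpose = 1 := by
    rw [← Matrix.transpose_mul, hG, Matrix.transpose_one]
  have e2 : C = C' * (WW.transpose * G.transpose) := by
    rw [← Matrix.mul_assoc, e, Matrix.mul_assoc, hG', Matrix.mul_one]
  have hu : IsUnit (WW.transpose * G.transpose).det := by
    rw [isUnit_iff_ne_zero]
    intro hdet
    obtain ⟨v, hv, hv0⟩ := Matrix.exists_mulVec_eq_zero_iff.2 hdet
    apply hv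
    apply hC
    intro k
    have : C.mulVec v = 0 := by rw [e2, ← Matrix.mulVec_mulVec, hv0, Matrix.mulVec_zero]
    exact congrFun this k
  refine ⟨(WW.transpose * G.transpose)⁻¹, ?_⟩
  conv_rhs => rw [e2]
  rw [Matrix.mul_assoc, Matrix.mul_nonsing_inv _ hu, Matrix.mul_one]

theorem tucker_mul {L M N I J K : ℕ} (D : Fin L → Fin M → Fin N → ℝ)
    (A : Matrix (Fin I) (Fin L) ℝ) (B : Matrix (Fin J) (Fin M) ℝ) (C : Matrix (Fin K) (Fin N) ℝ)
    (X : Matrix (Fin L) (Fin L) ℝ) (Y : Matrix (Fin M) (Fin M) ℝ) (i : Fin I) (j : Fin J) (k : Fin K) :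
    tucker D (A * X) (B * Y) C i j k = ∑ l, ∑ m, A i l * B j m *
      ∑ n, C k n * ∑ m', ∑ l', X l l' * D l' m' n * Y m m' := by
  have e1 : tucker D (A * X) (B * Y) C i j k = ∑ p : Fin L × Fin M × Fin N × Fin M × Fin L,
      D p.1 p.2.1 p.2.2.1 * (A i p.2.2.2.2 * X p.2.2.2.2 p.1) *
        (B j p.2.2.2.1 * Y p.2.2.2.1 p.2.1) * C k p.2.2.1 := by
    simp only [Fintype.sum_prod_type, tucker, Matrix.mul_apply, Finset.mul_sum, Finset.sum_mul]
  rw [e1]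
  simp only [Finset.mul_sum]
  have e2 : (∑ l, ∑ m, ∑ n, ∑ m', ∑ l', A i l * B j m * (C k n * (X l l' * D l' m' n * Y m m')))
    = ∑ p : Fin L × Fin M × Fin N × Fin M × Fin L, A i p.1 * B j p.2.1 * (C k p.2.2.1 *
      (X p.1 p.2.2.2.2 * D p.2.2.2.2 p.2.2.2.1 p.2.2.1 * Y p.2.1 p.2.2.2.1)) := by
    simp only [Fintype.sum_prod_type]
  rw [e2]
  refine Finset.sum_nbij' (fun p => (p.2.2.2.2, p.2.2.2.1, p.2.2.1, p.2.1, p.1))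
    (fun p => (p.2.2.2.2, p.2.2.2.1, p.2.2.1, p.2.1, p.1)) ?_ ?_ ?_ ?_ ?_
  · simp
  · simp
  · simp
  · simp
  · intro p _
    ring

theorem tucker_eq {L M N I J K : ℕ} (D : Fin L → Fin M → Fin N → ℝ)
    (A : Matrix (Fin I) (Fin L) ℝ) (B : Matrix (Fin J) (Fin M) ℝ) (C : Matrix (Fin K) (Fin N) ℝ)
    (i : Fin I) (j : Fin J) (k : Fin K) :
    tucker D A B C i j k = ∑ l, ∑ m, A i l * B j m * ∑ n, C k n * D l m n := by
  simp only [tucker, Finset.mul_sum]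
  exact Finset.sum_congr rfl fun _ _ => Finset.sum_congr rfl fun _ _ =>
    Finset.sum_congr rfl fun _ _ => by ring

theorem Ind.of_mul {κ : Type} [Fintype κ] {I I' L : ℕ} (P : Matrix (Fin I') (Fin I) ℝ)
    {A : κ → Matrix (Fin I) (Fin L) ℝ} (h : Ind (fun r => P * A r)) : Ind A := by
  intro v hv
  apply h
  intro i
  have : ∀ a, ∑ n, (P * A a) i n * v a n = ∑ j, P i j * ∑ n, A a j n * v a n := by
    intro a
    simp only [Matrix.mul_apply, Finset.sum_mul, Finset.mul_sum, mul_assoc]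
    rw [Finset.sum_comm]
  simp only [this]
  rw [Finset.sum_comm]
  simp only [← Finset.mul_sum, hv, mul_zero, Finset.sum_const_zero]

theorem Ind.single {I L : ℕ} {A : Matrix (Fin I) (Fin L) ℝ} (h : Ind (fun _ : Fin 1 => A))
    (u : Fin L → ℝ) (hu : ∀ k, ∑ n, A k n * u n = 0) : u = 0 :=
  congrFun (h (fun _ => u) (by simpa using hu)) 0

theorem Ind.pair {I L : ℕ} {A B : Matrix (Fin I) (Fin L) ℝ} (h : Ind ![A, B])
    (u w : Fin L → ℝ) (hu : ∀ k, ∑ n, A k n * u n + ∑ n, B k n * w n = 0) : u = 0 ∧ w = 0 := by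
  have := h ![u, w] (by simpa [Fin.sum_univ_two] using hu)
  exact ⟨congrFun this 0, congrFun this 1⟩

theorem deterministic {R L M N IM JM KH IH JH KM : ℕ} (hL : 0 < L) (hM : 0 < M) (hN : 0 < N)
    (P₁ : Matrix (Fin IH) (Fin IM) ℝ) (P₂ : Matrix (Fin JH) (Fin JM) ℝ)
    (PM : Matrix (Fin KM) (Fin KH) ℝ)
    {D : Fin R → Fin L → Fin M → Fin N → ℝ} {A : Fin R → Matrix (Fin IM) (Fin L) ℝ}
    {B : Fin R → Matrix (Fin JM) (Fin M) ℝ} {C : Fin R → Matrix (Fin KH) (Fin N) ℝ}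
    (hA : Ind (fun r => P₁ * A r)) (hB : Ind (fun r => P₂ * B r))
    (hD : ∀ r, Brick (D r))
    (hD3 : ∀ r (z : Fin N → ℝ), (∀ l m, ∑ n, D r l m n * z n = 0) → z = 0)
    (hC : ∀ r, Ind (fun _ : Fin 1 => PM * C r))
    (hC2 : ∀ r s, r ≠ s → Ind (fun a : Fin 2 => PM * C (![r, s] a)))
    (At : Fin R → Matrix (Fin IH) (Fin L) ℝ) (Bt : Fin R → Matrix (Fin JH) (Fin M) ℝ)
    (A' : Fin R → Matrix (Fin IM) (Fin L) ℝ) (B' : Fin R → Matrix (Fin JM) (Fin M) ℝ)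
    (C' : Fin R → Matrix (Fin KH) (Fin N) ℝ) (D' : Fin R → (Fin L → Fin M → Fin N → ℝ))
    (hH : ∀ i j k, (∑ r, tucker (D r) (P₁ * A r) (P₂ * B r) (C r) i j k)
            = ∑ r, tucker (D' r) (At r) (Bt r) (C' r) i j k)
    (hMS : ∀ i j k, (∑ r, tucker (D r) (A r) (B r) (PM * C r) i j k)
            = ∑ r, tucker (D' r) (A' r) (B' r) (PM * C' r) i j k) :
    ∀ i j k, (∑ r, tucker (D' r) (A' r) (B' r) (C' r) i j k)
            = ∑ r, tucker (D r) (A r) (B r) (C r) i j k := by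
  have fin2 : ∀ {K : ℕ} (G : Fin R → Matrix (Fin K) (Fin N) ℝ) (r s : Fin R),
      (fun a : Fin 2 => G (![r, s] a)) = ![G r, G s] := by
    intro K G r s; ext a; fin_cases a <;> rfl
  have pC := fun r => (hC r).single
  have pC2 : ∀ r s, r ≠ s → _ := fun r s hrs => Ind.pair (fin2 (fun r => PM * C r) r s ▸ hC2 r s hrs)
  have qC := fun r => ((hC r).of_mul PM).single
  have qC2 : ∀ r s, r ≠ s → _ := fun r s hrs => Ind.pair (fin2 C r s ▸ (hC2 r s hrs).of_mul PM)
  obtain ⟨π, hπ, X, Y, eA, eB, e1⟩ := core hL hM (hA.of_mul P₁) (hB.of_mul P₂) hD pC pC2 _ _ _ _ hMS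
  obtain ⟨σ, -, X2, Y2, -, -, e2⟩ := core hL hM hA hB hD qC qC2 _ _ _ _ hH
  have key : ∀ r l m k, ∑ n, C' r k n * (∑ m', ∑ l', X r l l' * D' r l' m' n * Y r m m')
        = ∑ n, C (π r) k n * D (π r) l m n := by
    intro r
    obtain ⟨W, hW⟩ := colspan (PM * C (π r)) (PM * C' r) _ _ (pC (π r)) (hD3 (π r)) (e1 r)
    obtain ⟨Z, hZ⟩ := colspan (C (σ r)) (C' r) _ _ (qC (σ r)) (hD3 (σ r)) (e2 r)
    have hσ : σ r = π r := by
      by_contra hne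
      have hZ0 : Z = 0 := by
        ext a b
        have := pC2 _ _ hne (fun a => Z a b) (fun a => - W a b) (by
          intro k
          have : ((PM * C (σ r)) * Z) k b = ((PM * C (π r)) * W) k b := by
            rw [Matrix.mul_assoc, ← hZ, hW]
          rw [Matrix.mul_apply, Matrix.mul_apply] at this
          rw [this]; simp)
        exact congrFun this.1 a
      have hD0 : ∀ l m, D (π r) l m = 0 := by
        intro l m
        apply pC (π r)
        intro k
        rw [← e1 r l m k, hZ, hZ0]
        simp
      have := hD3 (π r) (fun _ => 1) (by intro l m; simp [hD0])
      simpa using congrFun this ⟨0, hN⟩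
    rw [hσ] at hZ
    have hDZ : ∀ l m, (fun n => ∑ n', Z n n' * ∑ m', ∑ l', X r l l' * D' r l' m' n' * Y r m m')
        - D (π r) l m = 0 := by
      intro l m
      apply pC (π r)
      intro k
      have := e1 r l m k
      rw [hZ, ← Matrix.mul_assoc] at this
      simp only [Pi.sub_apply, mul_sub, Finset.sum_sub_distrib, sub_eq_zero]
      rw [← this]
      simp only [Matrix.mul_apply (M := PM * C (π r)), Finset.sum_mul]
      rw [Finset.sum_comm]
      refine Finset.sum_congr rfl fun n _ => ?_
      rw [Finset.mul_sum]
      exact Finset.sum_congr rfl fun n' _ => by ring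
    intro l m k
    have h3 := sub_eq_zero.1 (hDZ l m)
    rw [← h3, hZ]
    simp only [Matrix.mul_apply, Finset.sum_mul]
    rw [Finset.sum_comm]
    refine Finset.sum_congr rfl fun n _ => ?_
    rw [Finset.mul_sum]
    exact Finset.sum_congr rfl fun n' _ => by ring
  intro i j k
  have hb : Function.Bijective π := Finite.injective_iff_bijective.1 hπ
  rw [← hb.sum_comp (fun r => tucker (D r) (A r) (B r) (C r) i j k)]
  refine Finset.sum_congr rfl fun r _ => ?_
  rw [eA, eB, tucker_mul, tucker_eq]
  simp only [key]

section aepart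
variable {E : Type*} [NormedAddCommGroup E] [NormedSpace ℝ E]
    [FiniteDimensional ℝ E] [MeasurableSpace E] [BorelSpace E] (ν : Measure E) [ν.IsAddHaarMeasure]

theorem rightInv_of_rank {m n : ℕ} (P : Matrix (Fin m) (Fin n) ℝ) (h : P.rank = m) :
    ∃ H : Matrix (Fin n) (Fin m) ℝ, P * H = 1 := by
  have hs : Function.Surjective P.mulVecLin := by
    rw [← LinearMap.range_eq_top]
    apply Submodule.eq_top_of_finrank_eq
    rw [← Matrix.rank, h]; simp
  obtain ⟨g, hg⟩ := P.mulVecLin.exists_rightInverse_of_surjective (LinearMap.range_eq_top.2 hs)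
  refine ⟨LinearMap.toMatrix' g, ?_⟩
  have := congrArg LinearMap.toMatrix' hg
  rw [LinearMap.toMatrix'_comp, LinearMap.toMatrix'_id] at this
  rwa [← Matrix.toLin'_apply', LinearMap.toMatrix'_toLin'] at this

theorem ae_ind {R I I' L : ℕ} {κ : Type} [Fintype κ]
    (φ : E →ₗ[ℝ] (Fin R → Matrix (Fin I) (Fin L) ℝ)) (hφ : Function.Surjective φ)
    (P : Matrix (Fin I') (Fin I) ℝ) (hP : P.rank = I') (g : κ → Fin R) (hg : Function.Injective g)
    (hcard : Fintype.card κ * L ≤ I') :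
    ∀ᵐ x ∂ν, Ind (fun a => P * φ x (g a)) := by
  classical
  let T : E →ₗ[ℝ] (κ → Fin L → ℝ) →ₗ[ℝ] (Fin I' → ℝ) :=
    LinearMap.mk₂ ℝ (fun x v i => ∑ a, ∑ n, (P * φ x (g a)) i n * v a n)
      (by intro x y v; ext i
          simp [Matrix.mul_add, add_mul, Finset.sum_add_distrib])
      (by intro c x v; ext i
          simp [Finset.mul_sum, mul_assoc])
      (by intro x v w; ext i
          simp [mul_add, Finset.sum_add_distrib])
      (by intro c x v; ext i
          simp only [Pi.smul_apply, smul_eq_mul, Finset.mul_sum]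
          exact Finset.sum_congr rfl fun _ _ => Finset.sum_congr rfl fun _ _ => by ring)
  obtain ⟨H, hH⟩ := rightInv_of_rank P hP
  obtain ⟨e⟩ : Nonempty (κ × Fin L ↪ Fin I') :=
    Function.Embedding.nonempty_of_card_le (by simpa using hcard)
  let Φ : κ → Matrix (Fin I') (Fin L) ℝ := fun a => Matrix.of fun i l => if i = e (a, l) then 1 else 0
  obtain ⟨x0, hx0⟩ := hφ (fun r => if h : ∃ a, g a = r then H * Φ h.choose else 0)
  have hx0' : ∀ a, P * φ x0 (g a) = Φ a := by
    intro a
    have h : ∃ b, g b = g a := ⟨a, rfl⟩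
    rw [hx0]
    simp only [dif_pos h]
    rw [hg h.choose_spec, ← Matrix.mul_assoc, hH, Matrix.one_mul]
  have := ae_injective_aux ν T x0 (by
    intro v hv
    ext a l
    have := congrFun hv (e (a, l))
    simp only [T, LinearMap.mk₂_apply, hx0', Φ, Matrix.of_apply, e.apply_eq_iff_eq] at this
    rw [Finset.sum_eq_single a, Finset.sum_eq_single l] at this
    · simpa using this
    · intro b _ hb; simp [hb.symm]
    · simp
    · intro b _ hb; simp [hb.symm]
    · simp)
  filter_upwards [this] with x hx v hv
  exact hx v (funext hv)

theorem ae_brick {L M N : ℕ} (hL : 0 < L)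
    (φ : E →ₗ[ℝ] (Fin L → Fin M → Fin N → ℝ)) (hφ : Function.Surjective φ)
    (hex : ∃ D : Fin L → Fin M → Fin N → ℝ, Brick D) :
    ∀ᵐ x ∂ν, Brick (φ x) := by
  let V : Submodule ℝ (Matrix (Fin L) (Fin L) ℝ × Matrix (Fin M) (Fin M) ℝ) :=
    { carrier := {p | p.1 ⟨0, hL⟩ ⟨0, hL⟩ = 0}
      add_mem' := by
        intro a b ha hb
        have ha' : a.1 ⟨0, hL⟩ ⟨0, hL⟩ = 0 := ha
        have hb' : b.1 ⟨0, hL⟩ ⟨0, hL⟩ = 0 := hb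
        change (a.1 + b.1) _ _ = 0
        rw [Matrix.add_apply, ha', hb', add_zero]
      zero_mem' := rfl
      smul_mem' := by
        intro c a ha
        have ha' : a.1 ⟨0, hL⟩ ⟨0, hL⟩ = 0 := ha
        change (c • a.1) _ _ = 0
        rw [Matrix.smul_apply, ha', smul_zero] }
  have hadd : ∀ x y n, tslice (φ (x + y)) n = tslice (φ x) n + tslice (φ y) n := by
    intro x y n; ext l m; simp [tslice]
  have hsm : ∀ (c : ℝ) x n, tslice (φ (c • x)) n = c • tslice (φ x) n := by
    intro c x n; ext l m; simp [tslice]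
  let T : E →ₗ[ℝ] V →ₗ[ℝ] (Fin N → Matrix (Fin L) (Fin M) ℝ) :=
    LinearMap.mk₂ ℝ (fun x v n => v.1.1 * tslice (φ x) n - tslice (φ x) n * v.1.2)
      (by intro x y v; ext1 n
          simp only [hadd, Matrix.mul_add, Matrix.add_mul, Pi.add_apply]; abel)
      (by intro c x v; ext1 n
          simp only [hsm, Matrix.mul_smul, Matrix.smul_mul, Pi.smul_apply, smul_sub])
      (by intro x v w; ext1 n
          simp only [Submodule.coe_add, Prod.fst_add, Prod.snd_add, Matrix.mul_add, Matrix.add_mul,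
            Pi.add_apply]; abel)
      (by intro c x v; ext1 n
          simp only [Submodule.coe_smul, Prod.smul_fst, Prod.smul_snd, Matrix.mul_smul,
            Matrix.smul_mul, Pi.smul_apply, smul_sub])
  obtain ⟨D, hD⟩ := hex
  obtain ⟨x0, hx0⟩ := hφ D
  have := ae_injective_aux ν T x0 (by
    intro v hv
    obtain ⟨c, h1, h2⟩ := hD v.1.1 v.1.2 (fun n => by
      have := congrFun hv n
      simp only [T, LinearMap.mk₂_apply, hx0] at this
      exact sub_eq_zero.1 this)
    have h0 : v.1.1 ⟨0, hL⟩ ⟨0, hL⟩ = 0 := v.2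
    have hc : c = 0 := by
      rw [h1] at h0
      simpa using h0
    rw [hc, zero_smul] at h1 h2
    exact Subtype.ext (Prod.ext h1 h2))
  filter_upwards [this] with x hx X Y hXY
  let c := X ⟨0, hL⟩ ⟨0, hL⟩
  have hm : (X - c • 1, Y - c • 1) ∈ V := by
    change (X - c • (1 : Matrix (Fin L) (Fin L) ℝ)) ⟨0, hL⟩ ⟨0, hL⟩ = 0
    simp [c]
  have := hx ⟨_, hm⟩ (by
    ext1 n
    simp only [T, LinearMap.mk₂_apply, Matrix.sub_mul, Matrix.mul_sub, hXY n]
    simp)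
  have h' := congrArg Subtype.val this
  exact ⟨c, sub_eq_zero.1 (congrArg Prod.fst h'), sub_eq_zero.1 (congrArg Prod.snd h')⟩

theorem ae_mode3 {L M N : ℕ} (hN : N ≤ L * M)
    (φ : E →ₗ[ℝ] (Fin L → Fin M → Fin N → ℝ)) (hφ : Function.Surjective φ) :
    ∀ᵐ x ∂ν, ∀ z : Fin N → ℝ, (∀ l m, ∑ n, φ x l m n * z n = 0) → z = 0 := by
  classical
  let T : E →ₗ[ℝ] (Fin N → ℝ) →ₗ[ℝ] (Fin L → Fin M → ℝ) :=
    LinearMap.mk₂ ℝ (fun x z l m => ∑ n, φ x l m n * z n)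
      (by intro x y v; ext l m
          simp [add_mul, Finset.sum_add_distrib])
      (by intro c x v; ext l m
          simp [Finset.mul_sum, mul_assoc])
      (by intro x v w; ext l m
          simp [mul_add, Finset.sum_add_distrib])
      (by intro c x v; ext l m
          simp only [Pi.smul_apply, smul_eq_mul, Finset.mul_sum]
          exact Finset.sum_congr rfl fun _ _ => by ring)
  obtain ⟨e⟩ : Nonempty (Fin N ↪ Fin L × Fin M) :=
    Function.Embedding.nonempty_of_card_le (by simpa using hN)
  obtain ⟨x0, hx0⟩ := hφ (fun l m n => if e n = (l, m) then 1 else 0)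
  have := ae_injective_aux ν T x0 (by
    intro v hv
    ext n
    have := congrFun (congrFun hv (e n).1) (e n).2
    simpa [T, LinearMap.mk₂_apply, hx0] using this)
  filter_upwards [this] with x hx z hz
  exact hx z (by ext l m; exact hz l m)

end aepart

abbrev Esp (R L M N IM JM KH : ℕ) : Type := (Fin R → Fin IM → Fin L → ℝ) ×
  (Fin R → Fin JM → Fin M → ℝ) × (Fin R → Fin KH → Fin N → ℝ) ×
    (Fin R → (Fin L → Fin M → Fin N → ℝ))

theorem borel4 (R L M N : ℕ) : BorelSpace (Fin R → Fin L → Fin M → Fin N → ℝ) := by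
  have h : BorelSpace (Fin L → Fin M → Fin N → ℝ) := inferInstance
  exact Pi.borelSpace

theorem haar3 (R L M : ℕ) :
    (volume : Measure (Fin R → Fin L → Fin M → ℝ)).IsAddHaarMeasure := by
  have h0 : (volume : Measure (Fin M → ℝ)).IsAddHaarMeasure := Measure.pi.isAddHaarMeasure _
  have h1 : (volume : Measure (Fin L → Fin M → ℝ)).IsAddHaarMeasure :=
    Measure.pi.isAddHaarMeasure _
  have h2 : BorelSpace (Fin L → Fin M → ℝ) := inferInstance
  exact Measure.pi.isAddHaarMeasure _

theorem haar4 (R L M N : ℕ) :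
    (volume : Measure (Fin R → Fin L → Fin M → Fin N → ℝ)).IsAddHaarMeasure := by
  have h1 := haar3 L M N
  have h2 : BorelSpace (Fin L → Fin M → Fin N → ℝ) := inferInstance
  exact Measure.pi.isAddHaarMeasure _

instance espBorel (R L M N IM JM KH : ℕ) : BorelSpace (Esp R L M N IM JM KH) := by
  have h0 := borel4 R L M N
  have h1 : BorelSpace ((Fin R → Fin KH → Fin N → ℝ) × (Fin R → (Fin L → Fin M → Fin N → ℝ))) :=
    Prod.borelSpace
  have h2 : BorelSpace ((Fin R → Fin JM → Fin M → ℝ) × (Fin R → Fin KH → Fin N → ℝ) ×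
    (Fin R → (Fin L → Fin M → Fin N → ℝ))) := Prod.borelSpace
  exact Prod.borelSpace

instance espHaar (R L M N IM JM KH : ℕ) :
    (volume : Measure (Esp R L M N IM JM KH)).IsAddHaarMeasure := by
  have b0 := borel4 R L M N
  have b1 : BorelSpace ((Fin R → Fin KH → Fin N → ℝ) × (Fin R → (Fin L → Fin M → Fin N → ℝ))) :=
    Prod.borelSpace
  have a1 := haar3 R IM L
  have a2 := haar3 R JM M
  have a3 := haar3 R KH N
  have a4 := haar4 R L M N
  have h1 : (volume : Measure ((Fin R → Fin KH → Fin N → ℝ) ×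
      (Fin R → (Fin L → Fin M → Fin N → ℝ)))).IsAddHaarMeasure :=
    Measure.prod.instIsAddHaarMeasure _ _
  have s1 : SigmaFinite (volume : Measure ((Fin R → Fin KH → Fin N → ℝ) ×
      (Fin R → (Fin L → Fin M → Fin N → ℝ)))) := Measure.prod.instSigmaFinite
  have f1 : SFinite (volume : Measure ((Fin R → Fin KH → Fin N → ℝ) ×
      (Fin R → (Fin L → Fin M → Fin N → ℝ)))) := @instSFiniteOfSigmaFinite _ _ _ s1
  have h2 : (volume : Measure ((Fin R → Fin JM → Fin M → ℝ) × (Fin R → Fin KH → Fin N → ℝ) ×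
      (Fin R → (Fin L → Fin M → Fin N → ℝ)))).IsAddHaarMeasure :=
    Measure.prod.instIsAddHaarMeasure _ _
  have s2 : SigmaFinite (volume : Measure ((Fin R → Fin JM → Fin M → ℝ) ×
      (Fin R → Fin KH → Fin N → ℝ) × (Fin R → (Fin L → Fin M → Fin N → ℝ)))) :=
    Measure.prod.instSigmaFinite
  have f2 : SFinite (volume : Measure ((Fin R → Fin JM → Fin M → ℝ) ×
      (Fin R → Fin KH → Fin N → ℝ) × (Fin R → (Fin L → Fin M → Fin N → ℝ)))) :=
    @instSFiniteOfSigmaFinite _ _ _ s2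
  have b2 : BorelSpace ((Fin R → Fin JM → Fin M → ℝ) × (Fin R → Fin KH → Fin N → ℝ) ×
    (Fin R → (Fin L → Fin M → Fin N → ℝ))) := Prod.borelSpace
  have m1 : MeasurableAdd ((Fin R → Fin JM → Fin M → ℝ) × (Fin R → Fin KH → Fin N → ℝ) ×
    (Fin R → (Fin L → Fin M → Fin N → ℝ))) := ContinuousAdd.measurableAdd
  exact Measure.prod.instIsAddHaarMeasure _ _

/-- **Theorem 3 (Recoverability with unknown spatial degradation operators).** -/
theorem sri_recoverability_blind
    (R L M N IM JM KH IH JH KM : ℕ)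
    (hR : 0 < R) (hL : 0 < L) (hM : 0 < M) (hN0 : 0 < N)
    (hIM : 0 < IM) (hJM : 0 < JM) (hKH : 0 < KH)
    (hIH : 0 < IH) (hJH : 0 < JH) (hKM : 0 < KM)
    (h1 : KM ≥ 2 * N)
    (h2 : IH ≥ L * R) (h3 : JH ≥ M * R)
    (h4 : IM ≥ L * R) (h5 : JM ≥ M * R)
    (hNupper : L * M ≥ N)
    (hNlower : N ≥ max (⌈(L : ℚ) / (M : ℚ)⌉₊ + ⌈(M : ℚ) / (L : ℚ)⌉₊) 3)
    (P₁ : Matrix (Fin IH) (Fin IM) ℝ) (P₂ : Matrix (Fin JH) (Fin JM) ℝ)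
    (PM : Matrix (Fin KM) (Fin KH) ℝ)
    (hP₁ : P₁.rank = IH) (hP₂ : P₂.rank = JH) (hPM : PM.rank = KM) :
    ∀ᵐ x : (Fin R → Matrix (Fin IM) (Fin L) ℝ) × (Fin R → Matrix (Fin JM) (Fin M) ℝ) ×
        (Fin R → Matrix (Fin KH) (Fin N) ℝ) × (Fin R → (Fin L → Fin M → Fin N → ℝ))
        ∂volume,
      ∀ (At : Fin R → Matrix (Fin IH) (Fin L) ℝ) (Bt : Fin R → Matrix (Fin JH) (Fin M) ℝ)
        (A' : Fin R → Matrix (Fin IM) (Fin L) ℝ) (B' : Fin R → Matrix (Fin JM) (Fin M) ℝ)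
        (C' : Fin R → Matrix (Fin KH) (Fin N) ℝ) (D' : Fin R → (Fin L → Fin M → Fin N → ℝ)),
        -- the candidate factors reproduce the HSI
        (∀ i j k, (∑ r, tucker (x.2.2.2 r) (P₁ * x.1 r) (P₂ * x.2.1 r) (x.2.2.1 r) i j k)
            = ∑ r, tucker (D' r) (At r) (Bt r) (C' r) i j k) →
        -- the candidate factors reproduce the MSI
        (∀ i j k, (∑ r, tucker (x.2.2.2 r) (x.1 r) (x.2.1 r) (PM * x.2.2.1 r) i j k)
            = ∑ r, tucker (D' r) (A' r) (B' r) (PM * C' r) i j k) →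
        -- then they recover the ground-truth SRI
        (∀ i j k, (∑ r, tucker (D' r) (A' r) (B' r) (C' r) i j k)
            = ∑ r, tucker (x.2.2.2 r) (x.1 r) (x.2.1 r) (x.2.2.1 r) i j k) := by
  have hex := brick_exists L M N hL hM hNlower
  change ∀ᵐ x : Esp R L M N IM JM KH ∂volume, _
  let φA : Esp R L M N IM JM KH →ₗ[ℝ] (Fin R → Matrix (Fin IM) (Fin L) ℝ) :=
    { toFun := fun x => x.1, map_add' := fun _ _ => rfl, map_smul' := fun _ _ => rfl }
  let φB : Esp R L M N IM JM KH →ₗ[ℝ] (Fin R → Matrix (Fin JM) (Fin M) ℝ) :=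
    { toFun := fun x => x.2.1, map_add' := fun _ _ => rfl, map_smul' := fun _ _ => rfl }
  let φC : Esp R L M N IM JM KH →ₗ[ℝ] (Fin R → Matrix (Fin KH) (Fin N) ℝ) :=
    { toFun := fun x => x.2.2.1, map_add' := fun _ _ => rfl, map_smul' := fun _ _ => rfl }
  let φD : Fin R → Esp R L M N IM JM KH →ₗ[ℝ] (Fin L → Fin M → Fin N → ℝ) := fun r =>
    { toFun := fun x => x.2.2.2 r, map_add' := fun _ _ => rfl, map_smul' := fun _ _ => rfl }
  have sA : Function.Surjective φA := fun a => ⟨(a, 0, 0, 0), rfl⟩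
  have sB : Function.Surjective φB := fun a => ⟨(0, a, 0, 0), rfl⟩
  have sC : Function.Surjective φC := fun a => ⟨(0, 0, a, 0), rfl⟩
  have sD : ∀ r, Function.Surjective (φD r) := fun r a => ⟨(0, 0, 0, fun _ => a), rfl⟩
  have aA := ae_ind (volume : Measure (Esp R L M N IM JM KH)) φA sA P₁ hP₁ (id : Fin R → Fin R) Function.injective_id
    (by rw [Fintype.card_fin, mul_comm]; exact h2)
  have aB := ae_ind (volume : Measure (Esp R L M N IM JM KH)) φB sB P₂ hP₂ (id : Fin R → Fin R) Function.injective_id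
    (by rw [Fintype.card_fin, mul_comm]; exact h3)
  have aC : ∀ᵐ x ∂(volume : Measure (Esp R L M N IM JM KH)), ∀ r, Ind (fun _ : Fin 1 => PM * φC x r) :=
    ae_all_iff.2 fun r => ae_ind (volume : Measure (Esp R L M N IM JM KH)) φC sC PM hPM (fun _ : Fin 1 => r)
      (Function.injective_of_subsingleton _) (by rw [Fintype.card_fin]; omega)
  have aC2 : ∀ᵐ x ∂(volume : Measure (Esp R L M N IM JM KH)), ∀ r s, r ≠ s →
      Ind (fun a : Fin 2 => PM * φC x (![r, s] a)) := by
    refine ae_all_iff.2 fun r => ae_all_iff.2 fun s => ?_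
    by_cases hrs : r = s
    · exact Filter.Eventually.of_forall fun x hx => absurd hrs hx
    · have := ae_ind (volume : Measure (Esp R L M N IM JM KH)) φC sC PM hPM ![r, s]
        (by
          intro a b hab
          fin_cases a <;> fin_cases b <;> simp_all [Ne.symm hrs]) (by rw [Fintype.card_fin]; omega)
      filter_upwards [this] with x hx _
      exact hx
  have aD : ∀ᵐ x ∂(volume : Measure (Esp R L M N IM JM KH)), ∀ r, Brick (φD r x) :=
    ae_all_iff.2 fun r => ae_brick (volume : Measure (Esp R L M N IM JM KH)) hL (φD r) (sD r) hex
  have aD3 : ∀ᵐ x ∂(volume : Measure (Esp R L M N IM JM KH)), ∀ r (z : Fin N → ℝ),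
      (∀ l m, ∑ n, φD r x l m n * z n = 0) → z = 0 :=
    ae_all_iff.2 fun r => ae_mode3 (volume : Measure (Esp R L M N IM JM KH)) hNupper (φD r) (sD r)
  filter_upwards [aA, aB, aC, aC2, aD, aD3] with x xA xB xC xC2 xD xD3
  intro At Bt A' B' C' D' hH hMS
  exact deterministic hL hM hN0 P₁ P₂ PM xA xB xD xD3 xC xC2 At Bt A' B' C' D' hH hMS
end

section
/- Almost-sure essential uniqueness of the rank-(L,M,·) block-term decomposition (Lemma, Corollary 2.6 of Domanov et al. as stated in the paper). Let R, L, M, I, J, K be positive integers with I ≥ L·R, J ≥ M·R, and K ≥ max(⌈L/M⌉ + ⌈M/L⌉, 3). Then for Lebesgue-almost every tuple (A_r ∈ ℝ^{I×L}, B_r ∈ ℝ^{J×M}, D_r ∈ ℝ^{L×M×K}), r = 1,…,R, the tensor Y ∈ ℝ^{I×J×K} with entries Y[i,j,k] = Σ_{r=1}^R Σ_{l,m} D_r[l,m,k]·A_r[i,l]·B_r[j,m] has an essentially unique rank-(L,M,·) decomposition: for every other tuple (Ā_r ∈ ℝ^{I×L}, B̄_r ∈ ℝ^{J×M}, D̄_r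 ∈ ℝ^{L×M×K}) satisfying Y[i,j,k] = Σ_r Σ_{l,m} D̄_r[l,m,k]·Ā_r[i,l]·B̄_r[j,m] for all (i,j,k), there exist a permutation π of {1,…,R} and, for each r, invertible matrices Θ_{a,r} ∈ ℝ^{L×L} and Θ_{b,r} ∈ ℝ^{M×M} such that Ā_{π(r)} = A_r·Θ_{a,r}, B̄_{π(r)} = B_r·Θ_{b,r}, and for all (l,m,k): Σ_{l',m'} D̄_{π(r)}[l',m',k]·Θ_{a,r}[l,l']·Θ_{b,r}[m,m'] = D_r[l,m,k]. -/
open MeasureTheory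

set_option linter.unusedSectionVars false


theorem btd_ae_injective {E U W : Type*} [NormedAddCommGroup E] [NormedSpace ℝ E]
    [FiniteDimensional ℝ E] [MeasurableSpace E] [BorelSpace E] (μ : Measure E)
    [μ.IsAddHaarMeasure] [AddCommGroup U] [Module ℝ U] [FiniteDimensional ℝ U]
    [AddCommGroup W] [Module ℝ W] (N : E →ₗ[ℝ] U →ₗ[ℝ] W) (x0 : E)
    (h : ∀ u, N x0 u = 0 → u = 0) : ∀ᵐ x ∂μ, ∀ u, N x u = 0 → u = 0 := by
  obtain ⟨G, hG⟩ := LinearMap.exists_leftInverse_of_injective (N x0)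
    (LinearMap.ker_eq_bot'.2 h)
  let F : E →ₗ[ℝ] Module.End ℝ U := (LinearMap.llcomp ℝ U W U G) ∘ₗ N
  have hF : ∀ x, F x = G ∘ₗ N x := fun x => rfl
  have hmeas : MeasurableSet {x : E | LinearMap.det (F x) ≠ 0} := by
    have hc : Continuous fun x => LinearMap.det (F x) := by
      let b := Module.finBasis ℝ U
      have : (fun x => LinearMap.det (F x)) =
          fun x => Matrix.det ((LinearMap.toMatrix b b).toLinearMap.comp F x) := by
        ext x
        simp
      rw [this]
      exact (LinearMap.continuous_of_finiteDimensional _).matrix_det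
    exact (isOpen_ne_fun hc continuous_const).measurableSet
  have hae : ∀ᵐ x ∂μ, x ∈ {x : E | LinearMap.det (F x) ≠ 0} := by
    have : LocallyCompactSpace E := inferInstance
    refine ae_mem_of_ae_add_linearMap_mem (LinearMap.toSpanSingleton ℝ E x0)
      (volume : Measure ℝ) μ hmeas fun y => ?_
    have hfin : {t : ℝ | (F y).HasEigenvalue t}.Finite := Module.End.finite_hasEigenvalue (F y)
    have hfin2 : ((fun t : ℝ => -t) ⁻¹' {t : ℝ | (F y).HasEigenvalue t}).Finite :=
      hfin.preimage neg_injective.injOn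
    have : ∀ᵐ t : ℝ, t ∉ ((fun t : ℝ => -t) ⁻¹' {t : ℝ | (F y).HasEigenvalue t}) :=
      measure_eq_zero_iff_ae_notMem.1 (hfin2.measure_zero _)
    filter_upwards [this] with t ht
    intro hdet
    apply ht
    have hlt := LinearMap.bot_lt_ker_of_det_eq_zero hdet
    obtain ⟨u, hu, hu0⟩ := Submodule.exists_mem_ne_zero_of_ne_bot hlt.ne'
    refine Module.End.hasEigenvalue_of_hasEigenvector (x := u) ⟨?_, hu0⟩
    rw [Module.End.mem_eigenspace_iff]
    have h1 : F x0 = LinearMap.id := hG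
    have h2 : F y u + t • u = 0 := by
      have := hu
      rw [LinearMap.mem_ker, LinearMap.toSpanSingleton_apply, map_add, map_smul, h1] at this
      simpa using this
    rw [neg_smul]
    exact eq_neg_of_add_eq_zero_left h2
  filter_upwards [hae] with x hx u hu
  by_contra hu0
  apply hx
  by_contra hd
  have hk : LinearMap.ker (F x) = ⊥ :=
    LinearMap.ker_eq_bot.2 ((Module.End.isUnit_iff _).1 ((LinearMap.isUnit_iff_isUnit_det _).2
      (isUnit_iff_ne_zero.2 hd))).1
  apply hu0
  have : u ∈ LinearMap.ker (F x) := by rw [LinearMap.mem_ker, hF]; simp [hu]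
  rw [hk] at this
  simpa using this

open scoped Matrix
open Matrix (blockDiagonal)

def BtdRigid {R l m κ : Type*} [Fintype l] [Fintype m] [DecidableEq l] [DecidableEq m]
    (S : R → κ → Matrix l m ℝ) : Prop :=
  ∀ r s (P : Matrix l l ℝ) (V : Matrix m m ℝ), (∀ k, S r k * V = P * S s k) →
    (r ≠ s → P = 0 ∧ V = 0) ∧ (r = s → ∃ c : ℝ, P = c • 1 ∧ V = c • 1)

section
variable {R l m κ i j : Type*} [Fintype R] [Fintype l] [Fintype m] [DecidableEq R]
  [DecidableEq l] [DecidableEq m]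

theorem BtdRigid.transpose {S : R → κ → Matrix l m ℝ} (h : BtdRigid S) :
    BtdRigid (fun r k => (S r k)ᵀ) := by
  intro r s P V hk
  have := h s r Vᵀ Pᵀ (fun k => by
    have := congrArg Matrix.transpose (hk k)
    simpa using this.symm)
  refine ⟨fun hrs => ?_, fun hrs => ?_⟩
  · obtain ⟨h1, h2⟩ := this.1 hrs.symm
    exact ⟨by simpa using h2, by simpa using h1⟩
  · obtain ⟨c, h1, h2⟩ := this.2 hrs.symm
    refine ⟨c, ?_, ?_⟩
    · have := congrArg Matrix.transpose h2
      simpa using this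
    · have := congrArg Matrix.transpose h1
      simpa using this

theorem BtdRigid.left [Nonempty l] [Nonempty m] {S : R → κ → Matrix l m ℝ} (h : BtdRigid S)
    (x : l × R → ℝ) (hx : ∀ k, x ᵥ* blockDiagonal (fun r => S r k) = 0) : x = 0 := by
  have key : ∀ r, (fun a => x (a, r)) = 0 := by
    intro r
    obtain ⟨c, hP, hV⟩ := (h r r (Matrix.of fun _ a => x (a, r)) 0 (fun k => by
      ext a b
      have := congrFun (hx k) (b, r)
      simp only [Matrix.vecMul, dotProduct, Matrix.blockDiagonal_apply, Fintype.sum_prod_type,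
        mul_ite, mul_zero, Finset.sum_ite_eq', Finset.mem_univ, if_true, Pi.zero_apply] at this
      simp [Matrix.mul_apply, this])).2 rfl
    obtain ⟨b⟩ := ‹Nonempty m›
    obtain ⟨a0⟩ := ‹Nonempty l›
    have hc : c = 0 := by
      have := congrFun (congrFun hV b) b
      simpa using this.symm
    ext a
    have := congrFun (congrFun hP a0) a
    simpa [hc] using this
  ext ⟨a, r⟩
  exact congrFun (key r) a

theorem BtdRigid.right [Nonempty l] [Nonempty m] {S : R → κ → Matrix l m ℝ} (h : BtdRigid S)
    (x : m × R → ℝ) (hx : ∀ k, blockDiagonal (fun r => S r k) *ᵥ x = 0) : x = 0 := by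
  apply h.transpose.left x
  intro k
  rw [← hx k, ← Matrix.blockDiagonal_transpose, Matrix.vecMul_transpose]

theorem BtdRigid.left' [Nonempty l] [Nonempty m] {S : R → κ → Matrix l m ℝ} (h : BtdRigid S)
    (Z : Matrix i (l × R) ℝ) (hx : ∀ k, Z * blockDiagonal (fun r => S r k) = 0) : Z = 0 := by
  ext a b
  have := h.left (Z a) (fun k => by
    rw [← Matrix.mul_apply_eq_vecMul, hx k]; rfl)
  rw [this]; rfl

/-- block of a matrix -/
def btdBlk {a b : Type*} (P : Matrix (a × R) (b × R) ℝ) (r s : R) : Matrix a b ℝ :=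
  Matrix.of fun x y => P (x, r) (y, s)

theorem btdBlk_mul {a b c : Type*} [Fintype b] (P : Matrix (a × R) (b × R) ℝ)
    (Q : Matrix (b × R) (c × R) ℝ) (r t : R) :
    btdBlk (P * Q) r t = ∑ s, btdBlk P r s * btdBlk Q s t := by
  ext x y
  simp only [btdBlk, Matrix.of_apply, Matrix.mul_apply, Matrix.sum_apply, Fintype.sum_prod_type]
  rw [Finset.sum_comm]

theorem btdBlk_diag {a b : Type*} (S : R → Matrix a b ℝ) (r s : R) :
    btdBlk (blockDiagonal S) r s = if r = s then S r else 0 := by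
  ext x y
  simp only [btdBlk, Matrix.of_apply, Matrix.blockDiagonal_apply]
  split_ifs <;> rfl

theorem btdBlk_diag_mul {a b c : Type*} [Fintype b] (S : R → Matrix a b ℝ)
    (Q : Matrix (b × R) (c × R) ℝ) (r t : R) :
    btdBlk (blockDiagonal S * Q) r t = S r * btdBlk Q r t := by
  rw [btdBlk_mul, Finset.sum_eq_single r]
  · simp [btdBlk_diag]
  · intro s _ hs
    rw [btdBlk_diag, if_neg hs.symm, Matrix.zero_mul]
  · simp

theorem btdBlk_mul_diag {a b c : Type*} [Fintype b] (S : R → Matrix b c ℝ)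
    (Q : Matrix (a × R) (b × R) ℝ) (r t : R) :
    btdBlk (Q * blockDiagonal S) r t = btdBlk Q r t * S t := by
  rw [btdBlk_mul, Finset.sum_eq_single t]
  · simp [btdBlk_diag]
  · intro s _ hs
    rw [btdBlk_diag, if_neg hs, Matrix.mul_zero]
  · simp

theorem btdBlk_one {a : Type*} [DecidableEq a] (r s : R) :
    btdBlk (1 : Matrix (a × R) (a × R) ℝ) r s = if r = s then 1 else 0 := by
  rw [← Matrix.blockDiagonal_one, btdBlk_diag]; simp

/-- concatenation -/
def btdCat {a b : Type*} (A : R → Matrix a b ℝ) : Matrix a (b × R) ℝ :=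
  Matrix.of fun x y => A y.2 x y.1

theorem btd_left_inv {a b : Type*} [Fintype a] [Fintype b] [DecidableEq a] [DecidableEq b]
    (A : Matrix a b ℝ) (h : ∀ u, A *ᵥ u = 0 → u = 0) : ∃ G : Matrix b a ℝ, G * A = 1 := by
  obtain ⟨G, hG⟩ := LinearMap.exists_leftInverse_of_injective (Matrix.toLin' A)
    (LinearMap.ker_eq_bot'.2 (by simpa using h))
  refine ⟨LinearMap.toMatrix' G, ?_⟩
  have := congrArg LinearMap.toMatrix' hG
  rwa [LinearMap.toMatrix'_comp, LinearMap.toMatrix'_toLin', LinearMap.toMatrix'_id] at this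

/-- relation of block diagonal pencils -/
theorem btd_perm [Nonempty l] [Nonempty m] {S S' : R → κ → Matrix l m ℝ} (h : BtdRigid S)
    (P Q : Matrix (l × R) (l × R) ℝ) (V W : Matrix (m × R) (m × R) ℝ)
    (hPQ : P * Q = 1) (hQP : Q * P = 1) (hVW : V * W = 1) (hWV : W * V = 1)
    (hS : ∀ k, blockDiagonal (fun r => S r k) = P * blockDiagonal (fun r => S' r k) * W) :
    ∃ π : Equiv.Perm R, ∀ r, IsUnit (btdBlk P r (π r)) ∧ IsUnit (btdBlk W (π r) r) ∧
      (∀ t, t ≠ r → btdBlk P t (π r) = 0) ∧ (∀ t, t ≠ r → btdBlk W (π r) t = 0) ∧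
      ∀ k, btdBlk P r (π r) * S' (π r) k * btdBlk W (π r) r = S r k := by
  have h1 : ∀ k r s, S r k * btdBlk V r s = btdBlk P r s * S' s k := by
    intro k r s
    rw [← btdBlk_diag_mul (fun r => S r k), ← btdBlk_mul_diag (fun r => S' r k), hS,
      Matrix.mul_assoc, hWV, Matrix.mul_one]
  have h2 : ∀ k r s, S' r k * btdBlk W r s = btdBlk Q r s * S s k := by
    intro k r s
    rw [← btdBlk_diag_mul (fun r => S' r k), ← btdBlk_mul_diag (fun r => S r k), hS,
      ← Matrix.mul_assoc, ← Matrix.mul_assoc, hQP, Matrix.one_mul]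
  have h3 := fun r s t => h r t (btdBlk P r s * btdBlk Q s t) (btdBlk V r s * btdBlk W s t)
    (fun k => by rw [← Matrix.mul_assoc, h1, Matrix.mul_assoc, h2, Matrix.mul_assoc])
  choose c hcP hcV using fun r s => (h3 r s r).2 rfl
  have hex : ∀ r, ∃ s, c r s ≠ 0 := by
    intro r
    by_contra hcon
    push Not at hcon
    have := btdBlk_mul P Q r r
    rw [hPQ, btdBlk_one, if_pos rfl] at this
    simp only [hcP, hcon, zero_smul, Finset.sum_const_zero] at this
    exact one_ne_zero this
  choose f hf using hex
  have uP : ∀ r, IsUnit (btdBlk P r (f r)) := fun r => by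
    refine IsUnit.of_mul_eq_one ((c r (f r))⁻¹ • btdBlk Q (f r) r) ?_
    rw [Matrix.mul_smul, hcP, smul_smul, inv_mul_cancel₀ (hf r), one_smul]
  have uQ : ∀ r, IsUnit (btdBlk Q (f r) r) := fun r => by
    refine IsUnit.of_mul_eq_one_right ((c r (f r))⁻¹ • btdBlk P r (f r)) ?_
    rw [Matrix.smul_mul, hcP, smul_smul, inv_mul_cancel₀ (hf r), one_smul]
  have uV : ∀ r, IsUnit (btdBlk V r (f r)) := fun r => by
    refine IsUnit.of_mul_eq_one ((c r (f r))⁻¹ • btdBlk W (f r) r) ?_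
    rw [Matrix.mul_smul, hcV, smul_smul, inv_mul_cancel₀ (hf r), one_smul]
  have uW : ∀ r, IsUnit (btdBlk W (f r) r) := fun r => by
    refine IsUnit.of_mul_eq_one_right ((c r (f r))⁻¹ • btdBlk V r (f r)) ?_
    rw [Matrix.smul_mul, hcV, smul_smul, inv_mul_cancel₀ (hf r), one_smul]
  have zP : ∀ r t, t ≠ r → btdBlk P t (f r) = 0 := fun r t htr =>
    (uQ r).mul_left_eq_zero.1 ((h3 t (f r) r).1 htr).1
  have zW : ∀ r t, t ≠ r → btdBlk W (f r) t = 0 := fun r t htr =>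
    (uV r).mul_right_eq_zero.1 ((h3 r (f r) t).1 htr.symm).2
  have finj : Function.Injective f := by
    intro r t hrt
    by_contra hne
    have := zP r t (Ne.symm hne)
    rw [hrt] at this
    exact (uP t).ne_zero this
  let π : Equiv.Perm R := Equiv.ofBijective f (Finite.injective_iff_bijective.1 finj)
  have hπ : ∀ r, π r = f r := fun r => rfl
  refine ⟨π, fun r => ⟨uP r, uW r, zP r, zW r, fun k => ?_⟩⟩
  have h4 : S r k = btdBlk (blockDiagonal (fun r => S r k)) r r := by simp [btdBlk_diag]
  rw [h4, hS k, btdBlk_mul, Finset.sum_eq_single (π r)]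
  · rw [btdBlk_mul_diag]
  · intro s _ hs
    obtain ⟨t, rfl⟩ := π.surjective s
    have : r ≠ t := fun hh => hs (by rw [hh])
    rw [hπ, zW t r this, Matrix.mul_zero]
  · simp

theorem btd_core [Nonempty l] [Nonempty m] [Fintype i] [Fintype j] [DecidableEq i] [DecidableEq j]
    {S S' : R → κ → Matrix l m ℝ} (h : BtdRigid S)
    (A A' : R → Matrix i l ℝ) (B B' : R → Matrix j m ℝ)
    (hA : ∀ u, btdCat A *ᵥ u = 0 → u = 0) (hB : ∀ u, btdCat B *ᵥ u = 0 → u = 0)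
    (hY : ∀ k, btdCat A * blockDiagonal (fun r => S r k) * (btdCat B)ᵀ
      = btdCat A' * blockDiagonal (fun r => S' r k) * (btdCat B')ᵀ) :
    ∃ π : Equiv.Perm R, ∀ r, ∃ (Θa : Matrix l l ℝ) (Θb : Matrix m m ℝ),
      IsUnit Θa ∧ IsUnit Θb ∧ A' (π r) = A r * Θa ∧ B' (π r) = B r * Θb ∧
      ∀ k, Θa * S' (π r) k * Θbᵀ = S r k := by
  obtain ⟨GA, hGA⟩ := btd_left_inv _ hA
  obtain ⟨GB, hGB⟩ := btd_left_inv _ hB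
  have hGB' : (btdCat B)ᵀ * GBᵀ = 1 := by
    rw [← Matrix.transpose_mul, hGB, Matrix.transpose_one]
  set P := GA * btdCat A' with hP
  set W := (btdCat B')ᵀ * GBᵀ with hW
  have e1 : ∀ k, btdCat A * blockDiagonal (fun r => S r k) =
      btdCat A' * blockDiagonal (fun r => S' r k) * W := by
    intro k
    have := congrArg (· * GBᵀ) (hY k)
    simpa only [Matrix.mul_assoc, hGB', Matrix.mul_one] using this
  have e2 : ∀ k, blockDiagonal (fun r => S r k) * (btdCat B)ᵀ =
      P * blockDiagonal (fun r => S' r k) * (btdCat B')ᵀ := by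
    intro k
    have := congrArg (GA * ·) (hY k)
    simpa only [← Matrix.mul_assoc, hGA, Matrix.one_mul] using this
  have hS : ∀ k, blockDiagonal (fun r => S r k) = P * blockDiagonal (fun r => S' r k) * W := by
    intro k
    have := congrArg (GA * ·) (e1 k)
    simpa only [← Matrix.mul_assoc, hGA, Matrix.one_mul] using this
  have uP : IsUnit P := by
    rw [← Matrix.vecMul_injective_iff_isUnit]
    intro x y hxy
    rw [← sub_eq_zero]
    apply h.left
    intro k
    have : (x - y) ᵥ* P = 0 := by
      rw [Matrix.sub_vecMul, sub_eq_zero]; exact hxy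
    rw [hS, Matrix.mul_assoc, ← Matrix.vecMul_vecMul, this, Matrix.zero_vecMul]
  have uW : IsUnit W := by
    rw [← Matrix.mulVec_injective_iff_isUnit]
    intro x y hxy
    rw [← sub_eq_zero]
    apply h.right
    intro k
    have : W *ᵥ (x - y) = 0 := by
      rw [Matrix.mulVec_sub, sub_eq_zero]; exact hxy
    rw [hS, ← Matrix.mulVec_mulVec, this, Matrix.mulVec_zero]
  obtain ⟨Q, hPQ, hQP⟩ := isUnit_iff_exists.1 uP
  obtain ⟨V, hWV, hVW⟩ := isUnit_iff_exists.1 uW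
  have hS' : ∀ k, blockDiagonal (fun r => S' r k) = Q * blockDiagonal (fun r => S r k) * V := by
    intro k
    rw [hS]
    simp only [Matrix.mul_assoc, hWV, Matrix.mul_one]
    rw [← Matrix.mul_assoc, hQP, Matrix.one_mul]
  have l' : ∀ Z : Matrix i (l × R) ℝ, (∀ k, Z * blockDiagonal (fun r => S' r k) = 0) → Z = 0 := by
    intro Z hZ
    have : Z * Q = 0 := h.left' (Z * Q) (fun k => by
      have := congrArg (· * W) (hZ k)
      rw [hS'] at this
      simpa only [Matrix.mul_assoc, hVW, Matrix.mul_one, Matrix.zero_mul] using this)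
    have := congrArg (· * P) this
    simpa only [Matrix.mul_assoc, hQP, Matrix.mul_one, Matrix.zero_mul] using this
  have r' : ∀ Z : Matrix (m × R) j ℝ, (∀ k, blockDiagonal (fun r => S' r k) * Z = 0) → Z = 0 := by
    intro Z hZ
    have : (V * Z)ᵀ = 0 := h.transpose.left' (V * Z)ᵀ (fun k => by
      have := congrArg (P * ·) (hZ k)
      rw [hS'] at this
      rw [← Matrix.blockDiagonal_transpose, ← Matrix.transpose_mul]
      rw [← Matrix.mul_assoc, ← Matrix.mul_assoc, ← Matrix.mul_assoc, hPQ, Matrix.one_mul,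
        Matrix.mul_zero, Matrix.mul_assoc] at this
      rw [this, Matrix.transpose_zero])
    have := congrArg (W * ·) (Matrix.transpose_eq_zero.1 this)
    simpa only [← Matrix.mul_assoc, hWV, Matrix.one_mul, Matrix.mul_zero] using this
  have hAP : btdCat A' = btdCat A * P := by
    rw [← sub_eq_zero]
    apply l'
    intro k
    have := e1 k
    rw [hS] at this
    have := congrArg (· * V) this
    simp only [Matrix.mul_assoc, hWV, Matrix.mul_one] at this
    rw [Matrix.sub_mul, Matrix.mul_assoc, this, sub_self]
  have hBW : (btdCat B')ᵀ = W * (btdCat B)ᵀ := by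
    rw [← sub_eq_zero]
    apply r'
    intro k
    have := e2 k
    rw [hS] at this
    have := congrArg (Q * ·) this
    simp only [← Matrix.mul_assoc, hQP, Matrix.one_mul] at this
    rw [Matrix.mul_sub, ← Matrix.mul_assoc, this, sub_self]
  obtain ⟨π, hπ⟩ := btd_perm h P Q V W hPQ hQP hVW hWV hS
  refine ⟨π, fun r => ⟨btdBlk P r (π r), (btdBlk W (π r) r)ᵀ, ?_⟩⟩
  obtain ⟨h1, h2, h3, h4, h5⟩ := hπ r
  refine ⟨h1, (Matrix.isUnit_transpose _).2 h2, ?_, ?_, ?_⟩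
  · ext x y
    have := congrFun (congrFun hAP x) (y, π r)
    simp only [btdCat, Matrix.of_apply, Matrix.mul_apply, Fintype.sum_prod_type] at this
    rw [this, Matrix.mul_apply]
    refine Finset.sum_congr rfl fun z _ => ?_
    rw [Finset.sum_eq_single r]
    · rfl
    · intro t _ ht
      have := congrFun (congrFun (h3 t ht) z) y
      simp only [btdBlk, Matrix.of_apply, Matrix.zero_apply] at this
      rw [this, mul_zero]
    · simp
  · ext x y
    have := congrFun (congrFun hBW (y, π r)) x
    simp only [btdCat, Matrix.of_apply, Matrix.mul_apply, Fintype.sum_prod_type,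
      Matrix.transpose_apply] at this
    rw [this, Matrix.mul_apply]
    refine Finset.sum_congr rfl fun z _ => ?_
    rw [Finset.sum_eq_single r]
    · rw [mul_comm]; rfl
    · intro t _ ht
      have := congrFun (congrFun (h4 t ht) y) z
      simp only [btdBlk, Matrix.of_apply, Matrix.zero_apply] at this
      rw [this, zero_mul]
    · simp
  · intro k
    rw [Matrix.transpose_transpose]
    exact h5 k
end

theorem btd_witness_square {R M K : ℕ} (hM : 0 < M) (hK : 3 ≤ K) :
    ∃ S : Fin R → Fin K → Matrix (Fin M) (Fin M) ℝ, BtdRigid S := by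
  let y : Fin R → Fin M → ℝ := fun r m => ((finProdFinEquiv (r, m) : Fin (R * M)) : ℕ)
  have hy : ∀ r s a b, y r a = y s b → r = s ∧ a = b := by
    intro r s a b hab
    have : finProdFinEquiv (r, a) = finProdFinEquiv (s, b) := Fin.ext (Nat.cast_injective (R := ℝ) hab)
    have := finProdFinEquiv.injective this
    exact ⟨congrArg Prod.fst this, congrArg Prod.snd this⟩
  refine ⟨fun r k => if (k : ℕ) = 0 then 1 else if (k : ℕ) = 1 then Matrix.of (fun _ _ => 1)
    else Matrix.diagonal (y r), fun r s P V h => ?_⟩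
  have h0 : V = P := by simpa using h ⟨0, by omega⟩
  have h1 := h ⟨1, by omega⟩
  have h2 := h ⟨2, by omega⟩
  simp only [one_ne_zero, if_false, if_true] at h1
  simp only [OfNat.ofNat_ne_zero, OfNat.ofNat_ne_one, if_false] at h2
  subst h0
  have hz : ∀ a b, y r a ≠ y s b → V a b = 0 := by
    intro a b hab
    have := congrFun (congrFun h2 a) b
    rw [Matrix.diagonal_mul, Matrix.mul_diagonal] at this
    have h3 : (y r a - y s b) * V a b = 0 := by linarith
    exact (mul_eq_zero.1 h3).resolve_left (sub_ne_zero.2 hab)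
  refine ⟨fun hrs => ?_, fun hrs => ?_⟩
  · have : V = 0 := by
      ext a b
      exact hz a b fun hh => hrs (hy _ _ _ _ hh).1
    exact ⟨this, this⟩
  · subst hrs
    have hz' : ∀ a b, a ≠ b → V a b = 0 := fun a b hab => hz a b fun hh => hab (hy _ _ _ _ hh).2
    have hd : ∀ a b, V b b = V a a := by
      intro a b
      have := congrFun (congrFun h1 a) b
      simp only [Matrix.mul_apply, Matrix.of_apply, one_mul, mul_one] at this
      rwa [Finset.sum_eq_single b (fun c _ hc => hz' c b hc) (by simp),
        Finset.sum_eq_single a (fun c _ hc => hz' a c hc.symm) (by simp)] at this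
    have : V = V ⟨0, hM⟩ ⟨0, hM⟩ • (1 : Matrix (Fin M) (Fin M) ℝ) := by
      ext a b
      by_cases hab : a = b
      · subst hab; simp [hd ⟨0, hM⟩ a]
      · simp [hab, hz' a b hab]
    exact ⟨_, this, this⟩

theorem btd_witness_tall {R L M K : ℕ} (hM : 0 < M) (hLM : M < L) (hK : L ≤ (K - 1) * M) :
    ∃ S : Fin R → Fin K → Matrix (Fin L) (Fin M) ℝ, BtdRigid S := by
  let y : Fin R → Fin M → ℝ := fun r m => ((finProdFinEquiv (r, m) : Fin (R * M)) : ℕ)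
  have hy : ∀ r s a b, y r a = y s b → r = s ∧ a = b := by
    intro r s a b hab
    have : finProdFinEquiv (r, a) = finProdFinEquiv (s, b) := Fin.ext (Nat.cast_injective (R := ℝ) hab)
    have := finProdFinEquiv.injective this
    exact ⟨congrArg Prod.fst this, congrArg Prod.snd this⟩
  have hK1 : 0 < K - 1 := by
    rcases Nat.eq_zero_or_pos (K - 1) with h | h
    · rw [h] at hK; omega
    · exact h
  refine ⟨fun r k => Matrix.of fun a b =>
    if (k : ℕ) + 1 < K then (if (a : ℕ) = k * M + b then 1 else 0)
    else if (a : ℕ) < M then (if (a : ℕ) = b then y r b else 0) else 1, fun r s P V h => ?_⟩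
  let md : Fin L → Fin M := fun a => ⟨a % M, Nat.mod_lt _ hM⟩
  have hP : ∀ a a' : Fin L, P a a' = if (a : ℕ) / M = a' / M then V (md a) (md a') else 0 := by
    intro a a'
    have hq : (a' : ℕ) / M < K - 1 := by
      rw [Nat.div_lt_iff_lt_mul hM]; exact lt_of_lt_of_le a'.2 hK
    have := congrFun (congrFun (h ⟨a' / M, by omega⟩) a) (md a')
    have hlt : (a' : ℕ) / M + 1 < K := by omega
    simp only [Matrix.mul_apply, Matrix.of_apply, hlt, if_true, md, ite_mul, one_mul, zero_mul,
      mul_ite, mul_one, mul_zero] at this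
    rw [Finset.sum_eq_single a'] at this
    · rw [if_pos (by rw [mul_comm]; exact (Nat.div_add_mod _ _).symm)] at this
      rw [← this]
      split_ifs with haa
      · rw [Finset.sum_eq_single (md a)]
        · rw [if_pos]
          rw [← haa, mul_comm]; exact (Nat.div_add_mod _ _).symm
        · intro b _ hb
          rw [if_neg]
          intro hab
          apply hb
          apply Fin.ext
          simp only [md]
          rw [hab, mul_comm, Nat.mul_add_mod, Nat.mod_eq_of_lt b.2]
        · simp
      · apply Finset.sum_eq_zero
        intro b _
        rw [if_neg]
        intro hab
        apply haa
        rw [hab, mul_comm, Nat.mul_add_div hM, Nat.div_eq_of_lt b.2, add_zero]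
    · intro c _ hc
      rw [if_neg]
      intro hcc
      apply hc
      apply Fin.ext
      rw [hcc, mul_comm]; exact Nat.div_add_mod _ _
    · simp
  have hlast := h ⟨K - 1, by omega⟩
  have hnl : ¬ (K - 1 + 1 < K) := by omega
  let em : Fin M → Fin L := fun b => ⟨b, b.2.trans hLM⟩
  have hmd : ∀ b, md (em b) = b := fun b => Fin.ext (Nat.mod_eq_of_lt b.2)
  have hz : ∀ a b, y r a ≠ y s b → V a b = 0 := by
    intro a b hab
    have := congrFun (congrFun hlast (em a)) b
    simp only [Matrix.mul_apply, Matrix.of_apply, hnl, if_false] at this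
    rw [Finset.sum_eq_single a, Finset.sum_eq_single (em b)] at this
    · simp only [em, a.2, b.2, if_true] at this
      have hp := hP (em a) (em b)
      rw [hmd, hmd, if_pos (by simp [em, Nat.div_eq_of_lt a.2, Nat.div_eq_of_lt b.2])] at hp
      change y r a * V a b = P (em a) (em b) * y s b at this
      rw [hp] at this
      have h3 : (y r a - y s b) * V a b = 0 := by linarith
      exact (mul_eq_zero.1 h3).resolve_left (sub_ne_zero.2 hab)
    · intro c _ hc
      rw [hP]
      split_ifs with h1 h2 h3 <;> simp
      · exact absurd (Fin.ext h3) hc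
      · exfalso
        simp only [em, Nat.div_eq_of_lt a.2] at h1
        have := (Nat.div_eq_zero_iff_lt hM).1 h1.symm
        omega
    · simp
    · intro c _ hc
      have : (a : ℕ) ≠ c := fun hh => hc (Fin.ext hh.symm)
      simp [em, this]
    · simp
  refine ⟨fun hrs => ?_, fun hrs => ?_⟩
  · have hV : V = 0 := by
      ext a b
      exact hz a b fun hh => hrs (hy _ _ _ _ hh).1
    refine ⟨?_, hV⟩
    ext a b
    rw [hP, hV]; simp
  · subst hrs
    have hz' : ∀ a b, a ≠ b → V a b = 0 := fun a b hab => hz a b fun hh => hab (hy _ _ _ _ hh).2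
    have hd : ∀ b, V b b = V ⟨0, hM⟩ ⟨0, hM⟩ := by
      intro b
      have := congrFun (congrFun hlast ⟨M, hLM⟩) b
      simp only [Matrix.mul_apply, Matrix.of_apply, hnl, if_false, lt_irrefl, one_mul] at this
      rw [Finset.sum_eq_single b (fun c _ hc => hz' c b hc) (by simp),
        Finset.sum_eq_single ⟨M, hLM⟩] at this
      · rw [this, hP]
        simp [md]
      · intro c _ hc
        rw [hP]
        split_ifs with h1 h2 h3 <;> simp
        · exfalso
          have h4 : (c : ℕ) / M = 0 := Nat.div_eq_of_lt h2
          rw [h4] at h1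
          simp only [Nat.div_self hM] at h1
          exact one_ne_zero h1
        · apply hz'
          intro hh
          apply hc
          have h4 : (0 : ℕ) = c % M := by simpa [md] using congrArg Fin.val hh
          apply Fin.ext
          have h5 := Nat.div_add_mod (c : ℕ) M
          rw [← h4, ← h1] at h5
          simpa [Nat.div_self hM] using h5.symm
      · simp
    refine ⟨V ⟨0, hM⟩ ⟨0, hM⟩, ?_, ?_⟩
    · ext a b
      rw [hP]
      by_cases hab : a = b
      · subst hab; simp [hd]
      · simp only [Matrix.smul_apply, Matrix.one_apply_ne hab, smul_zero]
        split_ifs with h1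
        · apply hz'
          intro hh
          apply hab
          have h4 : (a : ℕ) % M = b % M := congrArg Fin.val hh
          apply Fin.ext
          rw [← Nat.div_add_mod (a : ℕ) M, h1, h4, Nat.div_add_mod]
        · rfl
    · ext a b
      by_cases hab : a = b
      · subst hab; simp [hd a]
      · simp [hab, hz' a b hab]

theorem btd_ceil {L M K : ℕ} (hM : 0 < M) (h : ⌈(L : ℚ) / (M : ℚ)⌉₊ + 1 ≤ K) :
    L ≤ (K - 1) * M := by
  have h1 : (L : ℚ) / M ≤ ((K - 1 : ℕ) : ℚ) :=
    (Nat.le_ceil _).trans (by exact_mod_cast (by omega))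
  rw [div_le_iff₀ (by exact_mod_cast hM)] at h1
  exact_mod_cast h1

theorem btd_witness {R L M K : ℕ} (hL : 0 < L) (hM : 0 < M)
    (hK : K ≥ max (⌈(L : ℚ) / (M : ℚ)⌉₊ + ⌈(M : ℚ) / (L : ℚ)⌉₊) 3) :
    ∃ S : Fin R → Fin K → Matrix (Fin L) (Fin M) ℝ, BtdRigid S := by
  have hL' : (0 : ℚ) < L := by exact_mod_cast hL
  have hM' : (0 : ℚ) < M := by exact_mod_cast hM
  have h1 : 0 < ⌈(L : ℚ) / (M : ℚ)⌉₊ := Nat.ceil_pos.2 (by positivity)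
  have h2 : 0 < ⌈(M : ℚ) / (L : ℚ)⌉₊ := Nat.ceil_pos.2 (by positivity)
  have h3 := (le_max_left _ _).trans hK
  have h4 := (le_max_right _ _).trans hK
  rcases lt_trichotomy L M with h | h | h
  · obtain ⟨S, hS⟩ := btd_witness_tall (R := R) hL h (btd_ceil (K := K) hL (by omega))
    exact ⟨_, hS.transpose⟩
  · subst h
    exact btd_witness_square hM h4
  · exact btd_witness_tall hM h (btd_ceil hM (by omega))

theorem btd_haar2 (a b c : ℕ) :
    (volume : Measure (Fin a → Fin b → Fin c → ℝ)).IsAddHaarMeasure := by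
  have h1 : (volume : Measure (Fin b → Fin c → ℝ)).IsAddHaarMeasure :=
    Measure.pi.isAddHaarMeasure _
  exact Measure.pi.isAddHaarMeasure _

theorem btd_haar3 (a b c d : ℕ) :
    (volume : Measure (Fin a → Fin b → Fin c → Fin d → ℝ)).IsAddHaarMeasure := by
  have h1 := btd_haar2 b c d
  exact Measure.pi.isAddHaarMeasure _

theorem btd_ae_cat {R L I : ℕ} (hI : I ≥ L * R) :
    ∀ᵐ A : Fin R → Matrix (Fin I) (Fin L) ℝ, ∀ u, btdCat A *ᵥ u = 0 → u = 0 := by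
  let N : (Fin R → Fin I → Fin L → ℝ) →ₗ[ℝ] (Fin L × Fin R → ℝ) →ₗ[ℝ] (Fin I → ℝ) :=
    LinearMap.mk₂ ℝ (fun A u => btdCat (fun r => Matrix.of (A r)) *ᵥ u)
      (by intro A B u; rw [← Matrix.add_mulVec]; rfl)
      (by intro c A u; rw [← Matrix.smul_mulVec]; rfl)
      (by intro A u v; rw [Matrix.mulVec_add])
      (by intro c A u; rw [Matrix.mulVec_smul])
  let e : Fin L × Fin R → Fin I := fun p => Fin.castLE hI (finProdFinEquiv p)
  have he : Function.Injective e :=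
    (Fin.castLE_injective hI).comp finProdFinEquiv.injective
  have := btd_haar2 R I L
  have := btd_ae_injective (volume : Measure (Fin R → Fin I → Fin L → ℝ)) N
    (fun r i l => if i = e (l, r) then 1 else 0) (by
      intro u hu
      ext p
      have := congrFun hu (e p)
      simp only [N, LinearMap.mk₂_apply, Matrix.mulVec, dotProduct, btdCat, Matrix.of_apply,
        he.eq_iff, ite_mul, one_mul, zero_mul, Prod.mk.eta, Finset.sum_ite_eq, Finset.mem_univ,
        if_true] at this
      exact this)
  exact this

theorem btd_ae_rigid {R L M K : ℕ} (hL : 0 < L) (hM : 0 < M)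
    (hK : K ≥ max (⌈(L : ℚ) / (M : ℚ)⌉₊ + ⌈(M : ℚ) / (L : ℚ)⌉₊) 3) :
    ∀ᵐ D : Fin R → Fin L → Fin M → Fin K → ℝ,
      BtdRigid (fun r k => Matrix.of fun l m => D r l m k) := by
  obtain ⟨S, hS⟩ := btd_witness (R := R) hL hM hK
  have key : ∀ r s : Fin R, ∀ᵐ D : Fin R → Fin L → Fin M → Fin K → ℝ,
      ∀ (P : Matrix (Fin L) (Fin L) ℝ) (V : Matrix (Fin M) (Fin M) ℝ),
      (r = s → P.trace = 0) →
      (∀ k, (Matrix.of fun l m => D r l m k) * V = P * (Matrix.of fun l m => D s l m k)) →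
      P = 0 ∧ V = 0 := by
    intro r s
    let U : Submodule ℝ (Matrix (Fin L) (Fin L) ℝ × Matrix (Fin M) (Fin M) ℝ) :=
      { carrier := {p | r = s → p.1.trace = 0}
        add_mem' := by
          intro a b ha hb h
          simp [Matrix.trace_add, ha h, hb h]
        zero_mem' := by intro h; simp
        smul_mem' := by
          intro c a ha h
          simp [Matrix.trace_smul, ha h] }
    let N : (Fin R → Fin L → Fin M → Fin K → ℝ) →ₗ[ℝ] U →ₗ[ℝ]
        (Fin K → Matrix (Fin L) (Fin M) ℝ) :=
      LinearMap.mk₂ ℝ (fun D p k => (Matrix.of fun l m => D r l m k) * p.1.2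
          - p.1.1 * (Matrix.of fun l m => D s l m k))
        (by
          intro D D' p; ext k a b
          simp [Matrix.mul_apply, add_mul, mul_add, Finset.sum_add_distrib]; ring)
        (by
          intro c D p; ext k a b
          simp [Matrix.mul_apply, mul_sub, Finset.mul_sum, mul_assoc, mul_left_comm])
        (by
          intro D p q; ext k a b
          simp [Matrix.mul_apply, add_mul, mul_add, Finset.sum_add_distrib]; ring)
        (by
          intro c D p; ext k a b
          simp [Matrix.mul_apply, mul_sub, Finset.mul_sum, mul_assoc, mul_left_comm])
    have := btd_haar3 R L M K
    have := btd_ae_injective (volume : Measure (Fin R → Fin L → Fin M → Fin K → ℝ)) N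
      (fun r l m k => S r k l m) (by
        rintro ⟨⟨P, V⟩, hp⟩ hu
        have hh := hS r s P V (fun k => sub_eq_zero.1 (congrFun hu k))
        rw [Submodule.mk_eq_zero, Prod.mk_eq_zero]
        by_cases hrs : r = s
        · obtain ⟨c, h1, h2⟩ := hh.2 hrs
          have h3 : P.trace = 0 := hp hrs
          rw [h1, Matrix.trace_smul, Matrix.trace_one, Fintype.card_fin, smul_eq_mul] at h3
          have hc : c = 0 := (mul_eq_zero.1 h3).resolve_right (by exact_mod_cast hL.ne')
          rw [h1, h2, hc]; simp
        · exact hh.1 hrs)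
    filter_upwards [this] with D hD P V htr hk
    have := hD ⟨(P, V), htr⟩ (by
      funext k
      exact sub_eq_zero.2 (hk k))
    have h2 : (P, V) = 0 := congrArg Subtype.val this
    exact Prod.mk_eq_zero.1 h2
  have key2 := ae_all_iff.2 fun r => ae_all_iff.2 fun s => key r s
  filter_upwards [key2] with D hD r s P V hk
  refine ⟨fun hrs => hD r s P V (fun h => absurd h hrs) hk, fun hrs => ?_⟩
  subst hrs
  have hL' : (L : ℝ) ≠ 0 := by exact_mod_cast hL.ne'
  refine ⟨P.trace / L, ?_⟩
  have := hD r r (P - (P.trace / L) • 1) (V - (P.trace / L) • 1)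
    (fun _ => by
      rw [Matrix.trace_sub, Matrix.trace_smul, Matrix.trace_one, Fintype.card_fin, smul_eq_mul,
        div_mul_cancel₀ _ hL', sub_self])
    (fun k => by
      rw [Matrix.mul_sub, Matrix.sub_mul, hk k]; simp)
  exact ⟨sub_eq_zero.1 this.1, sub_eq_zero.1 this.2⟩

theorem btd_entry {R L M I J : ℕ} (A : Fin R → Matrix (Fin I) (Fin L) ℝ)
    (B : Fin R → Matrix (Fin J) (Fin M) ℝ) (S : Fin R → Matrix (Fin L) (Fin M) ℝ)
    (i : Fin I) (j : Fin J) :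
    (btdCat A * blockDiagonal S * (btdCat B)ᵀ) i j =
      ∑ r, ∑ l, ∑ m, S r l m * A r i l * B r j m := by
  simp only [Matrix.mul_apply, btdCat, Matrix.of_apply, Matrix.transpose_apply,
    Matrix.blockDiagonal_apply, Fintype.sum_prod_type, mul_ite, mul_zero, Finset.sum_ite_eq',
    Finset.mem_univ, if_true, Finset.sum_mul]
  rw [Finset.sum_comm]
  refine Finset.sum_congr rfl fun r _ => ?_
  rw [Finset.sum_comm]
  refine Finset.sum_congr rfl fun l _ => Finset.sum_congr rfl fun m _ => ?_
  ring

/-- **Lemma (Corollary 2.6 of Domanov et al.): almost-sure essential uniqueness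
of the rank-`(L,M,·)` block-term decomposition.** -/
theorem lmdot_essential_uniqueness
    (R L M I J K : ℕ)
    (hR : 0 < R) (hL : 0 < L) (hM : 0 < M)
    (hI0 : 0 < I) (hJ0 : 0 < J) (hK0 : 0 < K)
    (hI : I ≥ L * R) (hJ : J ≥ M * R)
    (hK : K ≥ max (⌈(L : ℚ) / (M : ℚ)⌉₊ + ⌈(M : ℚ) / (L : ℚ)⌉₊) 3) :
    ∀ᵐ x : (Fin R → Matrix (Fin I) (Fin L) ℝ) × (Fin R → Matrix (Fin J) (Fin M) ℝ) ×
        (Fin R → (Fin L → Fin M → Fin K → ℝ)) ∂volume,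
      ∀ (A' : Fin R → Matrix (Fin I) (Fin L) ℝ) (B' : Fin R → Matrix (Fin J) (Fin M) ℝ)
        (D' : Fin R → (Fin L → Fin M → Fin K → ℝ)),
        (∀ i j k, (∑ r, ∑ l, ∑ m, x.2.2 r l m k * x.1 r i l * x.2.1 r j m)
            = ∑ r, ∑ l, ∑ m, D' r l m k * A' r i l * B' r j m) →
        ∃ π : Equiv.Perm (Fin R), ∀ r : Fin R,
          ∃ (Θa : Matrix (Fin L) (Fin L) ℝ) (Θb : Matrix (Fin M) (Fin M) ℝ),
            IsUnit Θa ∧ IsUnit Θb ∧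
            A' (π r) = x.1 r * Θa ∧
            B' (π r) = x.2.1 r * Θb ∧
            (∀ l m k, (∑ l', ∑ m', D' (π r) l' m' k * Θa l l' * Θb m m')
                = x.2.2 r l m k) := by
  have hA := btd_ae_cat (R := R) hI
  have hB := btd_ae_cat (R := R) hJ
  have hD := btd_ae_rigid (R := R) hL hM hK
  have hA2 := (Measure.quasiMeasurePreserving_fst (μ := volume) (ν := volume)
    (α := Fin R → Matrix (Fin I) (Fin L) ℝ)
    (β := (Fin R → Matrix (Fin J) (Fin M) ℝ) × (Fin R → (Fin L → Fin M → Fin K → ℝ)))).ae hA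
  have hBD : ∀ᵐ z : (Fin R → Matrix (Fin J) (Fin M) ℝ) × (Fin R → (Fin L → Fin M → Fin K → ℝ)),
      (∀ u, btdCat z.1 *ᵥ u = 0 → u = 0) ∧
      BtdRigid (fun r k => Matrix.of fun l m => z.2 r l m k) :=
    ((Measure.quasiMeasurePreserving_fst (μ := volume) (ν := volume)).ae hB).and
      ((Measure.quasiMeasurePreserving_snd (μ := volume) (ν := volume)).ae hD)
  have hBD2 := (Measure.quasiMeasurePreserving_snd (μ := volume) (ν := volume)
    (α := Fin R → Matrix (Fin I) (Fin L) ℝ)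
    (β := (Fin R → Matrix (Fin J) (Fin M) ℝ) × (Fin R → (Fin L → Fin M → Fin K → ℝ)))).ae hBD
  filter_upwards [hA2, hBD2] with x hx1 hx2 A' B' D' hY
  have : Nonempty (Fin L) := ⟨⟨0, hL⟩⟩
  have : Nonempty (Fin M) := ⟨⟨0, hM⟩⟩
  obtain ⟨π, hπ⟩ := btd_core hx2.2 (S' := fun r k => Matrix.of fun l m => D' r l m k)
    x.1 A' x.2.1 B' hx1 hx2.1 (fun k => by
      ext i j
      rw [btd_entry, btd_entry]
      exact hY i j k)
  refine ⟨π, fun r => ?_⟩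
  obtain ⟨Θa, Θb, h1, h2, h3, h4, h5⟩ := hπ r
  refine ⟨Θa, Θb, h1, h2, h3, h4, fun l m k => ?_⟩
  have := congrFun (congrFun (h5 k) l) m
  rw [Matrix.of_apply] at this
  rw [← this]
  simp only [Matrix.mul_apply, Matrix.of_apply, Matrix.transpose_apply, Finset.sum_mul]
  rw [Finset.sum_comm]
  refine Finset.sum_congr rfl fun m' _ => Finset.sum_congr rfl fun l' _ => ?_
  ring
end
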